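/- arXiv:1903.03747 — 6 statements merged into one kernel-verified Lean document; each statement's English description precedes it below -/
import Mathlib

section
/- For any admissible index (k_1, k_2, ..., k_r) of positive integers with k_r ≥ 2, the multiple T-value T(k_1, ..., k_r) equals the iterated integral I(1, 0,...,0, 1, 0,...,0, ..., 1, 0,...,0), where after the i-th entry 1 there are k_i − 1 entries 0, i.e. T(k_1,...,k_r) = ∫_{0<t_1<⋯<t_k<1} Ω_{ε_1}(t_1) ⋯ Ω_{ε_k}(t_k) with k = k_1 + ⋯ + k_r and (ε_1,...,ε_k) the 0-1 word just described. -/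
open MeasureTheory

/-- The multiple T-value `T(k₁, …, k_r)`:
`2^r` times the sum over `0 < m₁ < ⋯ < m_r` with `m_i ≡ i (mod 2)`
of `1 / (m₁^{k₁} ⋯ m_r^{k_r})`. -/
noncomputable def MTV (k : List ℕ) : ℝ :=
  2 ^ k.length *
    ∑' f : {f : Fin k.length → ℕ // StrictMono f ∧ ∀ i, f i % 2 = ((i : ℕ) + 1) % 2},
      ∏ i : Fin k.length, (1 : ℝ) / (f.1 i : ℝ) ^ k.get i

/-- The integrand forms: `Ω₁(t) = 2/(1−t²)` and `Ω₀(t) = 1/t` (times `dt`). -/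
noncomputable def omegaForm (e : ℕ) (t : ℝ) : ℝ := if e = 1 then 2 / (1 - t ^ 2) else 1 / t

/-- The iterated integral `I(ε₁, …, ε_k) = ∫_{0<t₁<⋯<t_k<1} Ω_{ε₁}(t₁) ⋯ Ω_{ε_k}(t_k)`. -/
noncomputable def itInt (eps : List ℕ) : ℝ :=
  ∫ t in {t : Fin eps.length → ℝ | StrictMono t ∧ ∀ i, t i ∈ Set.Ioo (0 : ℝ) 1},
    ∏ i : Fin eps.length, omegaForm (eps.get i) (t i)

open Set
open scoped ENNReal

noncomputable def wOm (e : ℕ) (t : ℝ) : ℝ≥0∞ := ENNReal.ofReal (omegaForm e t)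

lemma measurable_omegaForm (e : ℕ) : Measurable (omegaForm e) := by
  unfold omegaForm
  split_ifs <;> fun_prop

lemma measurable_wOm (e : ℕ) : Measurable (wOm e) := (measurable_omegaForm e).ennreal_ofReal

/-- iterated integral, the list is reversed -/
noncomputable def J : List ℕ → ℝ → ℝ≥0∞
  | [], _ => 1
  | e :: l, x => ∫⁻ t in Ioo 0 x, wOm e t * J l t

lemma snoc_iff {α : Type*} [LinearOrder α] [Zero α] (P : α → Prop)
    (hP : ∀ a b, a < b → P b → P a) {n : ℕ} (f : Fin n → α) (a : α) :
    (StrictMono (Fin.snoc f a : Fin (n + 1) → α) ∧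
      ∀ i, 0 < (Fin.snoc f a : Fin (n + 1) → α) i ∧ P ((Fin.snoc f a : Fin (n + 1) → α) i)) ↔
    (0 < a ∧ P a) ∧ StrictMono f ∧ ∀ i, 0 < f i ∧ f i < a := by
  constructor
  · rintro ⟨h1, h2⟩
    refine ⟨by simpa using h2 (Fin.last n), ?_, ?_⟩
    · intro i j hij
      simpa using h1 (Fin.castSucc_lt_castSucc_iff.2 hij)
    · intro i
      refine ⟨by simpa using (h2 i.castSucc).1, by simpa using h1 (Fin.castSucc_lt_last i)⟩
  · rintro ⟨⟨h1, h2⟩, h3, h4⟩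
    constructor
    · intro i j
      induction j using Fin.lastCases with
      | last =>
        induction i using Fin.lastCases with
        | last => simp
        | cast i => intro _; simpa using (h4 i).2
      | cast j =>
        induction i using Fin.lastCases with
        | last => intro h; exact absurd h (not_lt.2 (Fin.le_last _))
        | cast i => intro h; simpa using h3 (Fin.castSucc_lt_castSucc_iff.1 h)
    · intro i
      induction i using Fin.lastCases with
      | last => simpa using ⟨h1, h2⟩
      | cast i => simpa using ⟨(h4 i).1, hP _ _ (h4 i).2 h2⟩

def simplexSet (n : ℕ) (x : ℝ) : Set (Fin n → ℝ) :=
  {t | StrictMono t ∧ ∀ i, t i ∈ Ioo (0 : ℝ) x}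

lemma measurableSet_simplexSet (n : ℕ) (x : ℝ) : MeasurableSet (simplexSet n x) := by
  have : simplexSet n x = (⋂ i, ⋂ j, ⋂ (_ : i < j), {t | t i < t j}) ∩
      ⋂ i, {t | t i ∈ Ioo (0 : ℝ) x} := by
    ext t
    simp [simplexSet, StrictMono]
  rw [this]
  refine MeasurableSet.inter ?_ ?_
  · refine MeasurableSet.iInter fun i => MeasurableSet.iInter fun j => MeasurableSet.iInter fun _ =>
      measurableSet_lt (measurable_pi_apply i) (measurable_pi_apply j)
  · exact MeasurableSet.iInter fun i => (measurable_pi_apply i) measurableSet_Ioo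

lemma measurable_L (n : ℕ) (e : Fin n → ℕ) (x : ℝ) :
    Measurable ((simplexSet n x).indicator fun t => ∏ i, wOm (e i) (t i)) := by
  refine Measurable.indicator ?_ (measurableSet_simplexSet n x)
  exact Finset.measurable_prod _ fun i _ => (measurable_wOm _).comp (measurable_pi_apply i)

lemma L_eq (n : ℕ) : ∀ (e : Fin n → ℕ) (x : ℝ),
    ∫⁻ t, (simplexSet n x).indicator (fun t => ∏ i, wOm (e i) (t i)) t =
      J (List.ofFn e).reverse x := by
  induction n with
  | zero =>
    intro e x
    have : simplexSet 0 x = univ := by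
      ext t; simp [simplexSet, Subsingleton.strictMono]
    rw [this, volume_pi]
    simp [J]
  | succ n ih =>
    intro e x
    rw [List.ofFn_succ', List.concat_eq_append, List.reverse_append]
    simp only [List.reverse_singleton, List.singleton_append, J]
    have mp := (volume_preserving_piFinSuccAbove (fun _ : Fin (n+1) => ℝ) (Fin.last n)).symm
    rw [← mp.lintegral_comp (measurable_L _ _ _), Measure.volume_eq_prod,
      lintegral_prod (fun z => (simplexSet (n + 1) x).indicator (fun t => ∏ i, wOm (e i) (t i))
        ((MeasurableEquiv.piFinSuccAbove (fun _ => ℝ) (Fin.last n)).symm z))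
        ((measurable_L _ _ _).comp mp.measurable).aemeasurable,
      ← lintegral_indicator measurableSet_Ioo]
    refine lintegral_congr fun a => ?_
    have hs : ∀ f : Fin n → ℝ, (MeasurableEquiv.piFinSuccAbove (fun _ : Fin (n+1) => ℝ)
        (Fin.last n)).symm (a, f) = (Fin.snoc f a : Fin (n+1) → ℝ) := fun f =>
      Fin.insertNth_last' a f
    have key : ∀ f : Fin n → ℝ, (simplexSet (n+1) x).indicator
        (fun t => ∏ i, wOm (e i) (t i)) (Fin.snoc f a : Fin (n+1) → ℝ) =
        (Ioo 0 x).indicator (fun a => wOm (e (Fin.last n)) a) a *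
        (simplexSet n a).indicator (fun t => ∏ i, wOm (e i.castSucc) (t i)) f := by
      intro f
      have h := snoc_iff (fun y : ℝ => y < x) (fun _ _ h h' => h.trans h') f a
      by_cases h1 : a ∈ Ioo 0 x
      · by_cases h2 : f ∈ simplexSet n a
        · have h3 : (Fin.snoc f a : Fin (n+1) → ℝ) ∈ simplexSet (n+1) x := h.2 ⟨h1, h2⟩
          rw [indicator_of_mem h1, indicator_of_mem h2, indicator_of_mem h3, Fin.prod_univ_castSucc]
          simp [mul_comm]
        · have h3 : (Fin.snoc f a : Fin (n+1) → ℝ) ∉ simplexSet (n+1) x := fun h3 => h2 (h.1 h3).2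
          rw [indicator_of_notMem h2, indicator_of_notMem h3, mul_zero]
      · have h3 : (Fin.snoc f a : Fin (n+1) → ℝ) ∉ simplexSet (n+1) x := fun h3 => h1 (h.1 h3).1
        rw [indicator_of_notMem h1, indicator_of_notMem h3, zero_mul]
    simp_rw [hs, key]
    rw [lintegral_const_mul _ (measurable_L _ _ _), ih]
    by_cases h1 : a ∈ Ioo 0 x <;> simp [h1]

lemma itInt_eq (eps : List ℕ) : itInt eps = (J eps.reverse 1).toReal := by
  have h := L_eq eps.length eps.get 1
  rw [List.ofFn_get] at h
  rw [← h, lintegral_indicator (measurableSet_simplexSet _ _)]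
  unfold itInt
  rw [integral_eq_lintegral_of_nonneg_ae]
  · congr 1
    refine setLIntegral_congr_fun (measurableSet_simplexSet _ _) fun t ht => ?_
    simp only [wOm]
    rw [ENNReal.ofReal_prod_of_nonneg]
    intro i _
    have := ht.2 i
    unfold omegaForm
    split_ifs
    · have : t i ^ 2 ≤ 1 := by nlinarith [this.1, this.2]
      exact div_nonneg (by norm_num) (by linarith)
    · exact div_nonneg (by norm_num) this.1.le
  · refine (ae_restrict_iff' (measurableSet_simplexSet _ _)).2 (Filter.Eventually.of_forall ?_)
    intro t ht
    refine Finset.prod_nonneg fun i _ => ?_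
    have := ht.2 i
    unfold omegaForm
    split_ifs
    · have : t i ^ 2 ≤ 1 := by nlinarith [this.1, this.2]
      exact div_nonneg (by norm_num) (by linarith)
    · exact div_nonneg (by norm_num) this.1.le
  · refine (Measurable.aestronglyMeasurable ?_)
    exact Finset.measurable_prod _ fun i _ =>
      (measurable_omegaForm _).comp (measurable_pi_apply i)

/-- coefficients, the list is reversed -/
noncomputable def A : List ℕ → ℕ → ℝ≥0∞
  | [], m => if m = 0 then 1 else 0
  | k :: l, m => if 0 < m ∧ m % 2 = (l.length + 1) % 2 then
      2 * (m : ℝ≥0∞)⁻¹ ^ k * ∑' j, if j < m then A l j else 0 else 0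

open Classical in
lemma B_eq (n : ℕ) : ∀ (k : Fin n → ℕ) (P : ℕ → Prop) (_ : ∀ a b, a < b → P b → P a) (_ : P 0),
    ∑' f : Fin n → ℕ, (if (StrictMono f ∧ ∀ i, 0 < f i ∧ P (f i)) ∧
        ∀ i, f i % 2 = ((i : ℕ) + 1) % 2 then ∏ i, 2 * (f i : ℝ≥0∞)⁻¹ ^ k i else 0) =
      ∑' m, if P m then A (List.ofFn k).reverse m else 0 := by
  induction n with
  | zero =>
    intro k P hP h0
    rw [tsum_eq_single (0 : ℕ) (by intro m hm; simp [A, hm])]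
    simp [A, h0, Subsingleton.strictMono]
  | succ n ih =>
    intro k P hP h0
    rw [List.ofFn_succ', List.concat_eq_append, List.reverse_append]
    simp only [List.reverse_singleton, List.singleton_append, A]
    rw [← (Fin.snocEquiv (fun _ : Fin (n+1) => ℕ)).tsum_eq, ENNReal.tsum_prod']
    refine tsum_congr fun a => ?_
    have hsn : ∀ f : Fin n → ℕ, Fin.snocEquiv (fun _ : Fin (n+1) => ℕ) (a, f) =
        (Fin.snoc f a : Fin (n+1) → ℕ) := fun f => rfl
    simp only [hsn, snoc_iff P hP]
    simp only [Fin.forall_fin_succ', Fin.prod_univ_castSucc,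
      Fin.snoc_castSucc, Fin.snoc_last, List.length_reverse, List.length_ofFn, Fin.val_castSucc,
      Fin.val_last]
    by_cases h1 : (0 < a ∧ P a) ∧ a % 2 = (n + 1) % 2
    · obtain ⟨⟨h1, h2⟩, h3⟩ := h1
      have := ih (fun i => k i.castSucc) (fun j => j < a) (fun _ _ h h' => h.trans h') h1
      simp only [h1, h2, h3, and_self, and_true, true_and, if_true]
      refine Eq.trans ?_ ((congrArg (fun z => 2 * (a : ℝ≥0∞)⁻¹ ^ k (Fin.last n) * z) this).trans
        (by congr!))
      rw [← ENNReal.tsum_mul_left]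
      refine tsum_congr fun f => ?_
      split_ifs
      · rw [mul_comm]
      · simp
    · rw [ENNReal.tsum_eq_zero.2]
      · split_ifs with h2 h3
        · exact absurd ⟨⟨h3.1, h2⟩, h3.2⟩ h1
        · rfl
        · rfl
      · intro f
        rw [if_neg]
        tauto

lemma MTV_eq (k : List ℕ) : MTV k = (∑' m, A k.reverse m).toReal := by
  classical
  have h := B_eq k.length k.get (fun _ => True) (by simp) trivial
  rw [List.ofFn_get] at h
  simp only [if_true] at h
  rw [← h, ENNReal.tsum_toReal_eq]
  · unfold MTV
    rw [← tsum_mul_left]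
    let s : Set (Fin k.length → ℕ) := {f | StrictMono f ∧ ∀ i, f i % 2 = ((i : ℕ) + 1) % 2}
    let g : (Fin k.length → ℕ) → ℝ := fun f =>
      2 ^ k.length * ∏ i : Fin k.length, (1 : ℝ) / (f i : ℝ) ^ k.get i
    change ∑' f : s, g f = _
    rw [tsum_subtype s g]
    refine tsum_congr fun f => ?_
    have hiff : ((StrictMono f ∧ ∀ i, 0 < f i ∧ True) ∧
        ∀ i, f i % 2 = ((i : ℕ) + 1) % 2) ↔ f ∈ s := by
      constructor
      · rintro ⟨⟨h1, _⟩, h2⟩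
        exact ⟨h1, h2⟩
      · rintro ⟨h1, h2⟩
        refine ⟨⟨h1, fun i => ⟨?_, trivial⟩⟩, h2⟩
        have h0 : 0 < k.length := i.pos
        have ha := h2 ⟨0, h0⟩
        have hb := h1.monotone (show (⟨0, h0⟩ : Fin k.length) ≤ i from Nat.zero_le _)
        simp only at ha
        omega
    by_cases hf : f ∈ s
    · rw [if_pos (hiff.2 hf), indicator_of_mem hf, ENNReal.toReal_prod]
      simp only [g, ENNReal.toReal_mul, ENNReal.toReal_pow, ENNReal.toReal_inv,
        ENNReal.toReal_natCast, ENNReal.toReal_ofNat]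
      rw [Finset.prod_mul_distrib]
      simp
    · rw [if_neg (fun h => hf (hiff.1 h)), indicator_of_notMem hf]
      simp
  · intro f
    split_ifs with hf
    · refine ENNReal.prod_ne_top fun i _ => ?_
      refine ENNReal.mul_ne_top (by simp) (ENNReal.pow_ne_top (ENNReal.inv_ne_top.2 ?_))
      have := (hf.1.2 i).1
      exact_mod_cast this.ne'
    · simp

lemma int_pow (m : ℕ) (x : ℝ) (hx : 0 < x) :
    ∫⁻ t in Ioo 0 x, ENNReal.ofReal t ^ m =
      ((m + 1 : ℕ) : ℝ≥0∞)⁻¹ * ENNReal.ofReal x ^ (m + 1) := by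
  have h1 : ∫⁻ t in Ioo 0 x, ENNReal.ofReal t ^ m = ∫⁻ t in Ioo 0 x, ENNReal.ofReal (t ^ m) := by
    refine setLIntegral_congr_fun measurableSet_Ioo fun t ht => ?_
    rw [ENNReal.ofReal_pow ht.1.le]
  rw [h1, restrict_Ioo_eq_restrict_Ioc, ← ofReal_integral_eq_lintegral_ofReal, ←
    intervalIntegral.integral_of_le hx.le, integral_pow]
  · rw [← ENNReal.ofReal_natCast, ← ENNReal.ofReal_inv_of_pos (by positivity),
      ← ENNReal.ofReal_pow hx.le, ← ENNReal.ofReal_mul (by positivity)]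
    congr 1
    push_cast
    simp
    ring
  · exact (intervalIntegrable_iff_integrableOn_Ioc_of_le hx.le).1
      (Continuous.intervalIntegrable (by fun_prop) _ _)
  · refine (ae_restrict_iff' measurableSet_Ioc).2 (Filter.Eventually.of_forall ?_)
    intro t ht
    exact pow_nonneg ht.1.le _

lemma step_zero (a : ℕ → ℝ≥0∞) (h0 : a 0 = 0) (x : ℝ) (hx : 0 < x) :
    ∫⁻ t in Ioo 0 x, wOm 0 t * ∑' m, a m * ENNReal.ofReal t ^ m =
      ∑' m, (a m * (m : ℝ≥0∞)⁻¹) * ENNReal.ofReal x ^ m := by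
  have h1 : ∫⁻ t in Ioo 0 x, wOm 0 t * ∑' m, a m * ENNReal.ofReal t ^ m =
      ∫⁻ t in Ioo 0 x, ∑' m, a m * ENNReal.ofReal t ^ (m - 1) := by
    refine setLIntegral_congr_fun measurableSet_Ioo fun t ht => ?_
    rw [← ENNReal.tsum_mul_left]
    refine tsum_congr fun m => ?_
    rcases m with _ | m
    · simp [h0]
    · have : wOm 0 t * ENNReal.ofReal t = 1 := by
        simp only [wOm, omegaForm]
        rw [if_neg (by norm_num), ← ENNReal.ofReal_mul (by have := ht.1; positivity),
          one_div_mul_cancel ht.1.ne', ENNReal.ofReal_one]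
      calc _ = a (m+1) * ENNReal.ofReal t ^ m * (wOm 0 t * ENNReal.ofReal t) := by ring
        _ = _ := by rw [this]; simp
  rw [h1, lintegral_tsum (fun m => by fun_prop)]
  refine tsum_congr fun m => ?_
  rw [lintegral_const_mul _ (by fun_prop)]
  rcases m with _ | m
  · simp [h0]
  · rw [Nat.add_sub_cancel, int_pow _ _ hx, mul_assoc]

lemma wOm_one (t : ℝ) (ht : t ∈ Ioo (0 : ℝ) 1) :
    wOm 1 t = ∑' i : ℕ, 2 * ENNReal.ofReal t ^ (2 * i) := by
  have hp : t ^ 2 < 1 := by nlinarith [ht.1, ht.2]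
  simp only [pow_mul]
  rw [ENNReal.tsum_mul_left, ENNReal.tsum_geometric]
  simp only [wOm, omegaForm, if_true]
  rw [ENNReal.ofReal_div_of_pos (by linarith), ENNReal.ofReal_sub _ (by positivity),
    ENNReal.ofReal_pow ht.1.le, div_eq_mul_inv]
  simp

lemma step_one (a : ℕ → ℝ≥0∞) (p : ℕ) (ha : ∀ j, a j ≠ 0 → j % 2 = p % 2)
    (x : ℝ) (hx : 0 < x) (hx1 : x ≤ 1) :
    ∫⁻ t in Ioo 0 x, wOm 1 t * ∑' m, a m * ENNReal.ofReal t ^ m =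
      ∑' m : ℕ, (if 0 < m ∧ m % 2 = (p + 1) % 2 then
        2 * (m : ℝ≥0∞)⁻¹ * ∑' j, if j < m then a j else 0 else 0) * ENNReal.ofReal x ^ m := by
  have h1 : ∫⁻ t in Ioo 0 x, wOm 1 t * ∑' m, a m * ENNReal.ofReal t ^ m =
      ∫⁻ t in Ioo 0 x, ∑' j, ∑' i, 2 * a j * ENNReal.ofReal t ^ (j + 2 * i) := by
    refine setLIntegral_congr_fun measurableSet_Ioo fun t ht => ?_
    rw [wOm_one t ⟨ht.1, ht.2.trans_le hx1⟩, ← ENNReal.tsum_mul_left]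
    refine tsum_congr fun m => ?_
    rw [← ENNReal.tsum_mul_right]
    refine tsum_congr fun i => ?_
    rw [pow_add]; ring
  rw [h1, lintegral_tsum (fun m => by fun_prop)]
  let h : ℕ → ℕ → ℝ≥0∞ := fun j m => 2 * a j * ((m : ℝ≥0∞)⁻¹ * ENNReal.ofReal x ^ m)
  have h2 : ∀ j, ∫⁻ t in Ioo 0 x, ∑' i, 2 * a j * ENNReal.ofReal t ^ (j + 2 * i) =
      ∑' m : ℕ, if 0 < m ∧ m % 2 = (p + 1) % 2 ∧ j < m then h j m else 0 := by
    intro j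
    rw [lintegral_tsum (fun m => by fun_prop)]
    by_cases hj : a j = 0
    · simp [h, hj]
    have hpar := ha j hj
    have hinj : Function.Injective (fun i : ℕ => j + 2 * i + 1) := by
      intro i i' hi; simp only at hi; omega
    rw [← hinj.tsum_eq (f := fun m : ℕ =>
      if 0 < m ∧ m % 2 = (p + 1) % 2 ∧ j < m then h j m else 0)]
    · refine tsum_congr fun i => ?_
      rw [lintegral_const_mul _ (by fun_prop), int_pow _ _ hx, if_pos (by omega)]
    · intro m hm
      simp only [Function.mem_support, ne_eq, ite_eq_right_iff, not_forall] at hm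
      obtain ⟨⟨h3, h4, h5⟩, _⟩ := hm
      refine ⟨(m - j - 1) / 2, ?_⟩
      simp only
      omega
  simp_rw [h2]
  rw [ENNReal.tsum_comm]
  refine tsum_congr fun m => ?_
  by_cases hm : 0 < m ∧ m % 2 = (p + 1) % 2
  · rw [if_pos hm, ← ENNReal.tsum_mul_left, ← ENNReal.tsum_mul_right]
    refine tsum_congr fun j => ?_
    by_cases hj : j < m
    · rw [if_pos ⟨hm.1, hm.2, hj⟩, if_pos hj]
      simp only [h]; ring
    · rw [if_neg (by tauto), if_neg hj]; simp
  · rw [if_neg hm, zero_mul, ENNReal.tsum_eq_zero]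
    intro j
    rw [if_neg (by tauto)]

lemma A_support (l : List ℕ) (j : ℕ) (h : A l j ≠ 0) : j % 2 = l.length % 2 := by
  cases l with
  | nil =>
    simp only [A] at h
    split_ifs at h with h1
    · simp [h1]
    · simp at h
  | cons k l =>
    simp only [A] at h
    split_ifs at h with h1
    · exact h1.2
    · simp at h

lemma J_step (l w : List ℕ)
    (hw : ∀ x : ℝ, 0 < x → x ≤ 1 → J w x = ∑' m, A l m * ENNReal.ofReal x ^ m) (n : ℕ) :
    ∀ x : ℝ, 0 < x → x ≤ 1 → J (List.replicate n 0 ++ 1 :: w) x =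
      ∑' m, A ((n + 1) :: l) m * ENNReal.ofReal x ^ m := by
  induction n with
  | zero =>
    intro x hx hx1
    simp only [List.replicate_zero, List.nil_append, J]
    have := step_one (A l) l.length (A_support l) x hx hx1
    simp only [A, zero_add, pow_one]
    rw [← this]
    refine setLIntegral_congr_fun measurableSet_Ioo fun t ht => ?_
    rw [hw t ht.1 (ht.2.le.trans hx1)]
  | succ n ih =>
    intro x hx hx1
    simp only [List.replicate_succ, List.cons_append, J]
    have := step_zero (A ((n+1) :: l)) (by simp [A]) x hx
    have h2 : ∀ m, A ((n + 1 + 1) :: l) m = A ((n+1) :: l) m * (m : ℝ≥0∞)⁻¹ := by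
      intro m
      simp only [A]
      split_ifs
      · rw [pow_succ _ (n+1)]; ring
      · simp
    simp_rw [h2]
    rw [← this]
    refine setLIntegral_congr_fun measurableSet_Ioo fun t ht => ?_
    rw [ih t ht.1 (ht.2.le.trans hx1)]

lemma J_eq (l : List ℕ) (hpos : ∀ x ∈ l, 1 ≤ x) : ∀ x : ℝ, 0 < x → x ≤ 1 →
    J (l.map fun ki => List.replicate (ki - 1) 0 ++ [1]).flatten x =
      ∑' m, A l m * ENNReal.ofReal x ^ m := by
  induction l with
  | nil =>
    intro x hx hx1
    rw [tsum_eq_single 0 (by intro m hm; simp [A, hm])]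
    simp [J, A]
  | cons k l ih =>
    have hk := hpos k (by simp)
    have := J_step l _ (ih fun x hx => hpos x (by simp [hx])) (k - 1)
    rw [Nat.sub_add_cancel hk] at this
    simpa using this

/-- **Theorem (integral expression).** For an admissible index `(k₁, …, k_r)`
(all entries positive, last entry at least 2),
`T(k₁,…,k_r) = I(1, 0^{k₁−1}, 1, 0^{k₂−1}, …, 1, 0^{k_r−1})`. -/
theorem MTV_eq_itInt (k : List ℕ) (hne : k ≠ [])
    (hpos : ∀ x ∈ k, 1 ≤ x) (hadm : 2 ≤ k.getLast hne) :
    MTV k = itInt ((k.map fun ki => 1 :: List.replicate (ki - 1) 0)).flatten := by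
  rw [MTV_eq, itInt_eq, List.reverse_flatten, List.map_map, ← List.map_reverse]
  have := J_eq k.reverse (by simpa using hpos) 1 one_pos le_rfl
  simp only [ENNReal.ofReal_one, one_pow, mul_one] at this
  rw [← this]
  congr 4
  funext ki
  simp
end

section
/- For any tuple (ε_1, ..., ε_k) ∈ {0,1}^k with ε_1 = 1 and ε_k = 0, the iterated integrals satisfy I(ε_1,...,ε_k) = I(1−ε_k, 1−ε_{k−1}, ..., 1−ε_1); this follows from the change of variables s_i = (1 − t_{k−i+1})/(1 + t_{k−i+1}), which interchanges the differential forms Ω_0 and Ω_1 and maps the interval (0,1) to itself. -/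
open MeasureTheory

/-- Iterated integral indexed by a function on `Fin n`. -/
noncomputable def itJ (n : ℕ) (e : Fin n → ℕ) : ℝ :=
  ∫ t in {t : Fin n → ℝ | StrictMono t ∧ ∀ i, t i ∈ Set.Ioo (0 : ℝ) 1},
    ∏ i : Fin n, omegaForm (e i) (t i)

theorem itInt_eq_itJ (l : List ℕ) (n : ℕ) (h : l.length = n) :
    itInt l = itJ n (fun i => l.get (i.cast h.symm)) := by
  subst h
  rfl

/-- The Moebius involution of the unit interval. -/
noncomputable def moeb (t : ℝ) : ℝ := (1 - t) / (1 + t)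

theorem moeb_mem {t : ℝ} (h : t ∈ Set.Ioo (0 : ℝ) 1) : moeb t ∈ Set.Ioo (0 : ℝ) 1 := by
  obtain ⟨h0, h1⟩ := h
  unfold moeb
  constructor
  · apply div_pos <;> linarith
  · rw [div_lt_one] <;> linarith

theorem moeb_moeb {t : ℝ} (h : t ∈ Set.Ioo (0 : ℝ) 1) : moeb (moeb t) = t := by
  obtain ⟨h0, h1⟩ := h
  unfold moeb
  have : 1 + t ≠ 0 := by linarith
  field_simp
  ring

theorem moeb_lt {s t : ℝ} (hs : s ∈ Set.Ioo (0 : ℝ) 1) (ht : t ∈ Set.Ioo (0 : ℝ) 1)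
    (h : s < t) : moeb t < moeb s := by
  obtain ⟨h0, h1⟩ := hs
  obtain ⟨h2, h3⟩ := ht
  unfold moeb
  rw [div_lt_div_iff₀ (by linarith) (by linarith)]
  nlinarith

theorem moeb_deriv {t : ℝ} (h : t ∈ Set.Ioo (0 : ℝ) 1) :
    HasDerivAt moeb (-2 / (1 + t) ^ 2) t := by
  obtain ⟨h0, h1⟩ := h
  have h2 : 1 + t ≠ 0 := by linarith
  have := ((hasDerivAt_id t).const_sub 1).div ((hasDerivAt_id t).const_add 1) h2
  have h3 : HasDerivAt moeb _ t := this
  refine h3.congr_deriv ?_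
  simp only [id]
  congr 1
  ring

theorem omega_moeb {t : ℝ} (h : t ∈ Set.Ioo (0 : ℝ) 1) (e : ℕ) (he : e = 0 ∨ e = 1) :
    |-2 / (1 + t) ^ 2| * omegaForm (1 - e) (moeb t) = omegaForm e t := by
  obtain ⟨h0, h1⟩ := h
  have h2 : 1 + t ≠ 0 := by linarith
  have h3 : 1 - t ≠ 0 := by linarith
  have h4 : 1 - t ^ 2 ≠ 0 := by nlinarith
  rw [abs_div, abs_of_nonneg (sq_nonneg (1 + t))]
  rcases he with rfl | rfl
  · have h5 : 1 - ((1 - t) / (1 + t)) ^ 2 = 4 * t / (1 + t) ^ 2 := by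
      field_simp
      ring
    simp only [omegaForm, moeb]
    norm_num [h5]
    field_simp
    norm_num
  · simp only [omegaForm, moeb]
    norm_num
    rw [show (1 - t ^ 2) = (1 - t) * (1 + t) by ring]
    field_simp

theorem itJ_dual (n : ℕ) (e : Fin n → ℕ) (he : ∀ i, e i = 0 ∨ e i = 1) :
    itJ n e = itJ n (fun i => 1 - e i.rev) := by
  set A : Set (Fin n → ℝ) := {t | StrictAnti t ∧ ∀ i, t i ∈ Set.Ioo (0 : ℝ) 1} with hA
  set S : Set (Fin n → ℝ) := {t | StrictMono t ∧ ∀ i, t i ∈ Set.Ioo (0 : ℝ) 1} with hS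
  have himg : (fun (t : Fin n → ℝ) i => moeb (t i)) '' A = S := by
    ext s
    constructor
    · rintro ⟨t, ⟨ht, hm⟩, rfl⟩
      exact ⟨fun i j hij => moeb_lt (hm j) (hm i) (ht hij), fun i => moeb_mem (hm i)⟩
    · rintro ⟨ht, hm⟩
      exact ⟨fun i => moeb (s i),
        ⟨fun i j hij => moeb_lt (hm i) (hm j) (ht hij), fun i => moeb_mem (hm i)⟩,
        funext fun i => moeb_moeb (hm i)⟩
  have hinj : Set.InjOn (fun (t : Fin n → ℝ) i => moeb (t i)) A := by
    rintro s ⟨_, hs⟩ t ⟨_, ht⟩ hst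
    funext i
    have := congrFun hst i
    simp only at this
    rw [← moeb_moeb (hs i), ← moeb_moeb (ht i), this]
  have hAmeas : MeasurableSet A := by
    have : A = (⋂ i, ⋂ j, ⋂ (_ : i < j), {t : Fin n → ℝ | t j < t i}) ∩
        ⋂ i, {t : Fin n → ℝ | t i ∈ Set.Ioo (0 : ℝ) 1} := by
      ext t
      simp [hA, StrictAnti]
    rw [this]
    refine MeasurableSet.inter ?_ ?_
    · refine MeasurableSet.iInter fun i => MeasurableSet.iInter fun j =>
        MeasurableSet.iInter fun _ => measurableSet_lt (measurable_pi_apply _) (measurable_pi_apply _)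
    · exact MeasurableSet.iInter fun i => measurable_pi_apply i measurableSet_Ioo
  let f' : (Fin n → ℝ) → ((Fin n → ℝ) →L[ℝ] (Fin n → ℝ)) := fun t =>
    ContinuousLinearMap.pi fun i =>
      (ContinuousLinearMap.toSpanSingleton ℝ (-2 / (1 + t i) ^ 2)).comp
        (ContinuousLinearMap.proj i)
  have hf' : ∀ t ∈ A, HasFDerivWithinAt (fun (t : Fin n → ℝ) i => moeb (t i)) (f' t) A t := by
    rintro t ⟨_, ht⟩
    apply HasFDerivAt.hasFDerivWithinAt
    rw [hasFDerivAt_pi']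
    intro i
    have h1 := (moeb_deriv (ht i)).hasFDerivAt
    exact HasFDerivAt.comp (f := fun t : Fin n → ℝ => t i) t h1 (hasFDerivAt_apply i t)
  have hdet : ∀ t, (f' t).det = ∏ i, (-2 / (1 + t i) ^ 2) := by
    intro t
    have := LinearMap.det_pi (R := ℝ) (M := ℝ) (fun i : Fin n => (-2 / (1 + t i) ^ 2) • LinearMap.id)
    simp only [LinearMap.det_smul, LinearMap.det_id, Module.finrank_self, pow_one, mul_one] at this
    rw [← this, ContinuousLinearMap.det]
    congr 1
    ext v i
    simp [f', mul_comm]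
  have key := integral_image_eq_integral_abs_det_fderiv_smul volume hAmeas hf' hinj
    (fun t => ∏ i, omegaForm (1 - e i.rev) (t i))
  rw [himg] at key
  unfold itJ
  rw [key]
  have h2 : ∫ t in A, |(f' t).det| • ∏ i, omegaForm (1 - e i.rev) (moeb (t i)) =
      ∫ t in A, ∏ i, omegaForm (e i.rev) (t i) := by
    refine setIntegral_congr_fun hAmeas ?_
    rintro t ⟨_, ht⟩
    simp only [hdet, smul_eq_mul, Finset.abs_prod, ← Finset.prod_mul_distrib]
    exact Finset.prod_congr rfl fun i _ => omega_moeb (ht i) _ (he _)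
  rw [h2]
  have hmp := volume_measurePreserving_piCongrLeft (fun _ : Fin n => ℝ) (Fin.revPerm (n := n))
  have happ : ∀ (t : Fin n → ℝ) i,
      (MeasurableEquiv.piCongrLeft (fun _ : Fin n => ℝ) (Fin.revPerm (n := n))) t i = t i.rev := by
    intro t i
    have := Equiv.piCongrLeft_apply_apply (fun _ : Fin n => ℝ) (Fin.revPerm (n := n)) t i.rev
    rw [MeasurableEquiv.coe_piCongrLeft]
    simpa using this
  have h3 := hmp.setIntegral_preimage_emb (MeasurableEquiv.measurableEmbedding _)
    (fun t => ∏ i, omegaForm (e i.rev) (t i)) A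
  rw [← h3]
  have hpre : (MeasurableEquiv.piCongrLeft (fun _ : Fin n => ℝ) (Fin.revPerm (n := n))) ⁻¹' A = S := by
    ext t
    simp only [Set.mem_preimage, hA, hS, Set.mem_setOf_eq, happ]
    constructor
    · rintro ⟨h1, h2⟩
      refine ⟨fun i j hij => ?_, fun i => by simpa using h2 i.rev⟩
      have := h1 (Fin.rev_lt_rev.2 hij)
      simpa [happ] using this
    · rintro ⟨h1, h2⟩
      refine ⟨fun i j hij => ?_, fun i => h2 _⟩
      rw [happ, happ]
      exact h1 (Fin.rev_lt_rev.2 hij)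
  rw [hpre]
  congr 1
  funext t
  simp only [happ]
  exact (Equiv.prod_comp (Fin.revPerm (n := n)) (fun i => omegaForm (e i) (t i))).symm

/-- **Theorem (duality of iterated integrals).** For `(ε₁,…,ε_k) ∈ {0,1}^k` with
`ε₁ = 1` and `ε_k = 0`, one has `I(ε₁,…,ε_k) = I(1−ε_k, 1−ε_{k−1}, …, 1−ε₁)`. -/
theorem itInt_duality (eps : List ℕ) (hne : eps ≠ [])
    (h01 : ∀ e ∈ eps, e = 0 ∨ e = 1)
    (hhead : eps.head hne = 1) (hlast : eps.getLast hne = 0) :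
    itInt eps = itInt ((eps.map fun e => 1 - e).reverse) := by
  rw [itInt_eq_itJ eps eps.length rfl,
    itInt_eq_itJ ((eps.map fun e => 1 - e).reverse) eps.length (by simp),
    itJ_dual _ _ (fun i => h01 _ (List.get_mem _ _))]
  congr 1
  funext i
  simp only [List.get_eq_getElem, List.getElem_reverse, List.getElem_map, Fin.val_cast,
    Fin.val_rev, List.length_map]
  congr 2
  omega
end

section
/- Duality for multiple T-values: for any admissible index k = (k_1, ..., k_r) with k_r ≥ 2, one has T(k†) = T(k), where k† is the dual index of k. -/
/-- The admissible index `(1^{a₁−1}, b₁+1, 1^{a₂−1}, b₂+1, …, 1^{a_s−1}, b_s+1)`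
determined by positive integers `a₁,…,a_s` and `b₁,…,b_s`. -/
def idxOf (s : ℕ) (a b : Fin s → ℕ) : List ℕ :=
  (List.ofFn fun i => List.replicate (a i - 1) 1 ++ [b i + 1]).flatten

open MeasureTheory Set

namespace MTVD

/-- The weight `1/m` (zero at `m = 0`). -/
noncomputable def u (m : ℕ) : ENNReal := ENNReal.ofReal (1 / (m : ℝ))

/-- The step relation: larger with opposite parity. -/
def step (m n : ℕ) : Prop := m < n ∧ n % 2 = (m + 1) % 2

instance (m n : ℕ) : Decidable (step m n) := by unfold step; infer_instance

/-- Mass distribution of the largest summation variable, for a (reversed) word. -/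
noncomputable def W : List Bool → ℕ → ENNReal
  | [], m => if m = 0 then 1 else 0
  | false :: w, m => u m * W w m
  | true :: w, m => 2 * u m * ∑' l, if step l m then W w l else 0

/-- The involution of the unit interval. -/
noncomputable def ph (t : ℝ) : ℝ := (1 - t) / (1 + t)

noncomputable def A (m n : ℕ) : ENNReal :=
  ∫⁻ t in Ioo (0:ℝ) 1, ENNReal.ofReal (t ^ m * ph t ^ n * t⁻¹)

/-- The connector. -/
noncomputable def C (m n : ℕ) : ENNReal := if m = 0 then 1 else m * A m n

lemma ph_mem {t : ℝ} (ht : t ∈ Ioo (0:ℝ) 1) : ph t ∈ Ioo (0:ℝ) 1 := by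
  obtain ⟨h0, h1⟩ := ht
  unfold ph
  constructor
  · apply div_pos <;> linarith
  · rw [div_lt_one (by linarith)]; linarith

lemma ph_ph {t : ℝ} (ht : t ∈ Ioo (0:ℝ) 1) : ph (ph t) = t := by
  obtain ⟨h0, h1⟩ := ht
  unfold ph
  have : (1 + t) ≠ 0 := by linarith
  have h2 : 1 + (1 - t) / (1 + t) = 2 / (1 + t) := by field_simp; ring
  rw [h2]; field_simp; ring

lemma ph_image : ph '' Ioo (0:ℝ) 1 = Ioo (0:ℝ) 1 := by
  ext x
  constructor
  · rintro ⟨t, ht, rfl⟩; exact ph_mem ht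
  · intro hx; exact ⟨ph x, ph_mem hx, ph_ph hx⟩

lemma ph_inj : InjOn ph (Ioo (0:ℝ) 1) := by
  intro x hx y hy h
  rw [← ph_ph hx, h, ph_ph hy]

lemma ph_deriv {t : ℝ} (h : 0 ≤ t) : HasDerivAt ph (-2 / (1 + t) ^ 2) t := by
  have h1 : HasDerivAt (fun t : ℝ => 1 - t) (-1) t := by
    simpa using (hasDerivAt_id t).const_sub 1
  have h2 : HasDerivAt (fun t : ℝ => 1 + t) 1 t := by
    simpa using (hasDerivAt_id t).const_add 1
  have := h1.div h2 (by linarith)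
  refine this.congr_deriv ?_
  congr 1
  ring

/-- Substitution. -/
lemma A_subst (m n : ℕ) :
    A m n = ∫⁻ t in Ioo (0:ℝ) 1, ENNReal.ofReal (t ^ n * ph t ^ m * (2 / (1 - t ^ 2))) := by
  unfold A
  conv_lhs => rw [← ph_image]
  rw [lintegral_image_eq_lintegral_abs_deriv_mul measurableSet_Ioo
    (fun x hx => (ph_deriv hx.1.le).hasDerivWithinAt) ph_inj]
  apply setLIntegral_congr_fun measurableSet_Ioo
  intro t ht
  simp only
  rw [ph_ph ht, ← ENNReal.ofReal_mul (abs_nonneg _)]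
  congr 1
  obtain ⟨h0, h1⟩ := ht
  have e1 : |(-2 : ℝ) / (1 + t) ^ 2| = 2 / (1 + t) ^ 2 := by
    rw [abs_div, abs_of_pos (show (0:ℝ) < (1 + t) ^ 2 by positivity)]; norm_num
  rw [e1]
  have e2 : 2 / (1 + t) ^ 2 * (ph t)⁻¹ = 2 / (1 - t ^ 2) := by
    have : (1 - t) ≠ 0 := by linarith
    have : (1 + t) ≠ 0 := by linarith
    have : (1 - t ^ 2) ≠ 0 := by nlinarith
    unfold ph
    field_simp
    ring
  rw [← e2]; ring

lemma ph_meas : Measurable ph := by unfold ph; fun_prop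

lemma A_series (m n : ℕ) : A m n = 2 * ∑' j : ℕ, A (n + 2 * j + 1) m := by
  rw [A_subst]
  unfold A
  have := ph_meas
  rw [← lintegral_tsum (fun j => by fun_prop), ← lintegral_const_mul _ (by fun_prop)]
  apply setLIntegral_congr_fun measurableSet_Ioo
  intro t ht
  simp only
  have hp := ph_mem ht
  obtain ⟨h0, h1⟩ := ht
  have hs : HasSum (fun j : ℕ => t ^ n * ph t ^ m * (t ^ 2) ^ j)
      (t ^ n * ph t ^ m * (1 - t ^ 2)⁻¹) :=
    (hasSum_geometric_of_lt_one (by positivity) (by nlinarith)).mul_left _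
  have e : ∀ j : ℕ, t ^ (n + 2 * j + 1) * ph t ^ m * t⁻¹ = t ^ n * ph t ^ m * (t ^ 2) ^ j := by
    intro j; rw [pow_succ, pow_add, pow_mul]; field_simp
  simp_rw [e]
  have hp0 := hp.1
  rw [← ENNReal.ofReal_tsum_of_nonneg (fun j => by positivity) hs.summable, hs.tsum_eq]
  rw [← ENNReal.ofReal_ofNat 2, ← ENNReal.ofReal_mul (by norm_num)]
  congr 1; rw [div_eq_mul_inv]; ring

lemma A_zero (m : ℕ) (hm : m ≠ 0) : (m : ENNReal) * A m 0 = 1 := by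
  obtain ⟨k, rfl⟩ := Nat.exists_eq_succ_of_ne_zero hm
  have : A (k+1) 0 = ENNReal.ofReal (∫ t in (0:ℝ)..1, t ^ k) := by
    rw [intervalIntegral.integral_of_le zero_le_one, integral_Ioc_eq_integral_Ioo,
      ofReal_integral_eq_lintegral_ofReal]
    · unfold A
      apply setLIntegral_congr_fun measurableSet_Ioo
      intro t ht
      have := ht.1
      simp only [pow_zero, mul_one, pow_succ]
      congr 1; field_simp
    · exact ((continuous_pow k).integrableOn_Icc (a := 0) (b := 1)).mono_set Ioo_subset_Icc_self
    · filter_upwards [ae_restrict_mem measurableSet_Ioo] with t ht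
      have := ht.1
      positivity
  rw [this, integral_pow, ← ENNReal.ofReal_natCast, ← ENNReal.ofReal_mul (by positivity)]
  rw [← ENNReal.ofReal_one]; congr 1
  push_cast
  have : ((k:ℝ) + 1) ≠ 0 := by positivity
  simp
  field_simp

lemma ph_cont : ContinuousOn ph (Icc 0 1) := fun t ht =>
  (ph_deriv ht.1).continuousAt.continuousWithinAt

lemma A_symm (m n : ℕ) (hm : m ≠ 0) (hn : n ≠ 0) :
    (m : ENNReal) * A m n = n * A n m := by
  obtain ⟨k, rfl⟩ := Nat.exists_eq_succ_of_ne_zero hm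
  obtain ⟨l, rfl⟩ := Nat.exists_eq_succ_of_ne_zero hn
  have c1 : ContinuousOn (fun t : ℝ => ((k:ℝ)+1) * (t ^ k * ph t ^ (l+1))) (Icc 0 1) := by
    have := ph_cont
    fun_prop
  have c2 : ContinuousOn (fun t : ℝ => ((l:ℝ)+1) * (t ^ (k+1) * ph t ^ l * (2 / (1 + t)^2)))
      (Icc 0 1) := by
    have := ph_cont
    have h3 : ContinuousOn (fun t : ℝ => 2 / (1 + t)^2) (Icc 0 1) := by
      apply ContinuousOn.div (by fun_prop) (by fun_prop)
      intro t ht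
      have := ht.1
      positivity
    fun_prop
  have hder : ∀ t ∈ Icc (0:ℝ) 1, HasDerivAt (fun t => t ^ (k+1) * ph t ^ (l+1))
      (((k:ℝ)+1) * (t ^ k * ph t ^ (l+1)) -
        ((l:ℝ)+1) * (t ^ (k+1) * ph t ^ l * (2 / (1 + t)^2))) t := by
    intro t ht
    have := (hasDerivAt_pow (k+1) t).mul ((ph_deriv ht.1).pow (l+1))
    refine this.congr_deriv ?_
    push_cast
    simp only [Nat.add_sub_cancel, Pi.pow_apply]
    ring
  have i1 := c1.intervalIntegrable_of_Icc (μ := volume) zero_le_one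
  have i2 := c2.intervalIntegrable_of_Icc (μ := volume) zero_le_one
  have key := intervalIntegral.integral_eq_sub_of_hasDerivAt (a := 0) (b := 1)
    (f := fun t => t ^ (k+1) * ph t ^ (l+1)) (by rw [uIcc_of_le zero_le_one]; exact hder)
    (i1.sub i2)
  rw [intervalIntegral.integral_sub i1 i2] at key
  have key2 := sub_eq_zero.1 (key.trans (by simp [ph]))
  have b1 : ((k+1 : ℕ) : ENNReal) * A (k+1) (l+1) =
      ENNReal.ofReal (∫ t in (0:ℝ)..1, ((k:ℝ)+1) * (t ^ k * ph t ^ (l+1))) := by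
    rw [intervalIntegral.integral_of_le zero_le_one, integral_Ioc_eq_integral_Ioo,
      ofReal_integral_eq_lintegral_ofReal]
    · unfold A
      have := ph_meas
      rw [← lintegral_const_mul _ (by fun_prop)]
      apply setLIntegral_congr_fun measurableSet_Ioo
      intro t ht
      have := ht.1
      simp only
      rw [← ENNReal.ofReal_natCast, ← ENNReal.ofReal_mul (by positivity)]
      congr 1; push_cast; rw [pow_succ t k]; field_simp
    · exact c1.integrableOn_Icc.mono_set Ioo_subset_Icc_self
    · filter_upwards [ae_restrict_mem measurableSet_Ioo] with t ht
      have := ht.1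
      have := (ph_mem ht).1
      positivity
  have b2 : ((l+1 : ℕ) : ENNReal) * A (l+1) (k+1) =
      ENNReal.ofReal (∫ t in (0:ℝ)..1, ((l:ℝ)+1) * (t ^ (k+1) * ph t ^ l * (2 / (1 + t)^2))) := by
    rw [intervalIntegral.integral_of_le zero_le_one, integral_Ioc_eq_integral_Ioo,
      ofReal_integral_eq_lintegral_ofReal]
    · rw [A_subst]
      have := ph_meas
      rw [← lintegral_const_mul _ (by fun_prop)]
      apply setLIntegral_congr_fun measurableSet_Ioo
      intro t ht
      obtain ⟨h0, h1⟩ := ht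
      simp only
      rw [← ENNReal.ofReal_natCast, ← ENNReal.ofReal_mul (by positivity)]
      congr 1; push_cast; rw [pow_succ (ph t) l]
      have e2 : ph t * (2 / (1 - t ^ 2)) = 2 / (1 + t) ^ 2 := by
        have : (1 - t) ≠ 0 := by linarith
        have : (1 + t) ≠ 0 := by linarith
        have : (1 - t ^ 2) ≠ 0 := by nlinarith
        unfold ph
        field_simp
        ring
      rw [← e2]; ring
    · exact c2.integrableOn_Icc.mono_set Ioo_subset_Icc_self
    · filter_upwards [ae_restrict_mem measurableSet_Ioo] with t ht
      have := ht.1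
      have := (ph_mem ht).1
      positivity
  rw [Nat.succ_eq_add_one, Nat.succ_eq_add_one, b1, b2, key2]

lemma C_zero (m : ℕ) : C m 0 = 1 := by
  unfold C
  split_ifs with h
  · rfl
  · exact A_zero m h

lemma C_symm (m n : ℕ) : C m n = C n m := by
  by_cases hm : m = 0
  · subst hm; rw [C_zero]; simp [C]
  by_cases hn : n = 0
  · subst hn; rw [C_zero]; simp [C]
  simp only [C, hm, hn, if_false]
  exact A_symm m n hm hn

lemma u_C (m n : ℕ) (hm : m ≠ 0) : u m * C m n = A m n := by
  have : (0:ℝ) < m := by positivity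
  simp only [C, hm, if_false, u]
  rw [← mul_assoc, ← ENNReal.ofReal_natCast, ← ENNReal.ofReal_mul (by positivity)]
  rw [one_div_mul_cancel this.ne']; simp

lemma tsum_step (n : ℕ) (g : ℕ → ENNReal) :
    (∑' l, if step n l then g l else 0) = ∑' j : ℕ, g (n + 2 * j + 1) := by
  have hi : Function.Injective (fun j : ℕ => n + 2 * j + 1) := by
    intro a b h; simp only at h; omega
  rw [← hi.tsum_eq]
  · apply tsum_congr
    intro j
    rw [if_pos]
    unfold step; omega
  · intro l hl
    have : step n l := by
      by_contra h; simp [h] at hl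
    unfold step at this
    exact ⟨(l - n) / 2, by simp only; omega⟩

lemma transport (m n : ℕ) (hm : m ≠ 0) :
    u m * C m n = ∑' l, if step n l then 2 * u l * C m l else 0 := by
  rw [u_C m n hm, A_series, tsum_step, ← ENNReal.tsum_mul_left]
  apply tsum_congr
  intro j
  rw [C_symm, mul_assoc, u_C _ _ (by omega)]

lemma u_zero : u 0 = 0 := by simp [u]

lemma W_zero (w : List Bool) (hw : w ≠ []) : W w 0 = 0 := by
  match w, hw with
  | false :: w, _ => simp [W, u_zero]
  | true :: w, _ => simp [W, u_zero]

noncomputable def Z (w v : List Bool) : ENNReal := ∑' m, ∑' n, W w m * W v n * C m n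

lemma Z_symm (w v : List Bool) : Z w v = Z v w := by
  unfold Z
  rw [ENNReal.tsum_comm]
  refine tsum_congr fun n => tsum_congr fun m => ?_
  rw [C_symm, mul_comm (W w m)]

lemma Z_nil (w : List Bool) : Z w [] = ∑' m, W w m := by
  unfold Z
  refine tsum_congr fun m => ?_
  rw [tsum_eq_single 0]
  · simp [W, C_zero]
  · intro n hn; simp [W, hn]

lemma Z_move (w v : List Bool) (hw : w ≠ []) : Z (false :: w) v = Z w (true :: v) := by
  unfold Z
  refine tsum_congr fun m => ?_
  by_cases hm : m = 0
  · subst hm; simp [W, W_zero w hw]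
  have h1 : ∀ n, W (false :: w) m * W v n * C m n =
      ∑' l, W w m * (if step n l then 2 * u l * W v n * C m l else 0) := by
    intro n
    rw [ENNReal.tsum_mul_left]
    have : (∑' l, if step n l then 2 * u l * W v n * C m l else 0) = W v n * (u m * C m n) := by
      rw [transport m n hm, ← ENNReal.tsum_mul_left]
      refine tsum_congr fun l => ?_
      split_ifs
      · ring
      · simp
    rw [this]
    simp only [W]; ring
  simp_rw [h1]
  rw [ENNReal.tsum_comm]
  refine tsum_congr fun l => ?_
  simp only [W]
  rw [show ∀ x : ENNReal, W w m * (2 * u l * x) * C m l = (W w m * (2 * u l * C m l)) * x from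
    fun x => by ring, ← ENNReal.tsum_mul_left]
  refine tsum_congr fun n => ?_
  split_ifs
  · ring
  · simp

lemma Z_move' (w v : List Bool) (hv : v ≠ []) : Z (true :: w) v = Z w (false :: v) := by
  rw [Z_symm, ← Z_move v w hv, Z_symm]

lemma Z_all (w : List Bool) : ∀ (v : List Bool), v ≠ [] →
    Z (w ++ [true]) v = Z [] (false :: (w.map not).reverse ++ v) := by
  induction w with
  | nil => intro v hv; simpa using Z_move' [] v hv
  | cons x w ih =>
    intro v hv
    cases x
    · rw [List.cons_append, Z_move _ _ (by simp), ih _ (by simp)]; simp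
    · rw [List.cons_append, Z_move' _ _ hv, ih _ (by simp)]; simp

lemma W_dual (w : List Bool) :
    ∑' m, W (false :: w ++ [true]) m = ∑' m, W (false :: (w.map not).reverse ++ [true]) m := by
  rw [← Z_nil, ← Z_nil, Z_symm (false :: (w.map not).reverse ++ [true]) [], List.cons_append, Z_move _ _ (by simp), Z_all _ _ (by simp)]

/-! ### Nested sums -/

noncomputable def E : List ℕ → ℕ → ENNReal
  | [], _ => 1
  | j :: k, m0 => ∑' m, if step m0 m then 2 * u m ^ j * E k m else 0

def word (k : List ℕ) : List Bool := k.flatMap fun j => true :: List.replicate (j - 1) false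

lemma W_replicate (j : ℕ) (w : List Bool) (m : ℕ) :
    W (List.replicate j false ++ w) m = u m ^ j * W w m := by
  induction j with
  | zero => simp
  | succ j ih => rw [List.replicate_succ, List.cons_append, W, ih]; ring

lemma E_W (k : List ℕ) : ∀ (w : List Bool), (∀ j ∈ k, 1 ≤ j) →
    ∑' m, W w m * E k m = ∑' m, W ((word k).reverse ++ w) m := by
  induction k with
  | nil => intro w _; simp [E, word]
  | cons j k ih =>
    intro w hk
    have h2 : (word (j :: k)).reverse ++ w =
        (word k).reverse ++ (List.replicate (j-1) false ++ true :: w) := by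
      simp [word]
    rw [h2, ← ih _ (fun i hi => hk i (by simp [hi]))]
    simp_rw [W_replicate, E, ← ENNReal.tsum_mul_left]
    rw [ENNReal.tsum_comm]
    refine tsum_congr fun m => ?_
    obtain ⟨i, rfl⟩ : ∃ i, j = i + 1 := ⟨j - 1, by have := hk j (by simp); omega⟩
    simp only [W, Nat.add_sub_cancel]
    rw [show ∀ x : ENNReal, u m ^ i * (2 * u m * x) * E k m = (2 * u m ^ (i+1) * E k m) * x from
      fun x => by ring, ← ENNReal.tsum_mul_left]
    refine tsum_congr fun l => ?_
    split_ifs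
    · ring
    · simp

def P {n : ℕ} (m0 : ℕ) (f : Fin n → ℕ) : Prop :=
  StrictMono f ∧ (∀ i, m0 < f i) ∧ ∀ i, f i % 2 = (m0 + (i : ℕ) + 1) % 2

lemma P_cons {n : ℕ} (m0 m : ℕ) (f : Fin n → ℕ) :
    P m0 (Fin.cons m f : Fin (n+1) → ℕ) ↔ step m0 m ∧ P m f := by
  unfold P step
  constructor
  · rintro ⟨h1, h2, h3⟩
    have a0 := h2 0
    have b0 := h3 0
    simp only [Fin.cons_zero, Fin.val_zero] at a0 b0
    refine ⟨⟨a0, by omega⟩, ?_, ?_, ?_⟩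
    · intro i j hij
      simpa using h1 (Fin.succ_lt_succ_iff.2 hij)
    · intro i
      simpa using h1 (Fin.succ_pos i)
    · intro i
      have := h3 i.succ
      simp only [Fin.cons_succ, Fin.val_succ] at this
      omega
  · rintro ⟨⟨h1, h2⟩, h3, h4, h5⟩
    refine ⟨?_, ?_, ?_⟩
    · intro i j hij
      induction i using Fin.cases with
      | zero =>
        induction j using Fin.cases with
        | zero => simp at hij
        | succ j => simpa using h4 j
      | succ i =>
        induction j using Fin.cases with
        | zero => simp at hij
        | succ j => simpa using h3 (Fin.succ_lt_succ_iff.1 hij)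
    · intro i
      induction i using Fin.cases with
      | zero => simpa using h1
      | succ i => simpa using h1.trans (h4 i)
    · intro i
      induction i using Fin.cases with
      | zero => simp; omega
      | succ i =>
        have := h5 i
        simp only [Fin.cons_succ, Fin.val_succ]
        omega

open Classical in
lemma E_eq (k : List ℕ) : ∀ m0, E k m0 =
    ∑' f : Fin k.length → ℕ, if P m0 f then ∏ i : Fin k.length, 2 * u (f i) ^ k.get i else 0 := by
  induction k with
  | nil =>
    intro m0
    rw [E, tsum_eq_single (fun i => i.elim0)]
    · rw [if_pos]
      · simp
      · exact ⟨fun i => i.elim0, fun i => i.elim0, fun i => i.elim0⟩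
    · intro f hf; exact absurd (funext fun i => i.elim0) hf
  | cons j k ih =>
    intro m0
    rw [← (show (ℕ × (Fin k.length → ℕ)) ≃ (Fin (j :: k).length → ℕ) from
      Fin.consEquiv (fun _ : Fin (k.length + 1) => ℕ)).tsum_eq]
    rw [ENNReal.tsum_prod', E]
    refine tsum_congr fun m => ?_
    simp only [Fin.consEquiv, Equiv.coe_fn_mk]
    have h : ∀ f : Fin k.length → ℕ, (if P m0 (Fin.cons m f : Fin (k.length+1) → ℕ) then
        ∏ i : Fin (k.length+1), 2 * u ((Fin.cons m f : Fin (k.length+1) → ℕ) i) ^ (j :: k).get i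
        else 0) =
        if step m0 m then 2 * u m ^ j *
          (if P m f then ∏ i : Fin k.length, 2 * u (f i) ^ k.get i else 0) else 0 := by
      intro f
      rw [Fin.prod_univ_succ]
      by_cases h1 : step m0 m <;> by_cases h2 : P m f <;> simp [P_cons, h1, h2]
    refine Eq.trans ?_ (tsum_congr fun f => (h f).symm)
    split_ifs
    · rw [ENNReal.tsum_mul_left, ih]
    · simp

lemma MTV_eq (k : List ℕ) : MTV k = (E k 0).toReal := by
  classical
  have hP : ∀ f : Fin k.length → ℕ,
      (StrictMono f ∧ ∀ i, f i % 2 = ((i : ℕ) + 1) % 2) ↔ P 0 f := by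
    intro f
    unfold P
    simp only [zero_add]
    refine ⟨fun h => ⟨h.1, ?_, h.2⟩, fun h => ⟨h.1, h.2.2⟩⟩
    intro i
    have hpos : 0 < k.length := i.pos
    have h0 := h.2 ⟨0, hpos⟩
    have h1 : f ⟨0, hpos⟩ ≤ f i := h.1.monotone (Fin.mk_le_of_le_val (Nat.zero_le _))
    simp only at h0
    omega
  have hu : ∀ m j, (u m ^ j).toReal = 1 / (m:ℝ) ^ j := by
    intro m j
    rw [ENNReal.toReal_pow, u, ENNReal.toReal_ofReal (by positivity)]; simp
  rw [E_eq, MTV]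
  have e : (∑' f : Fin k.length → ℕ,
      if P 0 f then ∏ i : Fin k.length, 2 * u (f i) ^ k.get i else 0) =
      ∑' f : {f : Fin k.length → ℕ // StrictMono f ∧ ∀ i, f i % 2 = ((i : ℕ) + 1) % 2},
        ∏ i : Fin k.length, 2 * u (f.1 i) ^ k.get i := by
    have := tsum_subtype {f : Fin k.length → ℕ | StrictMono f ∧ ∀ i, f i % 2 = ((i : ℕ) + 1) % 2}
      (fun f => ∏ i : Fin k.length, 2 * u (f i) ^ k.get i)
    refine Eq.trans ?_ this.symm
    refine tsum_congr fun f => ?_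
    simp only [indicator, mem_ofPred_eq, hP]
  rw [e, ENNReal.tsum_toReal_eq, ← tsum_mul_left]
  · refine tsum_congr fun f => ?_
    rw [ENNReal.toReal_prod]
    simp only [ENNReal.toReal_mul, hu, Finset.prod_mul_distrib]
    simp
  · intro f
    apply ENNReal.prod_ne_top
    intro i _
    exact ENNReal.mul_ne_top (by simp) (ENNReal.pow_ne_top (by simp [u]))

lemma MTV_word (k : List ℕ) (hk : ∀ j ∈ k, 1 ≤ j) :
    MTV k = (∑' m, W (word k).reverse m).toReal := by
  rw [MTV_eq]
  have := E_W k [] hk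
  rw [List.append_nil] at this
  rw [← this, tsum_eq_single 0]
  · simp [W]
  · intro n hn; simp [W, hn]

lemma idx_pos (s : ℕ) (a b : Fin s → ℕ) : ∀ j ∈ idxOf s a b, 1 ≤ j := by
  intro j hj
  simp only [idxOf, List.mem_flatten, List.mem_ofFn] at hj
  obtain ⟨l, ⟨i, rfl⟩, h⟩ := hj
  simp only [List.mem_append, List.mem_replicate, List.mem_singleton] at h
  omega

lemma word_append (k l : List ℕ) : word (k ++ l) = word k ++ word l := by simp [word]

lemma word_block (a b : ℕ) (ha : 1 ≤ a) :
    word (List.replicate (a - 1) 1 ++ [b + 1]) =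
      List.replicate a true ++ List.replicate b false := by
  obtain ⟨a, rfl⟩ : ∃ i, a = i + 1 := ⟨a - 1, by omega⟩
  have : word (List.replicate a 1) = List.replicate a true := by
    induction a with
    | zero => rfl
    | succ n ih => 
      rw [List.replicate_succ, List.replicate_succ, ← ih (by omega)]; simp [word]
  rw [word_append, Nat.add_sub_cancel, this, List.replicate_succ']
  simp [word]

lemma word_flatten (L : List (List ℕ)) : word L.flatten = (L.map word).flatten := by
  induction L with
  | nil => rfl
  | cons x L ih => rw [List.flatten_cons, word_append, ih]; rfl

lemma word_idx (s : ℕ) (a b : Fin s → ℕ) (ha : ∀ i, 1 ≤ a i) :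
    word (idxOf s a b) =
      (List.ofFn fun i => List.replicate (a i) true ++ List.replicate (b i) false).flatten := by
  rw [idxOf, word_flatten, List.map_ofFn]
  congr 2
  funext i
  exact word_block _ _ (ha i)

lemma ofFn_rev {α : Type*} (s : ℕ) (f : Fin s → α) :
    List.ofFn (fun i => f i.rev) = (List.ofFn f).reverse := by
  apply List.ext_getElem
  · simp
  · intro i h1 h2
    simp only [List.getElem_ofFn, List.getElem_reverse, List.length_ofFn]
    congr 1
    ext; simp [Fin.rev]; omega

lemma word_dual (s : ℕ) (a b : Fin s → ℕ) (ha : ∀ i, 1 ≤ a i) (hb : ∀ i, 1 ≤ b i) :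
    word (idxOf s (fun i => b i.rev) (fun i => a i.rev)) =
      ((word (idxOf s a b)).map not).reverse := by
  rw [word_idx _ _ _ (fun i => hb _), word_idx _ _ _ ha]
  rw [ofFn_rev s (fun i => List.replicate (b i) true ++ List.replicate (a i) false)]
  rw [List.map_flatten, List.reverse_flatten, List.map_ofFn, List.map_ofFn]
  congr 3
  funext i
  simp

lemma word_form (s : ℕ) (hs : 1 ≤ s) (a b : Fin s → ℕ) (ha : ∀ i, 1 ≤ a i)
    (hb : ∀ i, 1 ≤ b i) : ∃ w, word (idxOf s a b) = true :: w ++ [false] := by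
  obtain ⟨n, rfl⟩ : ∃ n, s = n + 1 := ⟨s - 1, by omega⟩
  have h1 : ∃ x, word (idxOf (n+1) a b) = true :: x := by
    rw [word_idx _ _ _ ha, List.ofFn_succ]
    obtain ⟨c, hc⟩ : ∃ i, a 0 = i + 1 := ⟨a 0 - 1, by have := ha 0; omega⟩
    rw [hc, List.replicate_succ]
    simp
  have h2 : ∃ y, word (idxOf (n+1) a b) = y ++ [false] := by
    rw [word_idx _ _ _ ha, List.ofFn_succ']
    obtain ⟨c, hc⟩ : ∃ i, b (Fin.last n) = i + 1 :=
      ⟨b (Fin.last n) - 1, by have := hb (Fin.last n); omega⟩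
    rw [hc, List.replicate_succ']
    simp only [List.concat_eq_append, List.flatten_append, List.flatten_singleton,
      ← List.append_assoc]
    exact ⟨_, rfl⟩
  obtain ⟨x, hx⟩ := h1
  obtain ⟨y, hy⟩ := h2
  rw [hx] at hy
  cases y with
  | nil => simp at hy
  | cons c y =>
    simp only [List.cons_append, List.cons.injEq] at hy
    exact ⟨y, by rw [hx, hy.2]; rfl⟩

end MTVD

/-- **Theorem (duality).** For any admissible index
`k = (1^{a₁−1}, b₁+1, …, 1^{a_s−1}, b_s+1)` (with all `a_i, b_i ≥ 1`),
the dual index `k† = (1^{b_s−1}, a_s+1, …, 1^{b₁−1}, a₁+1)` satisfies `T(k†) = T(k)`. -/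
theorem MTV_duality (s : ℕ) (hs : 1 ≤ s) (a b : Fin s → ℕ)
    (ha : ∀ i, 1 ≤ a i) (hb : ∀ i, 1 ≤ b i) :
    MTV (idxOf s (fun i => b i.rev) (fun i => a i.rev)) = MTV (idxOf s a b) := by
  obtain ⟨w, hw⟩ := MTVD.word_form s hs a b ha hb
  rw [MTVD.MTV_word _ (MTVD.idx_pos _ _ _), MTVD.MTV_word _ (MTVD.idx_pos _ _ _),
    MTVD.word_dual s a b ha hb, hw]
  have := MTVD.W_dual (w.reverse)
  congr 1
  simp only [List.cons_append, List.map_cons, List.map_append, List.reverse_cons,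
    List.reverse_append, List.reverse_reverse, List.map_reverse, List.map_nil, List.reverse_nil,
    List.nil_append, Bool.not_true, Bool.not_false] at this ⊢
  exact this.symm
end

section
/- Weighted sum formula in depth 2: for every integer k ≥ 3, ∑_{j=2}^{k−1} 2^{j−1} · T(k−j, j) = (k−1) · T(k). -/
open Finset Filter Topology

lemma aux_bound (D p : ℝ) (hD : 1 ≤ D) (hp : D ≤ p) (s j : ℕ) (hs : 1 ≤ s) (hj : 2 ≤ j) :
    1 / (D ^ s * p ^ j) ≤ D ^ (-(3/2) : ℝ) * p ^ (-(3/2) : ℝ) := by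
  have hD0 : 0 < D := by linarith
  have hp0 : 0 < p := by linarith
  rw [Real.rpow_neg hD0.le, Real.rpow_neg hp0.le, ← mul_inv, one_div]
  apply inv_anti₀ (by positivity)
  have e1 : D ^ (3/2 : ℝ) = D * D ^ (1/2 : ℝ) := by
    rw [← Real.rpow_one_add' hD0.le (by norm_num)]; norm_num
  have e2 : p ^ (2 : ℕ) = p ^ (1/2 : ℝ) * p ^ (3/2 : ℝ) := by
    rw [← Real.rpow_add hp0, ← Real.rpow_natCast]; norm_num
  calc D ^ (3/2 : ℝ) * p ^ (3/2 : ℝ) = D * (D ^ (1/2 : ℝ) * p ^ (3/2 : ℝ)) := by rw [e1]; ring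
    _ ≤ D * (p ^ (1/2 : ℝ) * p ^ (3/2 : ℝ)) := by gcongr
    _ = D ^ 1 * p ^ 2 := by rw [e2]; ring
    _ ≤ D ^ s * p ^ j := by
      have : 1 ≤ p := by linarith
      gcongr

lemma MTV_one (k : ℕ) : MTV [k] = 2 * ∑' a : ℕ, 1 / (2 * (a : ℝ) + 1) ^ k := by
  unfold MTV
  let e : ℕ ≃ {f : Fin [k].length → ℕ // StrictMono f ∧ ∀ i, f i % 2 = ((i : ℕ) + 1) % 2} :=
    { toFun := fun a => ⟨fun _ => 2 * a + 1, by
        constructor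
        · intro i j h
          have hi := i.2; have hj := j.2
          simp only [List.length_singleton] at hi hj
          have : (i : ℕ) < j := h
          omega
        · intro i
          have hi := i.2
          simp only [List.length_singleton] at hi
          change (2 * a + 1) % 2 = _
          omega⟩
      invFun := fun f => f.1 ⟨0, by simp⟩ / 2
      left_inv := fun a => by simp; omega
      right_inv := fun f => by
        apply Subtype.ext
        funext i
        have hi : i = ⟨0, by simp⟩ := by
          apply Fin.ext
          have := i.2
          simp only [List.length_singleton] at this
          simpa using this
        subst hi
        have := f.2.2 ⟨0, by simp⟩
        simp only at this ⊢
        omega }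
  rw [← e.tsum_eq]
  simp [e]

lemma MTV_two (s j : ℕ) : MTV [s, j] = 4 * ∑' q : ℕ × ℕ,
    if q.1 ≤ q.2 then 1 / ((2 * (q.1 : ℝ) + 1) ^ s * (2 * ((q.2 : ℝ) + 1)) ^ j) else 0 := by
  unfold MTV
  let e : {q : ℕ × ℕ // q ∈ {q : ℕ × ℕ | q.1 ≤ q.2}} ≃
      {f : Fin [s, j].length → ℕ // StrictMono f ∧ ∀ i, f i % 2 = ((i : ℕ) + 1) % 2} :=
    { toFun := fun q => ⟨(![2 * q.1.1 + 1, 2 * q.1.2 + 2] : Fin 2 → ℕ), by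
        have hq : q.1.1 ≤ q.1.2 := q.2
        constructor
        · change StrictMono (![2 * q.1.1 + 1, 2 * q.1.2 + 2] : Fin 2 → ℕ)
          rw [Fin.strictMono_iff_lt_succ]
          intro i
          fin_cases i
          simp
          omega
        · change ∀ i : Fin 2, (![2 * q.1.1 + 1, 2 * q.1.2 + 2] : Fin 2 → ℕ) i % 2 = ((i : ℕ) + 1) % 2
          intro i
          fin_cases i <;> simp⟩
      invFun := fun f => ⟨((f.1 : Fin 2 → ℕ) 0 / 2, (f.1 : Fin 2 → ℕ) 1 / 2 - 1), by
        have h1 : (f.1 : Fin 2 → ℕ) 0 < (f.1 : Fin 2 → ℕ) 1 :=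
          f.2.1 (show (0 : Fin 2) < 1 by decide)
        have h2 : (f.1 : Fin 2 → ℕ) 0 % 2 = (0 + 1) % 2 := f.2.2 (0 : Fin 2)
        have h3 : (f.1 : Fin 2 → ℕ) 1 % 2 = (1 + 1) % 2 := f.2.2 (1 : Fin 2)
        change (f.1 : Fin 2 → ℕ) 0 / 2 ≤ (f.1 : Fin 2 → ℕ) 1 / 2 - 1
        omega⟩
      left_inv := fun q => by
        apply Subtype.ext
        apply Prod.ext
        · simp; omega
        · simp
      right_inv := fun f => by
        have h1 : (f.1 : Fin 2 → ℕ) 0 < (f.1 : Fin 2 → ℕ) 1 :=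
          f.2.1 (show (0 : Fin 2) < 1 by decide)
        have h2 : (f.1 : Fin 2 → ℕ) 0 % 2 = (0 + 1) % 2 := f.2.2 (0 : Fin 2)
        have h3 : (f.1 : Fin 2 → ℕ) 1 % 2 = (1 + 1) % 2 := f.2.2 (1 : Fin 2)
        apply Subtype.ext
        change (![2 * ((f.1 : Fin 2 → ℕ) 0 / 2) + 1, 2 * ((f.1 : Fin 2 → ℕ) 1 / 2 - 1) + 2] : Fin 2 → ℕ) = (f.1 : Fin 2 → ℕ)
        funext i
        fin_cases i
        · simp; omega
        · simp; omega }
  rw [← e.tsum_eq]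
  have h4 : (2 : ℝ) ^ [s, j].length = 4 := by norm_num
  rw [h4]
  congr 1
  rw [tsum_congr (g := fun q : {q : ℕ × ℕ // q ∈ {q : ℕ × ℕ | q.1 ≤ q.2}} =>
    (fun q : ℕ × ℕ => 1 / ((2 * (q.1 : ℝ) + 1) ^ s * (2 * ((q.2 : ℝ) + 1)) ^ j)) q.1)]
  · rw [tsum_subtype {q : ℕ × ℕ | q.1 ≤ q.2}
      (fun q : ℕ × ℕ => 1 / ((2 * (q.1 : ℝ) + 1) ^ s * (2 * ((q.2 : ℝ) + 1)) ^ j))]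
    apply tsum_congr
    intro q
    simp [Set.indicator_apply]
  · intro q
    change ∏ i : Fin 2, (1 : ℝ) / (((![2 * q.1.1 + 1, 2 * q.1.2 + 2] : Fin 2 → ℕ) i : ℕ) : ℝ) ^ ([s, j].get i) = _
    rw [Fin.prod_univ_two]
    simp
    ring

lemma summable_term (s j : ℕ) (hs : 1 ≤ s) (hj : 2 ≤ j) :
    Summable (fun q : ℕ × ℕ =>
      if q.1 ≤ q.2 then 1 / ((2 * (q.1 : ℝ) + 1) ^ s * ((q.2 : ℝ) + 1) ^ j) else 0) := by
  have h0 : Summable (fun n : ℕ => ((n : ℝ) + 1) ^ (-(3/2) : ℝ)) := by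
    have := (summable_nat_add_iff 1).2 (Real.summable_nat_rpow (p := -(3/2)) |>.2 (by norm_num))
    simpa using this
  have h1 := h0.mul_of_nonneg h0 (fun n => by positivity) (fun n => by positivity)
  refine Summable.of_nonneg_of_le (fun q => ?_) (fun q => ?_) h1
  · split_ifs <;> positivity
  · split_ifs with h
    · have h' : (q.1 : ℝ) ≤ q.2 := by exact_mod_cast h
      have hn : (0 : ℝ) ≤ q.1 := by positivity
      refine le_trans ?_ (aux_bound (q.1 + 1) (q.2 + 1) (by linarith) (by linarith) s j hs hj)
      gcongr
      linarith
    · positivity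

lemma summable_B (n : ℕ) (hn : 2 ≤ n) :
    Summable (fun q : ℕ × ℕ =>
      if q.1 ≤ q.2 then 1 / ((q.2 : ℝ) + 1) ^ n * (1 / ((q.2 : ℝ) - 2 * q.1)) else 0) := by
  have h0 : Summable (fun n : ℕ => ((n : ℝ) + 1) ^ (-(3/2) : ℝ)) := by
    have := (summable_nat_add_iff 1).2 (Real.summable_nat_rpow (p := -(3/2)) |>.2 (by norm_num))
    simpa using this
  have h2 : Summable (fun n : ℤ => |(n : ℝ)| ^ (-(3/2) : ℝ)) :=
    Real.summable_abs_int_rpow (by norm_num)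
  have h1 := h0.mul_of_nonneg h2 (fun n => by positivity) (fun n => by positivity)
  have hinj : Function.Injective (fun q : ℕ × ℕ => (q.2, (q.2 : ℤ) - 2 * q.1)) := by
    rintro ⟨a, b⟩ ⟨c, d⟩ h
    simp only [Prod.mk.injEq] at h ⊢
    omega
  have h3 := h1.comp_injective hinj
  refine Summable.of_norm_bounded h3 (fun q => ?_)
  obtain ⟨a, b⟩ := q
  simp only [Function.comp]
  split_ifs with h
  · by_cases hd : (b : ℤ) - 2 * a = 0
    · have : (b : ℝ) - 2 * a = 0 := by exact_mod_cast hd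
      rw [this]
      simp
      positivity
    · have h1 : (1 : ℝ) ≤ |(b : ℝ) - 2 * a| := by
        have := Int.one_le_abs hd
        exact_mod_cast this
      have h2 : |(b : ℝ) - 2 * a| ≤ (b : ℝ) + 1 := by
        have h' : (a : ℝ) ≤ b := by exact_mod_cast h
        have h'' : (0 : ℝ) ≤ a := by positivity
        rw [abs_le]; constructor <;> linarith
      have := aux_bound _ _ h1 h2 1 n le_rfl hn
      rw [norm_mul, norm_div, norm_div, norm_one, Real.norm_eq_abs, Real.norm_eq_abs,
        abs_of_nonneg (by positivity : (0 : ℝ) ≤ ((b : ℝ) + 1) ^ n)]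
      push_cast
      calc _ = 1 / (|(b : ℝ) - 2 * a| ^ 1 * ((b : ℝ) + 1) ^ n) := by
            rw [pow_one, one_div_mul_one_div, mul_comm]
        _ ≤ _ := this
        _ = _ := mul_comm _ _
  · simp
    positivity

lemma inner_B (b : ℕ) : ∑ a ∈ range (b + 1), 1 / ((b : ℝ) - 2 * a) = 0 := by
  have h := Finset.sum_range_reflect (fun a : ℕ => 1 / ((b : ℝ) - 2 * a)) (b + 1)
  have h2 : ∑ a ∈ range (b + 1), 1 / ((b : ℝ) - 2 * ((b + 1 - 1 - a : ℕ) : ℝ))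
      = - ∑ a ∈ range (b + 1), 1 / ((b : ℝ) - 2 * a) := by
    rw [← Finset.sum_neg_distrib]
    apply Finset.sum_congr rfl
    intro a ha
    have : a ≤ b := by simp at ha; omega
    rw [Nat.add_sub_cancel, Nat.cast_sub this, ← one_div_neg_eq_neg_one_div]
    congr 1
    ring
  rw [h2] at h
  linarith

lemma tsum_B (n : ℕ) (hn : 2 ≤ n) :
    ∑' q : ℕ × ℕ, (if q.1 ≤ q.2 then 1 / ((q.2 : ℝ) + 1) ^ n * (1 / ((q.2 : ℝ) - 2 * q.1)) else 0)
      = 0 := by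
  have hs := summable_B n hn
  rw [hs.tsum_prod]
  dsimp only
  rw [← Summable.tsum_comm (f := fun a b : ℕ => if a ≤ b then
    1 / ((b : ℝ) + 1) ^ n * (1 / ((b : ℝ) - 2 * a)) else 0) hs]
  refine (tsum_congr (g := fun _ : ℕ => (0 : ℝ)) ?_).trans tsum_zero
  intro b
  rw [tsum_eq_sum (s := range (b + 1))]
  · rw [Finset.sum_congr rfl (g := fun a : ℕ => 1 / ((b : ℝ) + 1) ^ n * (1 / ((b : ℝ) - 2 * a))),
      ← Finset.mul_sum, inner_B, mul_zero]
    intro a ha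
    rw [if_pos (by simp at ha; omega)]
  · intro a ha
    rw [if_neg (by simp at ha; omega)]

lemma partial_A (a M : ℕ) :
    ∑ c ∈ range (a + 1 + M), (1 / ((c : ℝ) - a) - 1 / ((a : ℝ) + c + 1))
      = - ∑ i ∈ range (2 * a + 1), 1 / ((M : ℝ) + i + 1) := by
  induction M with
  | zero =>
    have h := Finset.sum_range_reflect (fun c : ℕ => 1 / ((c : ℝ) - a)) (a + 1)
    have e1 : ∑ c ∈ range (a + 1), 1 / ((c : ℝ) - a) = - ∑ i ∈ range a, 1 / ((i : ℝ) + 1) := by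
      rw [← h, Finset.sum_range_succ', ← Finset.sum_neg_distrib]
      simp only [Nat.add_sub_cancel, Nat.sub_zero, sub_self, div_zero, add_zero]
      apply Finset.sum_congr rfl
      intro i hi
      have : i + 1 ≤ a := by simp at hi; omega
      rw [Nat.cast_sub this, ← one_div_neg_eq_neg_one_div]
      congr 1
      push_cast
      ring
    rw [add_zero, Finset.sum_sub_distrib, e1,
      show 2 * a + 1 = a + (a + 1) by ring, Finset.sum_range_add _ a (a + 1)]
    push_cast
    simp only [zero_add]
    ring
  | succ M ih =>
    rw [← add_assoc, Finset.sum_range_succ, ih]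
    have h1 := Finset.sum_range_succ (fun i : ℕ => 1 / ((M : ℝ) + i + 1)) (2 * a + 1)
    have h2 := Finset.sum_range_succ' (fun i : ℕ => 1 / ((M : ℝ) + i + 1)) (2 * a + 1)
    have h3 : ∑ i ∈ range (2 * a + 1), 1 / (((M + 1 : ℕ) : ℝ) + i + 1)
        = ∑ i ∈ range (2 * a + 1), 1 / ((M : ℝ) + (i + 1 : ℕ) + 1) := by
      apply Finset.sum_congr rfl
      intro i _
      push_cast
      congr 1
      ring
    rw [h3]
    rw [h1] at h2
    have h4 : 1 / (((a + 1 + M : ℕ) : ℝ) - a) = 1 / ((M : ℝ) + (0 : ℕ) + 1) := by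
      push_cast; congr 1; ring
    have h5 : 1 / ((a : ℝ) + (a + 1 + M : ℕ) + 1) = 1 / ((M : ℝ) + (2 * a + 1 : ℕ) + 1) := by
      push_cast; congr 1; ring
    rw [h4, h5]
    linarith

lemma inner_A (a : ℕ)
    (hs : Summable (fun b : ℕ => if a ≤ b then 1 / ((b : ℝ) + 1) * (1 / ((b : ℝ) - 2 * a)) else 0)) :
    ∑' b : ℕ, (if a ≤ b then 1 / ((b : ℝ) + 1) * (1 / ((b : ℝ) - 2 * a)) else 0)
      = 1 / (2 * (a : ℝ) + 1) ^ 2 := by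
  have ht := hs.hasSum.tendsto_sum_nat
  have hsh : Tendsto (fun M : ℕ => a + (a + 1 + M)) atTop atTop :=
    tendsto_atTop_mono (fun M => by simp only [id]; omega) tendsto_id
  have ht2 := ht.comp hsh
  refine tendsto_nhds_unique ht2 ?_
  have hm : (2 * (a : ℝ) + 1) ≠ 0 := by positivity
  have key : ∀ M : ℕ, ∑ b ∈ range (a + (a + 1 + M)),
      (if a ≤ b then 1 / ((b : ℝ) + 1) * (1 / ((b : ℝ) - 2 * a)) else 0)
      = 1 / (2 * (a : ℝ) + 1) * (1 / (2 * (a : ℝ) + 1)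
        - ∑ i ∈ range (2 * a + 1), 1 / ((M : ℝ) + i + 1)) := by
    intro M
    rw [Finset.sum_range_add, Finset.sum_eq_zero, zero_add, sub_eq_add_neg, ← partial_A,
      show (1 / (2 * (a : ℝ) + 1)) = ∑ c ∈ range (a + 1 + M),
        if c = a then (1 / (2 * (a : ℝ) + 1)) else 0 by
          rw [Finset.sum_ite_eq']; simp; intro h; omega, ← Finset.sum_add_distrib]
    · rw [Finset.sum_ite_eq' , if_pos (by simp; omega), Finset.mul_sum]
      apply Finset.sum_congr rfl
      intro c _
      rw [if_pos (by omega)]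
      by_cases hc : c = a
      · subst hc
        simp
        rw [show (c : ℝ) + c - 2 * c = 0 by ring]
        rw [show (c : ℝ) + c + 1 = 2 * c + 1 by ring]
        simp
      · rw [if_neg hc]
        have : (c : ℝ) - a ≠ 0 := by
          rw [sub_ne_zero]; exact_mod_cast hc
        have h2 : (a : ℝ) + c + 1 ≠ 0 := by positivity
        push_cast
        rw [show (a : ℝ) + c - 2 * a = c - a by ring]
        field_simp
        ring
    · intro b hb
      rw [if_neg (by simp at hb; omega)]
  have hlim : Tendsto (fun M : ℕ => 1 / (2 * (a : ℝ) + 1) * (1 / (2 * (a : ℝ) + 1)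
        - ∑ i ∈ range (2 * a + 1), 1 / ((M : ℝ) + i + 1))) atTop
        (𝓝 (1 / (2 * (a : ℝ) + 1) * (1 / (2 * (a : ℝ) + 1) - ∑ i ∈ range (2 * a + 1), (0 : ℝ)))) := by
    apply Tendsto.const_mul
    apply Tendsto.const_sub
    apply tendsto_finsetSum
    intro i _
    have h := (tendsto_one_div_add_atTop_nhds_zero_nat (𝕜 := ℝ)).comp (tendsto_add_atTop_nat i)
    refine h.congr (fun M => ?_)
    simp
  have hval : 1 / (2 * (a : ℝ) + 1) ^ 2
      = 1 / (2 * (a : ℝ) + 1) * (1 / (2 * (a : ℝ) + 1) - ∑ i ∈ range (2 * a + 1), (0 : ℝ)) := by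
    rw [Finset.sum_const_zero, sub_zero, one_div_mul_one_div, pow_two]
  rw [hval]
  exact hlim.congr (fun M => (key M).symm)

lemma geom_id (k : ℕ) (hk : 3 ≤ k) (m p : ℝ) (hm : m ≠ 0) (hp : p ≠ 0) (h : p - m ≠ 0) :
    ∑ j ∈ Icc 2 (k - 1), 1 / (m ^ (k - j) * p ^ j)
      = 1 / (m ^ (k - 2)) * (1 / p * (1 / (p - m))) - 1 / p ^ (k - 1) * (1 / (p - m)) := by
  obtain ⟨n, rfl⟩ : ∃ n, k = n + 3 := ⟨k - 3, by omega⟩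
  clear hk
  simp only [show n + 3 - 1 = n + 2 by omega, show n + 3 - 2 = n + 1 by omega]
  induction n with
  | zero =>
    simp
    field_simp
  | succ n ih =>
    rw [show n + 1 + 2 = (n + 2) + 1 by ring, Finset.sum_Icc_succ_top (by omega)]
    have : ∑ j ∈ Icc 2 (n + 2), 1 / (m ^ (n + 1 + 3 - j) * p ^ j)
        = 1 / m * ∑ j ∈ Icc 2 (n + 2), 1 / (m ^ (n + 3 - j) * p ^ j) := by
      rw [Finset.mul_sum]
      apply Finset.sum_congr rfl
      intro j hj
      simp at hj
      rw [show n + 1 + 3 - j = (n + 3 - j) + 1 by omega, pow_succ]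
      field_simp
    rw [this, ih, show n + 1 + 3 - (n + 2 + 1) = 1 by omega]
    field_simp
    ring

lemma diag_id (k : ℕ) (hk : 3 ≤ k) (m : ℝ) :
    ∑ j ∈ Icc 2 (k - 1), 1 / (m ^ (k - j) * m ^ j) = ((k : ℝ) - 2) * (1 / m ^ k) := by
  rw [Finset.sum_congr rfl (g := fun _ => 1 / m ^ k)]
  · rw [Finset.sum_const, Nat.card_Icc, nsmul_eq_mul, show k - 1 + 1 - 2 = k - 2 by omega,
      Nat.cast_sub (by omega)]
    simp
  · intro j hj
    simp at hj
    rw [← pow_add, show k - j + j = k by omega]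

lemma summable_odd (k : ℕ) (hk : 2 ≤ k) : Summable (fun a : ℕ => 1 / (2 * (a : ℝ) + 1) ^ k) := by
  have h := (Real.summable_one_div_nat_pow (p := k)).2 (by omega)
  have h2 := h.comp_injective (i := fun a : ℕ => 2 * a + 1) (fun a b h => by simpa using h)
  refine h2.congr (fun a => ?_)
  simp

theorem MTV_weighted_sum_depth2 (k : ℕ) (hk : 3 ≤ k) :
    ∑ j ∈ Finset.Icc 2 (k - 1), (2 : ℝ) ^ (j - 1) * MTV [k - j, j]
      = ((k : ℝ) - 1) * MTV [k] := by
  have hk2 : ∀ j ∈ Icc 2 (k - 1), 1 ≤ k - j ∧ 2 ≤ j := by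
    intro j hj; simp at hj; omega
  set F : ℕ → ℕ × ℕ → ℝ := fun j q =>
      if q.1 ≤ q.2 then 1 / ((2 * (q.1 : ℝ) + 1) ^ (k - j) * ((q.2 : ℝ) + 1) ^ j) else 0 with hF
  have hFs : ∀ j ∈ Icc 2 (k - 1), Summable (F j) := fun j hj =>
    summable_term (k - j) j (hk2 j hj).1 (hk2 j hj).2
  set A : ℕ × ℕ → ℝ := fun q => if q.1 ≤ q.2 then 1 / (2 * (q.1 : ℝ) + 1) ^ (k - 2) *
    (1 / ((q.2 : ℝ) + 1) * (1 / ((q.2 : ℝ) - 2 * q.1))) else 0 with hA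
  set B : ℕ × ℕ → ℝ := fun q =>
    if q.1 ≤ q.2 then 1 / ((q.2 : ℝ) + 1) ^ (k - 1) * (1 / ((q.2 : ℝ) - 2 * q.1)) else 0 with hB
  set i0 : ℕ → ℕ × ℕ := fun a => (a, 2 * a) with hi0
  have hinj : Function.Injective i0 := fun a b h => by simpa [i0] using h
  set S : ℝ := ∑' a : ℕ, 1 / (2 * (a : ℝ) + 1) ^ k with hS
  set D : ℕ × ℕ → ℝ := fun q =>
    if q.2 = 2 * q.1 then ((k : ℝ) - 2) * (1 / (2 * (q.1 : ℝ) + 1) ^ k) else 0 with hD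
  have hDsum : HasSum D (((k : ℝ) - 2) * S) := by
    have h1 := ((summable_odd k (by omega)).hasSum).mul_left ((k : ℝ) - 2)
    rw [← hinj.hasSum_iff]
    · refine h1.congr_fun ?_ 
      intro a
      simp [D, i0]
    · rintro ⟨a, b⟩ hq
      simp only [D]
      rw [if_neg]
      intro h
      exact hq ⟨a, by simp [i0]; exact h.symm⟩
  have hBs : Summable B := summable_B (k - 1) (by omega)
  have hB0 : ∑' q, B q = 0 := tsum_B (k - 1) (by omega)
  have hid : ∀ q, ∑ j ∈ Icc 2 (k - 1), F j q = D q + A q - B q := by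
    rintro ⟨a, b⟩
    simp only [hF, hA, hB, hD]
    by_cases hab : a ≤ b
    · simp only [if_pos hab]
      by_cases hd : b = 2 * a
      · subst hd
        simp only [if_true]
        have := diag_id k hk (2 * (a : ℝ) + 1)
        push_cast
        rw [this]
        simp
      · rw [if_neg hd, zero_add]
        have hne : ((b : ℝ) + 1) - (2 * a + 1) ≠ 0 := by
          rw [sub_ne_zero]; intro h; apply hd
          have : (b : ℝ) = 2 * a := by linarith
          exact_mod_cast this
        have := geom_id k hk (2 * (a : ℝ) + 1) ((b : ℝ) + 1) (by positivity) (by positivity) hne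
        rw [this, show ((b : ℝ) + 1) - (2 * a + 1) = b - 2 * a by ring]
    · simp only [if_neg hab]
      rw [if_neg (by omega)]
      simp
  have hGs : Summable (fun q => ∑ j ∈ Icc 2 (k - 1), F j q) := summable_sum hFs
  have hAs : Summable A := by
    refine ((hGs.add hBs).sub hDsum.summable).congr (fun q => ?_)
    rw [hid q]; ring
  have hA1 : ∑' q, A q = S := by
    rw [hAs.tsum_prod]
    apply tsum_congr
    intro a
    have hsec : Summable (fun b : ℕ => A (a, b)) := hAs.prod_factor a
    have hm : (2 * (a : ℝ) + 1) ≠ 0 := by positivity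
    have hAe : ∀ b : ℕ, A (a, b) = 1 / (2 * (a : ℝ) + 1) ^ (k - 2) *
        (if a ≤ b then 1 / ((b : ℝ) + 1) * (1 / ((b : ℝ) - 2 * a)) else 0) := by
      intro b
      simp only [hA, mul_ite, mul_zero]
    simp only [hAe] at hsec ⊢
    have hne : 1 / (2 * (a : ℝ) + 1) ^ (k - 2) ≠ 0 := by positivity
    rw [tsum_mul_left, inner_A a ((summable_mul_left_iff hne).1 hsec), one_div_mul_one_div,
      ← pow_add, show k - 2 + 2 = k by omega]
  have hG : ∑ j ∈ Icc 2 (k - 1), ∑' q, F j q = ((k : ℝ) - 1) * S := by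
    rw [← Summable.tsum_finsetSum hFs, tsum_congr hid,
      (hDsum.summable.add hAs).tsum_sub hBs, hDsum.summable.tsum_add hAs, hDsum.tsum_eq, hA1, hB0]
    ring
  rw [MTV_one, ← hS]
  have hterm : ∀ j ∈ Icc 2 (k - 1), (2 : ℝ) ^ (j - 1) * MTV [k - j, j] = 2 * ∑' q, F j q := by
    intro j hj
    rw [MTV_two, ← tsum_mul_left, ← tsum_mul_left, ← tsum_mul_left]
    apply tsum_congr
    intro q
    simp only [hF]
    obtain ⟨i, rfl⟩ : ∃ i, j = i + 1 := ⟨j - 1, by have := (hk2 j hj).2; omega⟩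
    split_ifs
    · rw [mul_pow 2, Nat.add_sub_cancel]
      have : (q.2 : ℝ) + 1 ≠ 0 := by positivity
      field_simp
      ring
    · simp
  rw [Finset.sum_congr rfl hterm, ← Finset.mul_sum, hG]
  ring
end

section
/- Sum formula in depth 3: for every integer k ≥ 4, ∑_{a+b+c=k, a≥1, b≥1, c≥2} T(a, b, c) + ∑_{j=2}^{k−2} T(1, k−1−j, j) = (2/3) · T(2) · T(k−2). -/
def eq3 : ℕ × ℕ × ℕ ≃ {f : Fin 3 → ℕ // StrictMono f ∧ ∀ i, f i % 2 = ((i : ℕ) + 1) % 2} where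
  toFun p := ⟨![2 * p.1 + 1, 2 * p.1 + 2 * p.2.1 + 2, 2 * p.1 + 2 * p.2.1 + 2 * p.2.2 + 3], by
    constructor
    · rw [Fin.strictMono_iff_lt_succ]
      intro i
      fin_cases i <;> simp <;> omega
    · intro i
      fin_cases i <;> simp <;> omega⟩
  invFun f := (f.1 0 / 2, (f.1 1 - f.1 0) / 2, (f.1 2 - f.1 1) / 2)
  left_inv p := by
    obtain ⟨a, b, c⟩ := p
    simp
    omega
  right_inv f := by
    obtain ⟨f, h1, h2⟩ := f
    have h01 : f 0 < f 1 := h1 (by decide)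
    have h12 : f 1 < f 2 := h1 (by decide)
    have e0 := h2 0
    have e1 := h2 1
    have e2 := h2 2
    simp at e0 e1 e2
    apply Subtype.ext
    funext i
    fin_cases i <;> simp <;> omega

def eq1 : ℕ ≃ {f : Fin 1 → ℕ // StrictMono f ∧ ∀ i, f i % 2 = ((i : ℕ) + 1) % 2} where
  toFun p := ⟨![2 * p + 1], by
    constructor
    · exact Subsingleton.strictMono _
    · intro i
      fin_cases i; simp⟩
  invFun f := f.1 0 / 2
  left_inv p := by
    simp
    omega
  right_inv f := by
    obtain ⟨f, h1, h2⟩ := f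
    have e0 := h2 0
    simp at e0
    apply Subtype.ext
    funext i
    fin_cases i; simp; omega

lemma tsum_eq_toReal {α : Type*} (f : α → ℝ) (hf : ∀ x, 0 ≤ f x) :
    ∑' x, f x = (∑' x, ENNReal.ofReal (f x)).toReal := by
  rw [ENNReal.tsum_toReal_eq (fun _ => ENNReal.ofReal_ne_top)]
  exact tsum_congr fun x => (ENNReal.toReal_ofReal (hf x)).symm

noncomputable def term3 (x y z a b c : ℕ) : ℝ :=
  1 / (2 * (a : ℝ) + 1) ^ x * (1 / (2 * (a : ℝ) + 2 * b + 2) ^ y) *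
    (1 / (2 * (a : ℝ) + 2 * b + 2 * c + 3) ^ z)

lemma MTV3 (x y z : ℕ) : MTV [x, y, z] =
    8 * (∑' a : ℕ, ∑' b : ℕ, ∑' c : ℕ, ENNReal.ofReal (term3 x y z a b c)).toReal := by
  have h : MTV [x, y, z] = 2 ^ 3 * ∑' f : {f : Fin 3 → ℕ // StrictMono f ∧ ∀ i, f i % 2 = ((i : ℕ) + 1) % 2},
      ∏ i : Fin 3, (1 : ℝ) / (f.1 i : ℝ) ^ [x, y, z].get i := rfl
  rw [h, ← eq3.tsum_eq, tsum_eq_toReal, ENNReal.tsum_prod']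
  · simp_rw [ENNReal.tsum_prod']
    norm_num
    congr 5 with a
    congr 1 with b
    congr 1 with c
    congr 1
    simp [Fin.prod_univ_three, eq3, term3]
    ring
  · intro p
    positivity

lemma MTV1 (x : ℕ) : MTV [x] =
    2 * (∑' a : ℕ, ENNReal.ofReal (1 / (2 * (a : ℝ) + 1) ^ x)).toReal := by
  have h : MTV [x] = 2 ^ 1 * ∑' f : {f : Fin 1 → ℕ // StrictMono f ∧ ∀ i, f i % 2 = ((i : ℕ) + 1) % 2},
      ∏ i : Fin 1, (1 : ℝ) / (f.1 i : ℝ) ^ [x].get i := rfl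
  rw [h, ← eq1.tsum_eq, tsum_eq_toReal]
  · norm_num
    congr 3 with a
    simp [eq1]
  · intro p
    positivity

/-- sum of reciprocals of first N odd numbers -/
noncomputable def OO (N : ℕ) : ℝ := ∑ i ∈ Finset.range N, 1 / (2 * (i : ℝ) + 1)
noncomputable def GG (N : ℕ) : ℝ := ∑ i ∈ Finset.range N, OO (i + 1) / (2 * ((i : ℝ) + 1))

lemma OO_nonneg (N : ℕ) : 0 ≤ OO N := Finset.sum_nonneg fun i _ => by positivity
lemma GG_nonneg (N : ℕ) : 0 ≤ GG N :=
  Finset.sum_nonneg fun i _ => div_nonneg (OO_nonneg _) (by positivity)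

/-- telescoping series with step `N` -/
lemma hasSum_tele (f : ℕ → ℝ) (hf : Filter.Tendsto f Filter.atTop (nhds 0)) (N : ℕ) 
    (hm : Antitone f) :
    HasSum (fun p => f p - f (p + N)) (∑ i ∈ Finset.range N, f i) := by
  rw [hasSum_iff_tendsto_nat_of_nonneg (fun i => sub_nonneg.2 (hm (Nat.le_add_right _ _)))]
  have h : ∀ n, ∑ i ∈ Finset.range n, (f i - f (i + N)) =
      ∑ i ∈ Finset.range N, f i - ∑ i ∈ Finset.range N, f (n + i) := by
    intro n
    have h1 := Finset.sum_range_add f n N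
    have h2 := Finset.sum_range_add f N n
    rw [add_comm N n] at h2
    rw [Finset.sum_sub_distrib]
    simp_rw [add_comm _ N]
    linarith
  simp_rw [h]
  have : Filter.Tendsto (fun n => ∑ i ∈ Finset.range N, f (n + i)) Filter.atTop
      (nhds (∑ i ∈ Finset.range N, 0)) :=
    tendsto_finsetSum _ fun i _ => hf.comp (Filter.tendsto_add_atTop_nat i)
  simpa using this.const_sub (∑ i ∈ Finset.range N, f i)

lemma tend_lin (r : ℝ) : Filter.Tendsto (fun p : ℕ => 1 / (2 * (p : ℝ) + r)) Filter.atTop (nhds 0) := by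
  apply Filter.Tendsto.const_div_atTop
  apply Filter.tendsto_atTop_add_const_right
  exact (tendsto_natCast_atTop_atTop).const_mul_atTop (by norm_num)

lemma anti_lin (r : ℝ) (hr : 0 < r) : Antitone (fun p : ℕ => 1 / (2 * (p : ℝ) + r)) := by
  intro p q h
  have : (p : ℝ) ≤ q := by exact_mod_cast h
  apply one_div_le_one_div_of_le <;> nlinarith [Nat.cast_nonneg (α := ℝ) p]

lemma tsum_T1 (N : ℕ) : 
    ∑' p : ℕ, ENNReal.ofReal (1 / ((2 * (p : ℝ) + 1) * (2 * p + 1 + 2 * (N + 1)))) =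
      ENNReal.ofReal (OO (N + 1) / (2 * ((N : ℝ) + 1))) := by
  have h := (hasSum_tele _ (tend_lin 1) (N + 1) (anti_lin 1 one_pos)).div_const (2 * ((N : ℝ) + 1))
  have h' : HasSum (fun p : ℕ => 1 / ((2 * (p : ℝ) + 1) * (2 * p + 1 + 2 * (N + 1))))
      (OO (N + 1) / (2 * ((N : ℝ) + 1))) := by
    have e : (fun p : ℕ => 1 / ((2 * (p : ℝ) + 1) * (2 * p + 1 + 2 * (N + 1)))) =
        fun p : ℕ => (1 / (2 * (p : ℝ) + 1) - 1 / (2 * ((p + (N + 1) : ℕ) : ℝ) + 1)) /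
          (2 * ((N : ℝ) + 1)) := by
      funext p
      push_cast
      have hp : (0:ℝ) ≤ p := Nat.cast_nonneg p
      have hN : (0:ℝ) ≤ N := Nat.cast_nonneg N
      have h1 : (2 * (p:ℝ) + 1) ≠ 0 := by positivity
      have h2 : (2 * ((p:ℝ) + (N + 1)) + 1) ≠ 0 := by positivity
      have h3 : (2 * (p:ℝ) + 1 + 2 * (N + 1)) ≠ 0 := by positivity
      have h4 : (N:ℝ) + 1 ≠ 0 := by positivity
      field_simp
      ring
    rw [e]
    exact h
  rw [← h'.tsum_eq, ENNReal.ofReal_tsum_of_nonneg (fun p => by positivity) h'.summable]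

lemma tsum_T2 (r : ℝ) (hr : 0 < r) :
    ∑' c : ℕ, ENNReal.ofReal (1 / (2 * (c : ℝ) + r) - 1 / (2 * c + r + 2)) =
      ENNReal.ofReal (1 / r) := by
  have h := hasSum_tele _ (tend_lin r) 1 (anti_lin r hr)
  have h' : HasSum (fun c : ℕ => 1 / (2 * (c : ℝ) + r) - 1 / (2 * c + r + 2)) (1 / r) := by
    convert h using 2 with p
    · push_cast; ring_nf
    · simp
  rw [← h'.tsum_eq, ENNReal.ofReal_tsum_of_nonneg _ h'.summable]
  intro c
  rw [sub_nonneg]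
  apply one_div_le_one_div_of_le <;> linarith [Nat.cast_nonneg (α := ℝ) c]

noncomputable def FF (a : ℕ) : ENNReal := ∑' b : ℕ, ∑' c : ℕ, ENNReal.ofReal
  (1 / (2 * (b : ℝ) + 1) * (1 / (2 * b + 2 * c + 2) - 1 / (2 * b + 2 * c + 2 * a + 3)))

lemma FF_succ (a : ℕ) : FF (a + 1) = FF a + ENNReal.ofReal (OO (a + 1) / (2 * ((a : ℝ) + 1))) := by
  rw [← tsum_T1, FF, FF, ← ENNReal.tsum_add]
  congr 1 with b
  have hb : (0:ℝ) ≤ b := Nat.cast_nonneg b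
  have ha : (0:ℝ) ≤ a := Nat.cast_nonneg a
  have e : (1 / ((2 * (b : ℝ) + 1) * (2 * b + 1 + 2 * (a + 1)))) =
    1 / (2 * (b : ℝ) + 1) * (1 / (2 * b + 2 * a + 3)) := by
    rw [one_div_mul_one_div]; congr 2; ring
  rw [e, ENNReal.ofReal_mul (by positivity), ← tsum_T2 (2 * b + 2 * a + 3) (by positivity), ← ENNReal.tsum_mul_left,
    ← ENNReal.tsum_add]
  congr 1 with c
  have hc : (0:ℝ) ≤ c := Nat.cast_nonneg c
  rw [← ENNReal.ofReal_mul (by positivity), ← ENNReal.ofReal_add]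
  · congr 1
    push_cast
    ring
  · apply mul_nonneg (by positivity)
    rw [sub_nonneg]
    apply one_div_le_one_div_of_le <;> linarith
  · apply mul_nonneg (by positivity)
    rw [sub_nonneg]
    apply one_div_le_one_div_of_le <;> linarith

lemma FF_eq (a : ℕ) : FF a = FF 0 + ENNReal.ofReal (GG a) := by
  induction a with
  | zero => simp [GG]
  | succ n ih =>
    rw [FF_succ, ih, add_assoc, ← ENNReal.ofReal_add (GG_nonneg n)
      (div_nonneg (OO_nonneg _) (by positivity)), GG, GG, Finset.sum_range_succ]

lemma tsum_anti (f : ℕ → ℕ → ENNReal) :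
    ∑' a, ∑' b, f a b = ∑' d, ∑ p ∈ Finset.HasAntidiagonal.antidiagonal d, f p.1 p.2 := by
  have h := (Finset.HasAntidiagonal.sigmaAntidiagonalEquivProd (A := ℕ)).tsum_eq (fun p => f p.1 p.2)
  rw [← ENNReal.tsum_prod, ← h, ENNReal.tsum_sigma']
  congr 1 with d
  rw [tsum_fintype]
  exact Finset.sum_coe_sort (Finset.HasAntidiagonal.antidiagonal d) (fun p => f p.1 p.2)

lemma tsum_anti' (f : ℕ → ℕ → ENNReal) :
    ∑' a, ∑' b, f a b = ∑' d, ∑ i ∈ Finset.range (d + 1), f (d - i) i := by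
  rw [ENNReal.tsum_comm, tsum_anti]
  congr 1 with d
  rw [Finset.Nat.sum_antidiagonal_eq_sum_range_succ (fun a b => f b a)]

noncomputable def P1 (n a b c : ℕ) : ℝ := 1 / (2 * (a : ℝ) + 1) ^ (n + 1) *
  (1 / ((2 * b + 1) * (2 * b + 2 * c + 2) * (2 * a + 2 * b + 2 * c + 3)))
noncomputable def P2 (n a b c : ℕ) : ℝ := 1 / (2 * (a : ℝ) + 2 * b + 2) ^ (n + 1) *
  (1 / ((2 * b + 1) * (2 * c + 1) * (2 * a + 2 * b + 2 * c + 3)))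
noncomputable def P3 (n a b c : ℕ) : ℝ := 1 / (2 * (a : ℝ) + 2 * b + 2 * c + 3) ^ (n + 1) *
  (1 / ((2 * b + 2 * c + 2) * (2 * c + 1) * (2 * a + 2 * b + 2 * c + 3)))
noncomputable def Q2 (n a b c : ℕ) : ℝ := 1 / (2 * (a : ℝ) + 2 * b + 2) ^ (n + 1) *
  (1 / ((2 * a + 1) * (2 * c + 1) * (2 * a + 2 * b + 2 * c + 3)))
noncomputable def Q3 (n a b c : ℕ) : ℝ := 1 / (2 * (a : ℝ) + 2 * b + 2 * c + 3) ^ (n + 1) *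
  (1 / ((2 * a + 1) * (2 * c + 1) * (2 * a + 2 * b + 2 * c + 3)))

lemma geom2 (x y : ℝ) (hx : 0 < x) (hy : x < y) (t : ℕ) :
    ∑ j ∈ Finset.range (t + 1), 1 / x ^ (t - j + 1) * (1 / y ^ (j + 1)) =
      (1 / x ^ (t + 1) - 1 / y ^ (t + 1)) / (y - x) := by
  have h0 : y - x ≠ 0 := by linarith
  have hy0 : y ≠ 0 := by linarith
  have hx0 : x ≠ 0 := hx.ne'
  induction t with
  | zero => simp; field_simp
  | succ t ih =>
    rw [Finset.sum_range_succ]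
    have : ∑ j ∈ Finset.range (t + 1), 1 / x ^ (t + 1 - j + 1) * (1 / y ^ (j + 1)) =
      (1 / x) * ∑ j ∈ Finset.range (t + 1), 1 / x ^ (t - j + 1) * (1 / y ^ (j + 1)) := by
      rw [Finset.mul_sum]
      refine Finset.sum_congr rfl fun j hj => ?_
      have hj := Finset.mem_range.1 hj
      rw [show t + 1 - j + 1 = (t - j + 1) + 1 by omega, pow_succ x (t - j + 1)]
      field_simp
    rw [this, ih]
    simp only [Nat.sub_self, zero_add, pow_one]
    field_simp
    ring

lemma pt1 (n : ℕ) (x y z : ℝ) (hx : 0 < x) (hy : x < y) (hz : y < z) :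
    ∑ i ∈ Finset.range (n + 1), ∑ j ∈ Finset.range (n - i + 1),
      1 / x ^ (n - i - j + 1) * (1 / y ^ (j + 1)) * (1 / z ^ (i + 2)) +
      1 / y ^ (n + 1) * (1 / ((y - x) * (z - y) * z)) =
      1 / x ^ (n + 1) * (1 / ((y - x) * (z - x) * z)) +
      1 / z ^ (n + 1) * (1 / ((z - x) * (z - y) * z)) := by
  have e : ∀ i ∈ Finset.range (n + 1), ∑ j ∈ Finset.range (n - i + 1),
      1 / x ^ (n - i - j + 1) * (1 / y ^ (j + 1)) * (1 / z ^ (i + 2)) =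
      (1 / (z * (y - x))) * (1 / x ^ (n - i + 1) * (1 / z ^ (i + 1)) -
        1 / y ^ (n - i + 1) * (1 / z ^ (i + 1))) := by
    intro i _
    have h0 : y - x ≠ 0 := by linarith
    have hz0 : z ≠ 0 := by linarith
    rw [← Finset.sum_mul, geom2 x y hx hy, pow_succ z (i + 1)]
    field_simp
  rw [Finset.sum_congr rfl e, ← Finset.mul_sum, Finset.sum_sub_distrib, geom2 x z hx (hy.trans hz),
    geom2 y z (hx.trans hy) hz]
  have h0 : y - x ≠ 0 := by linarith
  have h1 : z - y ≠ 0 := by linarith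
  have h2 : z - x ≠ 0 := by linarith
  have hz0 : z ≠ 0 := by linarith
  have hy0 : y ≠ 0 := by linarith
  have hx0 : x ≠ 0 := by linarith
  generalize 1 / x ^ (n + 1) = A
  generalize 1 / y ^ (n + 1) = B
  generalize 1 / z ^ (n + 1) = C
  field_simp
  ring

lemma pt2 (n : ℕ) (x y z : ℝ) (hx : 0 < x) (hy : x < y) (hz : y < z) :
    ∑ i ∈ Finset.range (n + 1), 1 / x ^ 1 * (1 / y ^ (n - i + 1)) * (1 / z ^ (i + 2)) +
      1 / z ^ (n + 1) * (1 / (x * (z - y) * z)) =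
      1 / y ^ (n + 1) * (1 / (x * (z - y) * z)) := by
  have h1 : z - y ≠ 0 := by linarith
  have hz0 : z ≠ 0 := by linarith
  have hx0 : x ≠ 0 := by linarith
  have e : ∀ i ∈ Finset.range (n + 1), 1 / x ^ 1 * (1 / y ^ (n - i + 1)) * (1 / z ^ (i + 2)) =
      (1 / (x * z)) * (1 / y ^ (n - i + 1) * (1 / z ^ (i + 1))) := by
    intro i _
    rw [pow_succ z (i + 1)]
    field_simp
  rw [Finset.sum_congr rfl e, ← Finset.mul_sum, geom2 y z (hx.trans hy) hz]
  generalize 1 / y ^ (n + 1) = B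
  generalize 1 / z ^ (n + 1) = C
  field_simp
  ring

lemma term3_nonneg (x y z a b c : ℕ) : 0 ≤ term3 x y z a b c := by
  unfold term3; positivity

lemma pt1' (n a b c : ℕ) :
    ∑ i ∈ Finset.range (n + 1), ∑ j ∈ Finset.range (n - i + 1),
      ENNReal.ofReal (term3 (n - i - j + 1) (j + 1) (i + 2) a b c) + ENNReal.ofReal (P2 n a b c) =
      ENNReal.ofReal (P1 n a b c) + ENNReal.ofReal (P3 n a b c) := by
  have ha : (0:ℝ) ≤ a := Nat.cast_nonneg a
  have hb : (0:ℝ) ≤ b := Nat.cast_nonneg b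
  have hc : (0:ℝ) ≤ c := Nat.cast_nonneg c
  have h := pt1 n (2 * (a : ℝ) + 1) (2 * (a : ℝ) + 2 * b + 2) (2 * (a : ℝ) + 2 * b + 2 * c + 3)
    (by linarith) (by linarith) (by linarith)
  have e : ∀ i ∈ Finset.range (n + 1), ∑ j ∈ Finset.range (n - i + 1),
      ENNReal.ofReal (term3 (n - i - j + 1) (j + 1) (i + 2) a b c) =
      ENNReal.ofReal (∑ j ∈ Finset.range (n - i + 1), (term3 (n - i - j + 1) (j + 1) (i + 2) a b c)) :=
    fun i _ => (ENNReal.ofReal_sum_of_nonneg fun j _ => term3_nonneg ..).symm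
  rw [Finset.sum_congr rfl e, ← ENNReal.ofReal_sum_of_nonneg
    (fun i _ => Finset.sum_nonneg fun j _ => term3_nonneg ..), ← ENNReal.ofReal_add
    (Finset.sum_nonneg fun i _ => Finset.sum_nonneg fun j _ => term3_nonneg ..) (by unfold P2; positivity),
    ← ENNReal.ofReal_add (by unfold P1; positivity) (by unfold P3; positivity)]
  congr 1
  unfold term3 P1 P2 P3
  convert h using 5 <;> ring

lemma pt2' (n a b c : ℕ) :
    ∑ i ∈ Finset.range (n + 1), 
      ENNReal.ofReal (term3 1 (n - i + 1) (i + 2) a b c) + ENNReal.ofReal (Q3 n a b c) =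
      ENNReal.ofReal (Q2 n a b c) := by
  have ha : (0:ℝ) ≤ a := Nat.cast_nonneg a
  have hb : (0:ℝ) ≤ b := Nat.cast_nonneg b
  have hc : (0:ℝ) ≤ c := Nat.cast_nonneg c
  have h := pt2 n (2 * (a : ℝ) + 1) (2 * (a : ℝ) + 2 * b + 2) (2 * (a : ℝ) + 2 * b + 2 * c + 3)
    (by linarith) (by linarith) (by linarith)
  rw [← ENNReal.ofReal_sum_of_nonneg
    (fun i _ => term3_nonneg ..), ← ENNReal.ofReal_add
    (Finset.sum_nonneg fun i _ => term3_nonneg ..) (by unfold Q3; positivity)]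
  congr 1
  unfold term3 Q2 Q3
  convert h using 5 <;> ring

noncomputable def tot (f : ℕ → ℕ → ℕ → ℝ) : ENNReal := 
  ∑' a : ℕ, ∑' b : ℕ, ∑' c : ℕ, ENNReal.ofReal (f a b c)

lemma tot_sum {ι : Type*} (s : Finset ι) (f : ι → ℕ → ℕ → ℕ → ℝ) :
    ∑ i ∈ s, tot (f i) =
     ∑' a : ℕ, ∑' b : ℕ, ∑' c : ℕ, ∑ i ∈ s, ENNReal.ofReal (f i a b c) := by
  unfold tot
  simp_rw [Summable.tsum_finsetSum (fun _ _ => ENNReal.summable)]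

lemma tot1 (n : ℕ) : ∑ i ∈ Finset.range (n + 1), ∑ j ∈ Finset.range (n - i + 1),
      tot (term3 (n - i - j + 1) (j + 1) (i + 2)) + tot (P2 n) = tot (P1 n) + tot (P3 n) := by
  have e := Finset.sum_sigma (Finset.range (n + 1)) (fun i => Finset.range (n - i + 1))
    (fun p => tot (term3 (n - p.1 - p.2 + 1) (p.2 + 1) (p.1 + 2)))
  rw [← e, tot_sum]
  unfold tot
  simp_rw [← ENNReal.tsum_add]
  congr 1 with a
  congr 1 with b
  congr 1 with c
  rw [← pt1', Finset.sum_sigma]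

lemma tot2 (n : ℕ) : ∑ i ∈ Finset.range (n + 1), 
      tot (term3 1 (n - i + 1) (i + 2)) + tot (Q3 n) = tot (Q2 n) := by
  rw [tot_sum]
  unfold tot
  simp_rw [← ENNReal.tsum_add]
  congr 1 with a
  congr 1 with b
  congr 1 with c
  rw [← pt2']

lemma totP2Q2 (n : ℕ) : tot (P2 n) = tot (Q2 n) := by
  unfold tot
  rw [ENNReal.tsum_comm]
  congr 1 with a
  congr 1 with b
  congr 1 with c
  unfold P2 Q2
  congr 1
  rw [show 2 * (b : ℝ) + 2 * a + 2 = 2 * (a : ℝ) + 2 * b + 2 by ring,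
    show 2 * (b : ℝ) + 2 * a + 2 * c + 3 = 2 * (a : ℝ) + 2 * b + 2 * c + 3 by ring]

lemma totP1 (n : ℕ) : tot (P1 n) = FF 0 * ∑' a : ℕ, ENNReal.ofReal (1 / (2 * (a : ℝ) + 1) ^ (n + 2)) +
    ∑' a : ℕ, ENNReal.ofReal (1 / (2 * (a : ℝ) + 1) ^ (n + 2) * GG a) := by
  rw [← ENNReal.tsum_mul_left, ← ENNReal.tsum_add]
  unfold tot
  congr 1 with a
  rw [ENNReal.ofReal_mul (by positivity), mul_comm, ← mul_add, ← FF_eq, FF, ← ENNReal.tsum_mul_left]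
  congr 1 with b
  rw [← ENNReal.tsum_mul_left]
  congr 1 with c
  rw [← ENNReal.ofReal_mul (by positivity), P1]
  congr 1
  have ha : (0:ℝ) ≤ a := Nat.cast_nonneg a
  have hb : (0:ℝ) ≤ b := Nat.cast_nonneg b
  have hc : (0:ℝ) ≤ c := Nat.cast_nonneg c
  rw [show 2 * (b : ℝ) + 2 * c + 2 * a + 3 = 2 * (a : ℝ) + 2 * b + 2 * c + 3 by ring, pow_succ _ (n + 1)]
  have h1 : 2 * (a : ℝ) + 1 ≠ 0 := by positivity
  have h2 : 2 * (b : ℝ) + 1 ≠ 0 := by positivity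
  have h3 : 2 * (b : ℝ) + 2 * c + 2 ≠ 0 := by positivity
  have h4 : 2 * (a : ℝ) + 2 * b + 2 * c + 3 ≠ 0 := by positivity
  rw [div_sub_div _ _ h3 h4]
  generalize hw : 2 * (a : ℝ) + 2 * b + 2 * c + 3 = w at h4 ⊢
  have h3' : 2 * ((b : ℝ) + c + 1) ≠ 0 := by convert h3 using 1; ring
  field_simp
  linarith

lemma GG_shift (n : ℕ) : ∑' d : ℕ, ENNReal.ofReal (1 / (2 * (d : ℝ) + 3) ^ (n + 2) * GG (d + 1)) =
    ∑' a : ℕ, ENNReal.ofReal (1 / (2 * (a : ℝ) + 1) ^ (n + 2) * GG a) := by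
  rw [tsum_eq_zero_add' (f := fun a : ℕ => ENNReal.ofReal (1 / (2 * (a : ℝ) + 1) ^ (n + 2) * GG a))
    ENNReal.summable]
  simp only [GG, Finset.range_zero, Finset.sum_empty, mul_zero, ENNReal.ofReal_zero, zero_add]
  congr 1 with d
  push_cast
  rw [show 2 * ((d : ℝ) + 1) + 1 = 2 * (d : ℝ) + 3 by ring]

lemma anti_GG (n : ℕ) :
    ∑' a : ℕ, ∑' e : ℕ, ENNReal.ofReal (1 / (2 * (a : ℝ) + 2 * e + 3) ^ (n + 2) *
      (OO (e + 1) / (2 * ((e : ℝ) + 1)))) =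
    ∑' a : ℕ, ENNReal.ofReal (1 / (2 * (a : ℝ) + 1) ^ (n + 2) * GG a) := by
  rw [← GG_shift, tsum_anti']
  congr 1 with d
  rw [GG, Finset.mul_sum, ENNReal.ofReal_sum_of_nonneg
    (fun i _ => mul_nonneg (by positivity) (div_nonneg (OO_nonneg _) (by positivity)))]
  refine Finset.sum_congr rfl fun i hi => ?_
  have hi := Finset.mem_range.1 hi
  rw [Nat.cast_sub (by omega)]
  congr 4
  ring

lemma totP3 (n : ℕ) : tot (P3 n) =
    ∑' a : ℕ, ENNReal.ofReal (1 / (2 * (a : ℝ) + 1) ^ (n + 2) * GG a) := by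
  rw [← anti_GG]
  unfold tot
  congr 1 with a
  rw [tsum_anti']
  congr 1 with e
  rw [OO, Finset.sum_div, Finset.mul_sum, ENNReal.ofReal_sum_of_nonneg (fun i _ => by positivity)]
  refine Finset.sum_congr rfl fun i hi => ?_
  have hi := Finset.mem_range.1 hi
  rw [P3, Nat.cast_sub (by omega), show 2 * (a : ℝ) + 2 * (e - i) + 2 * i + 3 = 2 * a + 2 * e + 3 by ring,
    show 2 * ((e : ℝ) - i) + 2 * i + 2 = 2 * (e + 1) by ring, pow_succ _ (n + 1)]
  congr 1
  have h1 : 2 * (a : ℝ) + 2 * e + 3 ≠ 0 := by positivity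
  generalize 2 * (a : ℝ) + 2 * e + 3 = w at *
  field_simp

lemma totQ3 (n : ℕ) : tot (Q3 n) =
    2 * ∑' a : ℕ, ENNReal.ofReal (1 / (2 * (a : ℝ) + 1) ^ (n + 2) * GG a) := by
  rw [← anti_GG, ← ENNReal.tsum_mul_left]
  unfold tot
  rw [ENNReal.tsum_comm]
  congr 1 with b
  rw [tsum_anti', ← ENNReal.tsum_mul_left]
  congr 1 with e
  rw [show (2 : ENNReal) = ENNReal.ofReal 2 by simp, ← ENNReal.ofReal_mul (by norm_num)]
  have key : 2 * (OO (e + 1) / (2 * ((e : ℝ) + 1))) =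
      ∑ i ∈ Finset.range (e + 1), 1 / (2 * ((e - i : ℕ) : ℝ) + 1) * (1 / (2 * (i : ℝ) + 1)) := by
    have h2 : OO (e + 1) = ∑ i ∈ Finset.range (e + 1), 1 / (2 * ((e - i : ℕ) : ℝ) + 1) := by
      rw [OO, ← Finset.sum_range_reflect]
      refine Finset.sum_congr rfl fun i hi => ?_
      rw [show e + 1 - 1 - i = e - i by omega]
    have h3 : 2 * (OO (e + 1) / (2 * ((e : ℝ) + 1))) = (OO (e + 1) + OO (e + 1)) / (2 * ((e : ℝ) + 1)) := by
      ring
    rw [h3]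
    nth_rewrite 1 [h2]
    rw [OO, ← Finset.sum_add_distrib, Finset.sum_div]
    refine Finset.sum_congr rfl fun i hi => ?_
    have hi := Finset.mem_range.1 hi
    obtain ⟨r, rfl⟩ : ∃ r, e = i + r := ⟨e - i, by omega⟩
    rw [Nat.add_sub_cancel_left]
    push_cast
    have : (i : ℝ) + r + 1 ≠ 0 := by positivity
    field_simp
    ring
  rw [mul_left_comm, key, Finset.mul_sum, ENNReal.ofReal_sum_of_nonneg (fun i _ => by positivity)]
  refine Finset.sum_congr rfl fun i hi => ?_
  have hi := Finset.mem_range.1 hi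
  obtain ⟨r, rfl⟩ : ∃ r, e = i + r := ⟨e - i, by omega⟩
  rw [Nat.add_sub_cancel_left, Q3]
  push_cast
  rw [show 2 * (r : ℝ) + 2 * b + 2 * i + 3 = 2 * b + 2 * (i + r) + 3 by ring, pow_succ _ (n + 1)]
  congr 1
  have h1 : 2 * (b : ℝ) + 2 * (i + r) + 3 ≠ 0 := by positivity
  generalize 2 * (b : ℝ) + 2 * (i + r) + 3 = w at *
  field_simp

lemma totP2 (n : ℕ) : tot (P2 n) = ∑' d : ℕ,
    ENNReal.ofReal (1 / (2 * ((d : ℝ) + 1)) ^ (n + 2) * OO (d + 1) ^ 2) := by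
  unfold tot
  rw [tsum_anti']
  congr 1 with d
  have e : ∀ i ∈ Finset.range (d + 1), ∑' c : ℕ, ENNReal.ofReal (P2 n (d - i) i c) =
      ENNReal.ofReal (1 / (2 * ((d : ℝ) + 1)) ^ (n + 2) * OO (d + 1) * (1 / (2 * (i : ℝ) + 1))) := by
    intro i hi
    have hi := Finset.mem_range.1 hi
    have e1 : 1 / (2 * ((d : ℝ) + 1)) ^ (n + 2) * OO (d + 1) * (1 / (2 * (i : ℝ) + 1)) =
      (1 / (2 * ((d : ℝ) + 1)) ^ (n + 1) * (1 / (2 * (i : ℝ) + 1))) * (OO (d + 1) / (2 * ((d : ℝ) + 1))) := by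
      rw [pow_succ _ (n + 1)]
      field_simp
    rw [e1, ENNReal.ofReal_mul (by positivity), ← tsum_T1, ← ENNReal.tsum_mul_left]
    congr 1 with c
    rw [← ENNReal.ofReal_mul (by positivity), P2, Nat.cast_sub (by omega),
      show 2 * ((d : ℝ) - i) + 2 * i + 2 = 2 * (d + 1) by ring,
      show 2 * ((d : ℝ) - i) + 2 * i + 2 * c + 3 = 2 * c + 1 + 2 * (d + 1) by ring]
    congr 1
    field_simp
  rw [Finset.sum_congr rfl e, ← ENNReal.ofReal_sum_of_nonneg
    (fun i _ => mul_nonneg (mul_nonneg (by positivity) (OO_nonneg _)) (by positivity)), ← Finset.mul_sum]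
  congr 1
  change _ * OO (d + 1) = _
  ring

lemma OO_le (N : ℕ) : OO (N + 1) ≤ 8 * ((N : ℝ) + 1) ^ (1 / 4 : ℝ) := by
  have h1 : OO (N + 1) ≤ 1 + Real.log ((N : ℝ) + 1) := by
    have := harmonic_le_one_add_log (N + 1)
    push_cast at this
    refine le_trans ?_ this
    rw [harmonic, OO]
    push_cast
    refine Finset.sum_le_sum fun i _ => ?_
    rw [← one_div]
    apply one_div_le_one_div_of_le <;> linarith [Nat.cast_nonneg (α := ℝ) i]
  have h2 := Real.log_le_rpow_div (x := (N : ℝ) + 1) (by positivity) (ε := 1 / 4) (by norm_num)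
  have h3 : (1 : ℝ) ≤ ((N : ℝ) + 1) ^ (1 / 4 : ℝ) := 
    Real.one_le_rpow (by linarith [Nat.cast_nonneg (α := ℝ) N]) (by norm_num)
  linarith

lemma OO_sq (N : ℕ) : OO (N + 1) ^ 2 ≤ 64 * ((N : ℝ) + 1) ^ (1 / 2 : ℝ) := by
  have h := pow_le_pow_left₀ (OO_nonneg _) (OO_le N) 2
  rw [mul_pow, ← Real.rpow_natCast (_ ^ _), ← Real.rpow_mul (by positivity)] at h
  norm_num at h ⊢
  exact h

lemma OO_mono : Monotone OO := fun a b h => by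
  unfold OO
  exact Finset.sum_le_sum_of_subset_of_nonneg (by simpa using h) fun i _ _ => by positivity

lemma GG_le (N : ℕ) : GG (N + 1) ≤ OO (N + 1) ^ 2 := by
  have e : OO (N + 1) * OO (N + 1) =
      ∑ i ∈ Finset.range (N + 1), OO (N + 1) * (1 / (2 * (i : ℝ) + 1)) := by
    rw [← Finset.mul_sum]; rfl
  rw [GG, pow_two, e]
  refine Finset.sum_le_sum fun i hi => ?_
  have hi := Finset.mem_range.1 hi
  rw [div_eq_mul_one_div]
  apply mul_le_mul (OO_mono (by omega)) _ (by positivity) (OO_nonneg _)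
  apply one_div_le_one_div_of_le (by positivity)
  linarith

lemma summ_bd : Summable (fun d : ℕ => 64 * (1 / ((d : ℝ) + 1) ^ (3 / 2 : ℝ))) := by
  have h := (Real.summable_one_div_nat_rpow (p := 3 / 2)).2 (by norm_num)
  have h := (summable_nat_add_iff 1).2 h
  push_cast at h
  exact h.mul_left 64

lemma bd_aux (n d : ℕ) (w x : ℝ) (hw : (d : ℝ) + 1 ≤ w) (hx : x ≤ OO (d + 1) ^ 2) :
    1 / w ^ (n + 2) * x ≤ 64 * (1 / ((d : ℝ) + 1) ^ (3 / 2 : ℝ)) := by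
  have hd : (0:ℝ) ≤ d := Nat.cast_nonneg d
  have h1 : 1 / w ^ (n + 2) ≤ 1 / ((d : ℝ) + 1) ^ 2 := by
    apply one_div_le_one_div_of_le (by positivity)
    calc ((d : ℝ) + 1) ^ 2 ≤ ((d : ℝ) + 1) ^ (n + 2) := pow_le_pow_right₀ (by linarith) (by omega)
      _ ≤ _ := pow_le_pow_left₀ (by positivity) hw _
  have hw0 : 0 < w := by linarith
  calc 1 / w ^ (n + 2) * x ≤ 1 / w ^ (n + 2) * (64 * ((d : ℝ) + 1) ^ (1 / 2 : ℝ)) :=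
        mul_le_mul_of_nonneg_left (hx.trans (OO_sq d)) (by positivity)
    _ ≤ 1 / ((d : ℝ) + 1) ^ 2 * (64 * ((d : ℝ) + 1) ^ (1 / 2 : ℝ)) :=
        mul_le_mul_of_nonneg_right h1 (by positivity)
    _ = _ := by
      have : ((d : ℝ) + 1) ^ 2 = ((d : ℝ) + 1) ^ (3 / 2 : ℝ) * ((d : ℝ) + 1) ^ (1 / 2 : ℝ) := by
        rw [← Real.rpow_add (by positivity), ← Real.rpow_natCast]
        norm_num
      rw [this]
      have h2 : ((d : ℝ) + 1) ^ (1 / 2 : ℝ) ≠ 0 := by positivity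
      have h3 : ((d : ℝ) + 1) ^ (3 / 2 : ℝ) ≠ 0 := by positivity
      field_simp

lemma totP2_fin (n : ℕ) : tot (P2 n) ≠ ⊤ := by
  rw [totP2]
  refine ne_top_of_le_ne_top summ_bd.tsum_ofReal_ne_top (ENNReal.tsum_le_tsum fun d => ?_)
  apply ENNReal.ofReal_le_ofReal
  exact bd_aux n d _ _ (by linarith [Nat.cast_nonneg (α := ℝ) d]) le_rfl

lemma G_fin (n : ℕ) : ∑' a : ℕ, ENNReal.ofReal (1 / (2 * (a : ℝ) + 1) ^ (n + 2) * GG a) ≠ ⊤ := by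
  rw [← GG_shift]
  refine ne_top_of_le_ne_top summ_bd.tsum_ofReal_ne_top (ENNReal.tsum_le_tsum fun d => ?_)
  apply ENNReal.ofReal_le_ofReal
  exact bd_aux n d _ _ (by linarith [Nat.cast_nonneg (α := ℝ) d]) (GG_le d)

lemma tot_main (n : ℕ) :
    ∑ i ∈ Finset.range (n + 1), ∑ j ∈ Finset.range (n - i + 1),
      tot (term3 (n - i - j + 1) (j + 1) (i + 2)) +
    ∑ i ∈ Finset.range (n + 1), tot (term3 1 (n - i + 1) (i + 2)) =
    FF 0 * ∑' a : ℕ, ENNReal.ofReal (1 / (2 * (a : ℝ) + 1) ^ (n + 2)) := by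
  have h1 := tot1 n
  have h2 := tot2 n
  rw [totP1, totP3] at h1
  rw [totQ3, ← totP2Q2] at h2
  have hG := G_fin n
  have hP := totP2_fin n
  generalize (∑' a : ℕ, ENNReal.ofReal (1 / (2 * (a : ℝ) + 1) ^ (n + 2) * GG a)) = G at *
  generalize tot (P2 n) = P at *
  have hne : P + 2 * G ≠ ⊤ := ENNReal.add_ne_top.2 ⟨hP, ENNReal.mul_ne_top (by simp) hG⟩
  rw [← ENNReal.add_left_inj hne]
  calc _ = (∑ i ∈ Finset.range (n + 1), ∑ j ∈ Finset.range (n - i + 1),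
      tot (term3 (n - i - j + 1) (j + 1) (i + 2)) + P) +
    (∑ i ∈ Finset.range (n + 1), tot (term3 1 (n - i + 1) (i + 2)) + 2 * G) := by ring
   _ = _ := by rw [h1, h2]; ring

lemma hasSum_odd_sq : HasSum (fun n : ℕ => 1 / (2 * (n : ℝ) + 1) ^ 2) (Real.pi ^ 2 / 8) := by
  have h := hasSum_zeta_two
  have he : HasSum (fun n : ℕ => 1 / (((2 * n : ℕ) : ℝ)) ^ 2) (Real.pi ^ 2 / 24) := by
    have := h.div_const 4
    convert! this using 1
    · funext n; push_cast; ring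
    · ring
  have hs : Summable (fun n : ℕ => 1 / (((2 * n + 1 : ℕ) : ℝ)) ^ 2) :=
    h.summable.comp_injective (i := fun n : ℕ => 2 * n + 1) (fun a b hab => by simpa using hab)
  have h3 := (he.even_add_odd (f := fun n : ℕ => 1 / ((n : ℝ)) ^ 2) hs.hasSum).unique h
  have h4 := hs.hasSum
  rw [show ∑' n : ℕ, 1 / (((2 * n + 1 : ℕ) : ℝ)) ^ 2 = Real.pi ^ 2 / 8 by linarith] at h4
  push_cast at h4
  exact h4

lemma hasSum_even_sq : HasSum (fun n : ℕ => 1 / (2 * (n : ℝ) + 2) ^ 2) (Real.pi ^ 2 / 24) := by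
  have h := hasSum_zeta_two.div_const 4
  rw [← hasSum_nat_add_iff' 1] at h
  convert! h using 1
  · funext n; push_cast
    rw [show 2 * (n : ℝ) + 2 = 2 * (n + 1) by ring]
    field_simp
    norm_num
  · simp; ring

/-- The alternating dilogarithm series. -/
noncomputable def DD (y : ℝ) : ℝ := ∑' n : ℕ, (-1) ^ n * y ^ (n + 1) / ((n : ℝ) + 1) ^ 2

lemma DD_zero : DD 0 = 0 := by simp [DD]

lemma DD_one : DD 1 = Real.pi ^ 2 / 12 := by
  unfold DD
  apply HasSum.tsum_eq
  have := HasSum.even_add_odd (f := fun n : ℕ => (-1) ^ n * (1:ℝ) ^ (n + 1) / ((n : ℝ) + 1) ^ 2)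
    (m := Real.pi ^ 2 / 8) (m' := - (Real.pi ^ 2 / 24)) ?_ ?_
  · convert! this using 1; ring
  · convert! hasSum_odd_sq using 1
    funext n
    simp
  · convert! hasSum_even_sq.neg using 1
    funext n
    have e : (((2 * n + 1 : ℕ) : ℝ) + 1) = 2 * n + 2 := by push_cast; ring
    rw [e, one_pow, pow_succ, pow_mul]
    norm_num
    ring

lemma DD_cont : ContinuousOn DD (Set.Icc 0 1) := by
  unfold DD
  have hs : Summable (fun n : ℕ => 1 / ((n : ℝ) + 1) ^ 2) := by
    have := (summable_nat_add_iff 1).2 hasSum_zeta_two.summable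
    push_cast at this
    exact this
  refine continuousOn_tsum (fun n => ?_) hs ?_
  · fun_prop
  · intro n y hy
    rw [norm_div, norm_mul, norm_pow, norm_pow, norm_neg, norm_one, one_pow, one_mul, norm_pow]
    have h1 : ‖y‖ ≤ 1 := by rw [Real.norm_eq_abs, abs_le]; constructor <;> linarith [hy.1, hy.2]
    have h2 : ‖(n : ℝ) + 1‖ = n + 1 := by rw [Real.norm_eq_abs, abs_of_nonneg (by positivity)]
    rw [h2]
    gcongr
    exact pow_le_one₀ (norm_nonneg _) h1

lemma DD_deriv (y : ℝ) (h0 : 0 < y) (h1 : y < 1) : HasDerivAt DD (Real.log (1 + y) / y) y := by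
  obtain ⟨r, hr1, hr2⟩ := exists_between h1
  have hsum : ∑' n : ℕ, (-1) ^ n * y ^ n / ((n : ℝ) + 1) = Real.log (1 + y) / y := by
    have h := Real.hasSum_pow_div_log_of_abs_lt_one (x := -y) (by rw [abs_neg, abs_of_pos h0]; exact h1)
    have h := (h.neg).div_const y
    apply HasSum.tsum_eq
    convert! h using 1
    · funext n
      rw [neg_pow y (n + 1), pow_succ, pow_succ]
      field_simp
    · simp
  rw [← hsum]
  unfold DD
  refine hasDerivAt_tsum_of_isPreconnected (u := fun n => r ^ n) (t := Set.Ioo 0 r)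
    (summable_geometric_of_lt_one (by linarith) hr2) isOpen_Ioo isPreconnected_Ioo
    (g := fun (n : ℕ) y => (-1) ^ n * y ^ (n + 1) / ((n : ℝ) + 1) ^ 2)
    (g' := fun (n : ℕ) y => (-1) ^ n * y ^ n / ((n : ℝ) + 1)) ?_ ?_ (y₀ := y) ⟨h0, hr1⟩ ?_ ⟨h0, hr1⟩
  · intro n z hz
    have := (((hasDerivAt_pow (n + 1) z).const_mul ((-1 : ℝ) ^ n)).div_const (((n : ℝ) + 1) ^ 2))
    convert! this using 1
    push_cast
    field_simp
  · intro n z hz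
    rw [norm_div, norm_mul, norm_pow, norm_neg, norm_one, one_pow, one_mul, norm_pow]
    have h2 : ‖(n : ℝ) + 1‖ = n + 1 := by rw [Real.norm_eq_abs, abs_of_nonneg (by positivity)]
    rw [h2, Real.norm_eq_abs, abs_of_pos hz.1]
    calc z ^ n / ((n : ℝ) + 1) ≤ z ^ n := div_le_self (pow_nonneg hz.1.le _) (by linarith [Nat.cast_nonneg (α := ℝ) n])
      _ ≤ r ^ n := pow_le_pow_left₀ hz.1.le hz.2.le _
  · have hs : Summable (fun n : ℕ => y ^ n) := summable_geometric_of_lt_one h0.le h1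
    refine Summable.of_norm_bounded hs fun n => ?_
    rw [norm_div, norm_mul, norm_pow, norm_pow, norm_neg, norm_one, one_pow, one_mul, norm_pow,
      Real.norm_eq_abs, abs_of_pos h0]
    have h2 : ‖(n : ℝ) + 1‖ = n + 1 := by rw [Real.norm_eq_abs, abs_of_nonneg (by positivity)]
    rw [h2]
    have h3 : y ^ (n + 1) ≤ y ^ n := pow_le_pow_of_le_one h0.le h1.le (by omega)
    refine le_trans (div_le_self (by positivity) ?_) h3
    nlinarith [Nat.cast_nonneg (α := ℝ) n]

noncomputable def gg (x : ℝ) : ℝ := 1 / 2 * ((Real.log (1 + x) - Real.log (1 - x)) *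
  (Real.log (1 + x) - Real.log 2) - DD ((1 - x) / (1 + x)))

lemma gg_deriv (x : ℝ) (h0 : 0 < x) (h1 : x < 1) :
    HasDerivAt gg (1 / 2 * (Real.log (1 + x) - Real.log (1 - x)) / (1 + x)) x := by
  have a1 : HasDerivAt (fun x : ℝ => 1 + x) 1 x := (hasDerivAt_id x).const_add 1
  have a2 : HasDerivAt (fun x : ℝ => 1 - x) (-1) x := (hasDerivAt_id x).const_sub 1
  have p1 : 1 + x ≠ 0 := by linarith
  have p2 : 1 - x ≠ 0 := by linarith
  have l1 := a1.log p1
  have l2 := a2.log p2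
  have y := a2.div a1 p1
  have hy0 : 0 < (1 - x) / (1 + x) := div_pos (by linarith) (by linarith)
  have hy1 : (1 - x) / (1 + x) < 1 := by rw [div_lt_one (by linarith)]; linarith
  have d := (DD_deriv _ hy0 hy1).comp x y
  have e : Real.log (1 + (1 - x) / (1 + x)) = Real.log 2 - Real.log (1 + x) := by
    rw [← Real.log_div (by norm_num) p1]; congr 1; field_simp; ring
  rw [e] at d
  have t := (((l1.sub l2).mul (l1.sub_const (Real.log 2))).sub d).const_mul (1 / 2)
  refine (t.congr_deriv ?_)
  simp only [Pi.sub_apply]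
  generalize Real.log (1 + x) = A
  generalize Real.log (1 - x) = B
  generalize Real.log 2 = C
  field_simp
  ring

lemma gg_cont : ContinuousOn gg (Set.Icc 0 1) := by
  have hD : ContinuousOn (fun x : ℝ => DD ((1 - x) / (1 + x))) (Set.Icc 0 1) := by
    refine DD_cont.comp (t := Set.Icc 0 1) ?_ ?_
    · refine ContinuousOn.div (by fun_prop) (by fun_prop) ?_
      intro x hx
      linarith [hx.1]
    · intro x hx
      have := hx.1
      have := hx.2
      refine ⟨div_nonneg (by linarith) (by linarith), ?_⟩
      rw [div_le_one (by linarith)]; linarith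
  have hL : ContinuousOn (fun x : ℝ => Real.log (1 + x)) (Set.Icc 0 1) := by
    refine ContinuousOn.log (by fun_prop) ?_
    intro x hx
    linarith [hx.1]
  have hB : ContinuousOn (fun x : ℝ => Real.log (1 - x) * (Real.log (1 + x) - Real.log 2))
      (Set.Icc 0 1) := by
    intro x hx
    rcases hx.2.lt_or_eq with h | h
    · refine ContinuousWithinAt.mul ?_ ((hL x hx).sub continuousWithinAt_const)
      refine ContinuousWithinAt.log (by fun_prop) (by linarith)
    · subst h
      unfold ContinuousWithinAt
      simp only [sub_self, Real.log_zero, zero_mul]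
      have hc : Filter.Tendsto (fun x : ℝ => |(1 - x) * Real.log (1 - x)|)
          (nhdsWithin 1 (Set.Icc 0 1)) (nhds 0) := by
        have c : Continuous (fun x : ℝ => |(1 - x) * Real.log (1 - x)|) :=
          (Real.continuous_mul_log.comp (by fun_prop : Continuous fun x : ℝ => 1 - x)).abs
        have := (c.tendsto 1).mono_left (nhdsWithin_le_nhds (s := Set.Icc 0 1))
        simpa using this
      refine squeeze_zero_norm' ?_ hc
      filter_upwards [self_mem_nhdsWithin] with x hx
      have h0 := hx.1
      have h1 := hx.2
      rw [Real.norm_eq_abs, abs_mul, abs_mul, mul_comm]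
      refine mul_le_mul_of_nonneg_right ?_ (abs_nonneg _)
      have u1 : Real.log (1 + x) ≤ Real.log 2 := Real.log_le_log (by linarith) (by linarith)
      have u2 : Real.log 2 - Real.log (1 + x) ≤ 1 - x := by
        rw [← Real.log_div (by norm_num) (by linarith)]
        refine (Real.log_le_sub_one_of_pos (by positivity)).trans ?_
        rw [sub_le_iff_le_add, div_le_iff₀ (by linarith)]
        nlinarith
      rw [abs_of_nonpos (by linarith), abs_of_nonneg (by linarith)]
      linarith
  have := (((hL.mul (hL.sub (continuousOn_const (c := Real.log 2)))).sub hB).sub hD).const_mul (1 / 2)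
  refine this.congr fun x _ => ?_
  simp only [gg, Pi.sub_apply, Pi.mul_apply]
  ring

lemma log_int : ∫⁻ x in Set.Ioo (0:ℝ) 1,
    ENNReal.ofReal (1 / 2 * (Real.log (1 + x) - Real.log (1 - x)) / (1 + x)) =
      ENNReal.ofReal (Real.pi ^ 2 / 24) := by
  have hpos : ∀ x ∈ Set.Ioo (0:ℝ) 1, 0 ≤ 1 / 2 * (Real.log (1 + x) - Real.log (1 - x)) / (1 + x) := by
    intro x hx
    have h0 := hx.1
    have h1 := hx.2
    have : Real.log (1 - x) ≤ Real.log (1 + x) := Real.log_le_log (by linarith) (by linarith)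
    apply div_nonneg <;> linarith
  have hi : MeasureTheory.IntegrableOn
      (fun x => 1 / 2 * (Real.log (1 + x) - Real.log (1 - x)) / (1 + x)) (Set.Ioc (0:ℝ) 1) :=
    intervalIntegral.integrableOn_deriv_of_nonneg gg_cont
      (fun x hx => gg_deriv x hx.1 hx.2) hpos
  have hI := intervalIntegral.integral_eq_sub_of_hasDerivAt_of_le zero_le_one gg_cont
      (fun x hx => gg_deriv x hx.1 hx.2) ((intervalIntegrable_iff_integrableOn_Ioc_of_le zero_le_one).2 hi)
  rw [intervalIntegral.integral_of_le zero_le_one, MeasureTheory.integral_Ioc_eq_integral_Ioo] at hI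
  rw [← MeasureTheory.ofReal_integral_eq_lintegral_ofReal (hi.mono_set Set.Ioo_subset_Ioc_self)
    (MeasureTheory.ae_restrict_of_forall_mem measurableSet_Ioo hpos), hI]
  congr 1
  simp [gg, DD_zero, DD_one]
  ring

lemma mono_int (b c : ℕ) : 
    ENNReal.ofReal (1 / (2 * (b : ℝ) + 1) * (1 / (2 * b + 2 * c + 2) - 1 / (2 * b + 2 * c + 2 * (0 : ℕ) + 3))) =
    ∫⁻ x in Set.Ioo (0:ℝ) 1,
      ENNReal.ofReal (1 / (2 * (b : ℝ) + 1) * (x ^ (2 * b + 2 * c + 1) - x ^ (2 * b + 2 * c + 2))) := by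
  have hi : IntervalIntegrable (fun x : ℝ => 1 / (2 * (b : ℝ) + 1) *
      (x ^ (2 * b + 2 * c + 1) - x ^ (2 * b + 2 * c + 2))) MeasureTheory.volume 0 1 := 
    Continuous.intervalIntegrable (by fun_prop) _ _
  have hi' := (intervalIntegrable_iff_integrableOn_Ioo_of_le zero_le_one).1 hi
  rw [← MeasureTheory.ofReal_integral_eq_lintegral_ofReal hi'
    (MeasureTheory.ae_restrict_of_forall_mem measurableSet_Ioo ?_)]
  · congr 1
    rw [← MeasureTheory.integral_Ioc_eq_integral_Ioo, ← intervalIntegral.integral_of_le zero_le_one,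
      intervalIntegral.integral_const_mul, intervalIntegral.integral_sub
        (Continuous.intervalIntegrable (by fun_prop) _ _)
        (Continuous.intervalIntegrable (by fun_prop) _ _), integral_pow, integral_pow]
    simp
    left
    ring_nf
  · intro x hx
    apply mul_nonneg (by positivity)
    rw [sub_nonneg]
    exact pow_le_pow_of_le_one hx.1.le hx.2.le (by omega)

lemma FF_zero : FF 0 = ENNReal.ofReal (Real.pi ^ 2 / 24) := by
  unfold FF
  simp_rw [mono_int]
  rw [← log_int]
  have hm : ∀ b c : ℕ, Measurable (fun x : ℝ => ENNReal.ofReal (1 / (2 * (b : ℝ) + 1) *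
      (x ^ (2 * b + 2 * c + 1) - x ^ (2 * b + 2 * c + 2)))) := by
    intro b c
    fun_prop
  have e : ∀ b : ℕ, ∑' c : ℕ, ∫⁻ x in Set.Ioo (0:ℝ) 1, ENNReal.ofReal (1 / (2 * (b : ℝ) + 1) *
      (x ^ (2 * b + 2 * c + 1) - x ^ (2 * b + 2 * c + 2))) =
      ∫⁻ x in Set.Ioo (0:ℝ) 1, ∑' c : ℕ, ENNReal.ofReal (1 / (2 * (b : ℝ) + 1) *
      (x ^ (2 * b + 2 * c + 1) - x ^ (2 * b + 2 * c + 2))) := fun b =>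
    (MeasureTheory.lintegral_tsum fun c => (hm b c).aemeasurable).symm
  simp_rw [e]
  rw [← MeasureTheory.lintegral_tsum fun b => (Measurable.tsum (hm b)).aemeasurable]
  refine MeasureTheory.setLIntegral_congr_fun measurableSet_Ioo fun x hx => ?_
  have h0 := hx.1
  have h1 := hx.2
  have e1 : ∀ b : ℕ, ∑' c : ℕ, ENNReal.ofReal (1 / (2 * (b : ℝ) + 1) *
      (x ^ (2 * b + 2 * c + 1) - x ^ (2 * b + 2 * c + 2))) =
      ENNReal.ofReal (1 / (2 * (b : ℝ) + 1) * x ^ (2 * b + 1) / (1 + x)) := by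
    intro b
    have hx2 : x ^ 2 < 1 := by nlinarith
    have hs := (hasSum_geometric_of_lt_one (sq_nonneg x) hx2).mul_left
      (1 / (2 * (b : ℝ) + 1) * x ^ (2 * b + 1) * (1 - x))
    have hs' : HasSum (fun c : ℕ => 1 / (2 * (b : ℝ) + 1) *
      (x ^ (2 * b + 2 * c + 1) - x ^ (2 * b + 2 * c + 2)))
      (1 / (2 * (b : ℝ) + 1) * x ^ (2 * b + 1) / (1 + x)) := by
      convert! hs using 1
      · funext c
        rw [← pow_mul]
        ring
      · have : 1 - x ^ 2 ≠ 0 := by linarith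
        have h2 : 1 + x ≠ 0 := by linarith
        field_simp
        ring
    rw [← hs'.tsum_eq, ENNReal.ofReal_tsum_of_nonneg _ hs'.summable]
    intro c
    apply mul_nonneg (by positivity)
    rw [sub_nonneg]
    exact pow_le_pow_of_le_one hx.1.le hx.2.le (by omega)
  simp_rw [e1]
  have hs := (Real.hasSum_log_sub_log_of_abs_lt_one (x := x) (by rw [abs_of_pos h0]; exact h1)).mul_left (1 / 2 / (1 + x))
  have hs' : HasSum (fun b : ℕ => 1 / (2 * (b : ℝ) + 1) * x ^ (2 * b + 1) / (1 + x))
      (1 / 2 * (Real.log (1 + x) - Real.log (1 - x)) / (1 + x)) := by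
    convert! hs using 1
    · funext b; ring
    · ring
  rw [← hs'.tsum_eq, ENNReal.ofReal_tsum_of_nonneg (fun b => by positivity) hs'.summable]

theorem MTV_sum_depth3 (k : ℕ) (hk : 4 ≤ k) :
    (∑ p ∈ (Finset.Icc 1 k ×ˢ Finset.Icc 1 k ×ˢ Finset.Icc 2 k).filter
        (fun p => p.1 + p.2.1 + p.2.2 = k), MTV [p.1, p.2.1, p.2.2])
      + ∑ j ∈ Finset.Icc 2 (k - 2), MTV [1, k - 1 - j, j]
      = 2 / 3 * MTV [2] * MTV [k - 2] := by
  obtain ⟨n, rfl⟩ : ∃ n, k = n + 4 := ⟨k - 4, by omega⟩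
  have m3 : ∀ x y z, MTV [x, y, z] = 8 * (tot (term3 x y z)).toReal := MTV3
  have hm := tot_main n
  rw [FF_zero] at hm
  have hS : ∑' a : ℕ, ENNReal.ofReal (1 / (2 * (a : ℝ) + 1) ^ (n + 2)) ≠ ⊤ := by
    refine ne_top_of_le_ne_top hasSum_odd_sq.summable.tsum_ofReal_ne_top
      (ENNReal.tsum_le_tsum fun a => ENNReal.ofReal_le_ofReal ?_)
    apply one_div_le_one_div_of_le (by positivity)
    exact pow_le_pow_right₀ (by linarith [Nat.cast_nonneg (α := ℝ) a]) (by omega)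
  have hfin : ENNReal.ofReal (Real.pi ^ 2 / 24) *
      ∑' a : ℕ, ENNReal.ofReal (1 / (2 * (a : ℝ) + 1) ^ (n + 2)) ≠ ⊤ :=
    ENNReal.mul_ne_top ENNReal.ofReal_ne_top hS
  rw [← hm, ENNReal.add_ne_top, ENNReal.sum_ne_top, ENNReal.sum_ne_top] at hfin
  obtain ⟨f1, f2⟩ := hfin
  have hm' := congrArg ENNReal.toReal hm
  rw [ENNReal.toReal_add (ENNReal.sum_ne_top.2 f1) (ENNReal.sum_ne_top.2 f2), ENNReal.toReal_sum f1,
    ENNReal.toReal_sum f2, ENNReal.toReal_mul, ENNReal.toReal_ofReal (by positivity)] at hm'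
  have e1 : (∑ p ∈ (Finset.Icc 1 (n + 4) ×ˢ Finset.Icc 1 (n + 4) ×ˢ Finset.Icc 2 (n + 4)).filter
        (fun p => p.1 + p.2.1 + p.2.2 = n + 4), MTV [p.1, p.2.1, p.2.2]) =
      8 * ∑ i ∈ Finset.range (n + 1), (∑ j ∈ Finset.range (n - i + 1),
      tot (term3 (n - i - j + 1) (j + 1) (i + 2))).toReal := by
    have e2 : ∀ i ∈ Finset.range (n + 1), (∑ j ∈ Finset.range (n - i + 1),
      tot (term3 (n - i - j + 1) (j + 1) (i + 2))).toReal = ∑ j ∈ Finset.range (n - i + 1),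
      (tot (term3 (n - i - j + 1) (j + 1) (i + 2))).toReal := fun i hi =>
      ENNReal.toReal_sum (ENNReal.sum_ne_top.1 (f1 i hi))
    have e := Finset.sum_sigma (Finset.range (n + 1)) (fun i => Finset.range (n - i + 1))
      (fun p => (tot (term3 (n - p.1 - p.2 + 1) (p.2 + 1) (p.1 + 2))).toReal)
    rw [Finset.sum_congr rfl e2, ← e, Finset.mul_sum]
    refine Finset.sum_bij' (fun p _ => ⟨p.2.2 - 2, p.2.1 - 1⟩)
      (fun q _ => (n - q.1 - q.2 + 1, q.2 + 1, q.1 + 2)) ?_ ?_ ?_ ?_ ?_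
    · rintro ⟨x, y, z⟩ h
      simp only [Finset.mem_filter, Finset.mem_product, Finset.mem_Icc] at h
      simp only [Finset.mem_sigma, Finset.mem_range]
      omega
    · rintro ⟨i, j⟩ h
      simp only [Finset.mem_sigma, Finset.mem_range] at h
      simp only [Finset.mem_filter, Finset.mem_product, Finset.mem_Icc]
      omega
    · rintro ⟨x, y, z⟩ h
      simp only [Finset.mem_filter, Finset.mem_product, Finset.mem_Icc] at h
      simp only [Prod.mk.injEq]
      omega
    · rintro ⟨i, j⟩ h
      simp
    · rintro ⟨x, y, z⟩ h
      simp only [Finset.mem_filter, Finset.mem_product, Finset.mem_Icc] at h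
      rw [m3]
      dsimp only
      rw [show n - (z - 2) - (y - 1) + 1 = x by omega, show y - 1 + 1 = y by omega,
        show z - 2 + 2 = z by omega]
  have e3 : ∑ j ∈ Finset.Icc 2 (n + 4 - 2), MTV [1, n + 4 - 1 - j, j] =
      8 * ∑ i ∈ Finset.range (n + 1), (tot (term3 1 (n - i + 1) (i + 2))).toReal := by
    rw [Finset.mul_sum]
    refine Finset.sum_bij' (fun j _ => j - 2) (fun i _ => i + 2) ?_ ?_ ?_ ?_ ?_
    · intro j h
      simp only [Finset.mem_Icc] at h
      simp only [Finset.mem_range]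
      omega
    · intro j h
      simp only [Finset.mem_range] at h
      simp only [Finset.mem_Icc]
      omega
    · intro j h
      simp only [Finset.mem_Icc] at h
      omega
    · intro j h
      omega
    · intro j h
      simp only [Finset.mem_Icc] at h
      rw [m3, show n + 4 - 1 - j = n - (j - 2) + 1 by omega, show j - 2 + 2 = j by omega]
  have e4 : MTV [2] = 2 * (Real.pi ^ 2 / 8) := by
    rw [MTV1, ← tsum_eq_toReal _ (fun a => by positivity), hasSum_odd_sq.tsum_eq]
  rw [e1, e3, ← mul_add, hm', e4, MTV1, show n + 4 - 2 = n + 2 by omega]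
  ring
end

section
/- Depth-2 parity formula: for integers p ≥ 1 and q ≥ 2 with p + q odd, one has (−1)^q · T(p,q) = C(p+q−1, q) · T(p+q) − ∑_{μ=1, μ≡q (mod 2)}^{q−2} C(p+μ−1, μ) · (1/(2^{q−μ} − 1)) · T(p+μ) · T(q−μ) − ∑_{μ=0, μ≡p (mod 2)}^{p−2} C(q+μ−1, μ) · T(p−μ) · T(q+μ), where C(n,k) denotes the binomial coefficient. -/
open Filter Topology Finset

/-- reciprocal of an odd integer -/
noncomputable def ph (z : ℤ) : ℝ := 1 / (2 * (z : ℝ) + 1)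
/-- reciprocal of a positive even integer -/
noncomputable def av (k : ℕ) : ℝ := 1 / (2 * (k : ℝ) + 2)
/-- sum over the odd numbers -/
noncomputable def Oo (j : ℕ) : ℝ := ∑' l : ℕ, ph l ^ j
/-- sum over the even numbers -/
noncomputable def Ee (j : ℕ) : ℝ := ∑' k : ℕ, av k ^ j

/-- one half of the partial fraction expansion -/
noncomputable def PF (M X : ℝ) (p q : ℕ) : ℝ :=
  ∑ μ ∈ range q, (Nat.multichoose p μ : ℝ) * M ^ (p + μ) * X ^ (q - μ)

lemma PF_succ (M X : ℝ) (p q : ℕ) :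
    PF M X (p + 1) (q + 1) = M * (PF M X p (q + 1) + PF M X (p + 1) q) := by
  unfold PF
  rw [sum_range_succ', sum_range_succ' (fun μ => (Nat.multichoose p μ : ℝ) * M ^ (p + μ) *
    X ^ (q + 1 - μ)) q, mul_add, mul_add, mul_sum, mul_sum]
  refine Eq.trans ?_ (add_right_comm _ _ _).symm
  rw [← sum_add_distrib]
  congr 1
  · refine sum_congr rfl fun μ _ => ?_
    rw [Nat.multichoose_succ_succ, show q + 1 - (μ + 1) = q - μ by omega]
    push_cast
    ring
  · simp; ring

lemma PF_zero_left (M X : ℝ) (q : ℕ) : PF M X 0 (q + 1) = X ^ (q + 1) := by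
  unfold PF
  rw [sum_range_succ']
  simp

lemma partial_frac (M X Y : ℝ) (h : X * Y = M * (X + Y)) (p q : ℕ) (hpq : 0 < p + q) :
    X ^ q * Y ^ p = PF M X p q + PF M Y q p := by
  induction p generalizing q with
  | zero =>
    obtain ⟨q, rfl⟩ : ∃ r, q = r + 1 := ⟨q - 1, by omega⟩
    rw [PF_zero_left]; simp [PF]
  | succ p ih =>
    induction q with
    | zero => rw [PF_zero_left]; simp [PF]
    | succ q ihq =>
      rw [PF_succ, PF_succ]
      have h1 := ih (q + 1) (by omega)
      have h2 := ihq (by omega)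
      calc X ^ (q + 1) * Y ^ (p + 1) = X ^ q * Y ^ p * (X * Y) := by ring
        _ = M * (X ^ (q + 1) * Y ^ p + X ^ q * Y ^ (p + 1)) := by rw [h]; ring
        _ = _ := by rw [h1, h2]; ring

lemma sum_multichoose (q p : ℕ) :
    ∑ μ ∈ range (p + 1), Nat.multichoose q μ = Nat.multichoose (q + 1) p := by
  induction p with
  | zero => simp
  | succ p ih => rw [sum_range_succ, ih, Nat.multichoose_succ_succ]; ring

lemma odd_ne (z : ℤ) : (2 * (z : ℝ) + 1) ≠ 0 := by
  have : (2 * z + 1 : ℤ) ≠ 0 := by omega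
  exact_mod_cast this

lemma ph_neg (z : ℤ) : ph (-1 - z) = - ph z := by
  unfold ph
  push_cast
  rw [show 2 * (-1 - (z : ℝ)) + 1 = -(2 * z + 1) by ring, one_div, one_div, inv_neg]

lemma summable_av (j : ℕ) (hj : 2 ≤ j) : Summable fun k : ℕ => av k ^ j := by
  have h := (summable_nat_add_iff 1).2 (Real.summable_nat_pow_inv.2 (show 1 < j by omega))
  refine (h.mul_left ((1 / 2 : ℝ) ^ j)).congr fun k => ?_
  unfold av
  push_cast
  rw [← inv_pow, ← mul_pow]
  congr 1
  have : (k : ℝ) + 1 ≠ 0 := by positivity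
  field_simp

lemma summable_ph (j : ℕ) (hj : 2 ≤ j) : Summable fun l : ℕ => ph l ^ j := by
  have h := (Real.summable_nat_pow_inv.2 (show 1 < j by omega)).comp_injective
    (i := fun l : ℕ => 2 * l + 1) (fun a b h => by simpa using h)
  refine h.congr fun k => ?_
  simp [ph]

lemma tendsto_ph : Tendsto (fun l : ℕ => ph l) atTop (𝓝 0) := by
  have := (tendsto_one_div_add_atTop_nhds_zero_nat (𝕜 := ℝ)).comp
    (tendsto_id.const_mul_atTop' (show 0 < 2 by norm_num) : Tendsto (fun l : ℕ => 2 * l) atTop atTop)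
  refine this.congr fun l => ?_
  simp [ph]

lemma tendsto_ph_pow (j : ℕ) (hj : 1 ≤ j) (z : ℤ) :
    Tendsto (fun l : ℕ => ph (z + l) ^ j) atTop (𝓝 0) := by
  have h1 : Tendsto (fun l : ℕ => ph (z + l)) atTop (𝓝 0) := by
    have h2 : Tendsto (fun l : ℕ => (z + l).toNat) atTop atTop := by
      refine tendsto_atTop.2 fun b => ?_
      filter_upwards [eventually_ge_atTop (b + z.natAbs)] with l hl
      omega
    refine (tendsto_ph.comp h2).congr' ?_
    filter_upwards [eventually_ge_atTop (z.natAbs)] with l hl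
    simp only [Function.comp]
    congr 1
    omega
  have := h1.pow j
  rwa [zero_pow (by omega)] at this

lemma Ee_eq (i : ℕ) (hi : 2 ≤ i) : Ee i = 1 / ((2 : ℝ) ^ i - 1) * Oo i := by
  have h := (summable_nat_add_iff 1).2 (Real.summable_nat_pow_inv.2 (show 1 < i by omega))
  set f : ℕ → ℝ := fun n => (((n + 1 : ℕ) : ℝ) ^ i)⁻¹ with hf
  have he : Ee i = (1 / 2 : ℝ) ^ i * ∑' n, f n := by
    rw [← tsum_mul_left]
    refine tsum_congr fun k => ?_
    simp only [hf, av]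
    push_cast
    rw [← inv_pow, ← mul_pow]
    congr 1
    have : (k : ℝ) + 1 ≠ 0 := by positivity
    field_simp
  have ho : (∑' n, f n) = Oo i + Ee i := by
    rw [← tsum_even_add_odd (f := f)]
    · congr 1
      · refine tsum_congr fun k => ?_
        simp [hf, ph]
      · refine tsum_congr fun k => ?_
        simp only [hf, av]; push_cast
        rw [one_div, inv_pow]; ring
    · exact h.comp_injective (i := fun k => 2 * k) (fun a b h => by simpa using h)
    · exact h.comp_injective (i := fun k => 2 * k + 1) (fun a b h => by simpa using h)
  rw [ho] at he
  have h2 : (2 : ℝ) ^ i - 1 ≠ 0 := by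
    have : (1 : ℝ) < 2 ^ i := one_lt_pow₀ (by norm_num) (by omega)
    linarith
  have h3 : (2 : ℝ) ^ i * (1 / 2) ^ i = 1 := by rw [← mul_pow]; norm_num
  have h4 : (2 : ℝ) ^ i * Ee i = Oo i + Ee i := by
    conv_lhs => rw [he]
    rw [← mul_assoc, h3, one_mul]
  field_simp
  linarith

/-- shift telescoping -/
lemma shift_tele (f : ℕ → ℝ) (d L : ℕ) :
    ∑ l ∈ range L, (f (l + d) - f l) = ∑ j ∈ range d, (f (L + j) - f j) := by
  rw [sum_sub_distrib, sum_sub_distrib]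
  have h1 := sum_range_add f d L
  have h2 := sum_range_add f L d
  rw [add_comm d L] at h1
  have h3 : ∑ x ∈ range L, f (d + x) = ∑ x ∈ range L, f (x + d) :=
    sum_congr rfl fun x _ => by rw [add_comm]
  linarith

lemma shift_lim (f : ℕ → ℝ) (hf : Tendsto f atTop (𝓝 0)) (d : ℕ) :
    Tendsto (fun L => ∑ l ∈ range L, (f (l + d) - f l)) atTop (𝓝 (-∑ j ∈ range d, f j)) := by
  simp_rw [shift_tele]
  rw [← sum_neg_distrib]
  refine tendsto_finsetSum _ fun j _ => ?_
  have := ((tendsto_add_atTop_iff_nat j).2 hf).sub_const (f j)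
  simpa using this

/-- inner sums -/
noncomputable def Hs (p k : ℕ) : ℝ := ∑ j ∈ range (k + 1), ph j ^ p

lemma row_m (p k : ℕ) (hp : 1 ≤ p) :
    Tendsto (fun L => ∑ l ∈ range L, (ph ((l : ℤ) + k + 1) ^ p - ph l ^ p)) atTop
      (𝓝 (-Hs p k)) := by
  have := shift_lim (fun l : ℕ => ph l ^ p) (by simpa using tendsto_ph_pow p hp 0) (k + 1)
  refine this.congr fun L => sum_congr rfl fun l _ => ?_
  push_cast
  rw [add_assoc]

lemma row_p (p k : ℕ) (hp : 1 ≤ p) :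
    Tendsto (fun L => ∑ l ∈ range L, (ph ((l : ℤ) - k - 1) ^ p - ph l ^ p)) atTop
      (𝓝 ((-1) ^ p * Hs p k)) := by
  have := (shift_lim (fun l : ℕ => ph ((l : ℤ) - k - 1) ^ p) (by
    refine (tendsto_ph_pow p hp (-k - 1)).congr fun l => ?_
    congr 2; ring) (k + 1)).neg
  have e : -(-∑ j ∈ range (k + 1), ph ((j : ℤ) - k - 1) ^ p) = (-1) ^ p * Hs p k := by
    rw [neg_neg, Hs, mul_sum, ← sum_range_reflect]
    refine sum_congr rfl fun j hj => ?_
    have hj := mem_range.1 hj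
    rw [← mul_pow, neg_one_mul, ← ph_neg]
    congr 2
    push_cast [show j ≤ k by omega, show k + 1 - 1 - j = k - j by omega]
    ring
  rw [e] at this
  refine this.congr fun L => ?_
  rw [← sum_neg_distrib]
  refine sum_congr rfl fun l _ => ?_
  rw [neg_sub]
  congr 3
  push_cast; ring

/-- symmetric sums over shifted odd numbers -/
lemma sym_lim (j : ℕ) (hj : 1 ≤ j) (l : ℕ) :
    Tendsto (fun N => ∑ k ∈ range N, (ph ((l : ℤ) - k - 1) ^ j + ph ((l : ℤ) + k + 1) ^ j)) atTop
      (𝓝 ((1 + (-1) ^ j) * Oo j - ph l ^ j)) := by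
  induction l with
  | zero =>
    have e : ∀ N : ℕ, ∑ k ∈ range N, (ph (((0 : ℕ) : ℤ) - k - 1) ^ j + ph (((0 : ℕ) : ℤ) + k + 1) ^ j)
        = (1 + (-1) ^ j) * ∑ k ∈ range N, ph k ^ j + ph N ^ j - ph 0 ^ j := by
      intro N
      induction N with
      | zero => simp
      | succ N ih =>
        rw [sum_range_succ, ih, sum_range_succ]
        rw [show (((0 : ℕ) : ℤ) - N - 1) = -1 - (N : ℤ) by push_cast; ring, ph_neg, neg_pow]
        push_cast
        rw [zero_add]
        ring
    simp_rw [e]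
    have h1 : Tendsto (fun N : ℕ => ph N ^ j) atTop (𝓝 0) := by simpa using tendsto_ph_pow j hj 0
    have h2 : Tendsto (fun N : ℕ => (1 + (-1) ^ j) * ∑ k ∈ range N, ph k ^ j) atTop
        (𝓝 ((1 + (-1) ^ j) * Oo j)) := by
      rcases Nat.lt_or_ge j 2 with h | h
      · obtain rfl : j = 1 := by omega
        simp
      · exact ((summable_ph j h).hasSum.tendsto_sum_nat).const_mul _
    have := (h2.add h1).sub_const (ph 0 ^ j)
    rw [add_zero] at this
    exact_mod_cast this
  | succ l ih =>
    have e : ∀ N : ℕ, ∑ k ∈ range N, (ph (((l + 1 : ℕ) : ℤ) - k - 1) ^ j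
          + ph (((l + 1 : ℕ) : ℤ) + k + 1) ^ j)
        = ∑ k ∈ range N, (ph ((l : ℤ) - k - 1) ^ j + ph ((l : ℤ) + k + 1) ^ j)
          + (ph l ^ j - ph ((l + 1 : ℕ) : ℤ) ^ j) + ph ((l + 1 : ℤ) + N) ^ j
          - (-1) ^ j * ph ((-1 - l : ℤ) + N) ^ j := by
      intro N
      have hx : ∀ N : ℕ, (-1) ^ j * ph ((-1 - l : ℤ) + N) ^ j = ph ((l : ℤ) - N) ^ j := by
        intro N
        rw [← mul_pow, neg_one_mul, ← ph_neg]; congr 2; ring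
      rw [hx]
      induction N with
      | zero => simp
      | succ N ih =>
        rw [sum_range_succ, ih, sum_range_succ]
        push_cast
        rw [show (l : ℤ) + 1 - N - 1 = l - N by ring, show (l : ℤ) + 1 + N + 1 = l + 1 + (N + 1) by ring,
          show (l : ℤ) + N + 1 = l + 1 + N by ring, show (l : ℤ) - N - 1 = l - (N + 1) by ring]
        ring
    simp_rw [e]
    have := ((ih.add_const (ph l ^ j - ph ((l + 1 : ℕ) : ℤ) ^ j)).add
      (tendsto_ph_pow j hj (l + 1))).sub ((tendsto_ph_pow j hj (-1 - l)).const_mul ((-1) ^ j))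
    convert this using 2
    ring
lemma MTV_one_s5 (k : ℕ) : MTV [k] = 2 * Oo k := by
  unfold MTV Oo
  let e : ℕ ≃ {f : Fin [k].length → ℕ // StrictMono f ∧ ∀ i, f i % 2 = ((i : ℕ) + 1) % 2} :=
    { toFun := fun l => ⟨fun _ => 2 * l + 1, by
          refine ⟨fun i j h => ?_, fun i => ?_⟩
          · have := i.2; have := j.2; simp at *; omega
          · have := i.2; simp at *⟩
      invFun := fun f => f.1 ⟨0, by simp⟩ / 2
      left_inv := fun l => by simp; omega
      right_inv := fun f => by
        ext i
        have h := f.2.2 ⟨0, by simp⟩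
        have hi : i = ⟨0, by simp⟩ := by
          ext; have := i.2; simp at *
        subst hi
        simp at *
        omega }
  rw [← e.tsum_eq]
  congr 1
  · simp
  · refine tsum_congr fun l => ?_
    simp [e, ph]

lemma MTV_two_s5 (p q : ℕ) (hs : Summable fun k => av k ^ q * Hs p k) :
    MTV [p, q] = 4 * ∑' k, av k ^ q * Hs p k := by
  unfold MTV
  let e : (Σ k : ℕ, Fin (k + 1)) ≃
      {f : Fin [p, q].length → ℕ // StrictMono f ∧ ∀ i, f i % 2 = ((i : ℕ) + 1) % 2} :=
    { toFun := fun x => ⟨(![2 * x.2.1 + 1, 2 * x.1 + 2] : Fin 2 → ℕ), by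
          refine ⟨?_, ?_⟩
          · change StrictMono (![2 * x.2.1 + 1, 2 * x.1 + 2] : Fin 2 → ℕ)
            rw [Fin.strictMono_iff_lt_succ]
            intro i
            have := x.2.2
            fin_cases i
            simp; omega
          · change ∀ i : Fin 2, (![2 * x.2.1 + 1, 2 * x.1 + 2] : Fin 2 → ℕ) i % 2 = ((i : ℕ) + 1) % 2
            intro i
            fin_cases i <;> simp⟩
      invFun := fun f => ⟨f.1 (1 : Fin 2) / 2 - 1, ⟨f.1 (0 : Fin 2) / 2, by
        have h0 := f.2.2 (0 : Fin 2)
        have h1 := f.2.2 (1 : Fin 2)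
        have h2 := f.2.1 (show (0 : Fin 2) < 1 by decide)
        simp at h0 h1
        omega⟩⟩
      left_inv := fun x => by
        obtain ⟨k, j, hj⟩ := x
        have h1 : (2 * k + 2) / 2 - 1 = k := by omega
        have h2 : (2 * j + 1) / 2 = j := by omega
        refine Sigma.ext h1 ?_
        exact (Fin.heq_ext_iff (congrArg (· + 1) h1)).2 h2
      right_inv := fun f => by
        have h0 := f.2.2 (0 : Fin 2)
        have h1 := f.2.2 (1 : Fin 2)
        have h2 := f.2.1 (show (0 : Fin 2) < 1 by decide)
        simp at h0 h1
        apply Subtype.ext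
        funext i
        change Fin 2 at i
        fin_cases i
        · change 2 * (f.1 (0 : Fin 2) / 2) + 1 = f.1 (0 : Fin 2)
          omega
        · change 2 * (f.1 (1 : Fin 2) / 2 - 1) + 2 = f.1 (1 : Fin 2)
          omega }
  rw [← e.tsum_eq]
  have hterm : ∀ x : (Σ k : ℕ, Fin (k + 1)),
      (∏ i : Fin [p, q].length, (1 : ℝ) / ((e x).1 i : ℝ) ^ [p, q].get i)
        = av x.1 ^ q * ph (x.2.1 : ℤ) ^ p := by
    intro x
    change (∏ i : Fin 2, (1 : ℝ) / (((![2 * x.2.1 + 1, 2 * x.1 + 2] : Fin 2 → ℕ) i : ℕ) : ℝ) ^ [p, q].get i) = _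
    rw [Fin.prod_univ_two]
    simp [av, ph, mul_comm]
  simp_rw [hterm]
  have hfib : ∀ k : ℕ, ∑' j : Fin (k + 1), av k ^ q * ph (j.1 : ℤ) ^ p = av k ^ q * Hs p k := by
    intro k
    rw [tsum_fintype, ← mul_sum, Hs, Finset.sum_range]
  have hnn : ∀ x : (Σ k : ℕ, Fin (k + 1)), 0 ≤ av x.1 ^ q * ph (x.2.1 : ℤ) ^ p := by
    intro x
    unfold av ph
    push_cast
    positivity
  have hsum : Summable fun x : (Σ k : ℕ, Fin (k + 1)) => av x.1 ^ q * ph (x.2.1 : ℤ) ^ p := by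
    rw [summable_sigma_of_nonneg hnn]
    refine ⟨fun k => (hasSum_fintype _).summable, ?_⟩
    simp only [hfib]
    exact hs
  rw [hsum.tsum_sigma]
  simp only [hfib]
  norm_num
lemma summable_r : Summable fun z : ℤ => |2 * (z : ℝ) + 1| ^ (-(3 / 2) : ℝ) := by
  have h : Summable fun l : ℕ => (2 * (l : ℝ) + 1) ^ (-(3 / 2) : ℝ) := by
    have h := (Real.summable_nat_rpow.2 (show (-(3 / 2) : ℝ) < -1 by norm_num)).comp_injective
      (i := fun l : ℕ => 2 * l + 1) (fun a b h => by simpa using h)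
    refine h.congr fun k => ?_
    simp
  refine Summable.of_nat_of_neg_add_one (h.congr fun l => ?_) (h.congr fun l => ?_)
  · push_cast
    rw [abs_of_pos (by positivity)]
  · push_cast
    rw [show 2 * (-((l : ℝ) + 1)) + 1 = -(2 * l + 1) by ring, abs_neg, abs_of_pos (by positivity)]

lemma summable_ra : Summable fun k : ℕ => (2 * (k : ℝ) + 2) ^ (-(3 / 2) : ℝ) := by
  have h := (Real.summable_nat_rpow.2 (show (-(3 / 2) : ℝ) < -1 by norm_num)).comp_injective
      (i := fun l : ℕ => 2 * l + 2) (fun a b h => by simpa using h)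
  refine h.congr fun k => ?_
  simp

lemma tri_bound (a b c : ℝ) (ha : 0 < a) (hc : 0 < c) (hb : b = a + c) :
    1 / (a * b * c) ≤ a ^ (-(3 / 2) : ℝ) * c ^ (-(3 / 2) : ℝ) := by
  have hac : 0 < a * c := mul_pos ha hc
  rw [← Real.mul_rpow ha.le hc.le, Real.rpow_neg hac.le, ← one_div]
  have h1 : (a * c) ^ (3 / 2 : ℝ) = (a * c) * √(a * c) := by
    rw [show (3 / 2 : ℝ) = 1 + 1 / 2 by norm_num, Real.rpow_add hac, Real.rpow_one,
      Real.sqrt_eq_rpow]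
  rw [h1]
  have h2 : √(a * c) ≤ b := by
    rw [Real.sqrt_le_left (by linarith)]
    subst hb; nlinarith
  have h3 : 0 < √(a * c) := Real.sqrt_pos.2 hac
  apply one_div_le_one_div_of_le (by positivity)
  nlinarith

/-- summability of the Tornheim type majorants -/
lemma summable_tri_m : Summable fun x : ℕ × ℕ =>
    1 / ((2 * (x.1 : ℝ) + 2) * |2 * (((x.2 : ℤ) + x.1 + 1 : ℤ) : ℝ) + 1| * |2 * ((x.2 : ℤ) : ℝ) + 1|) := by
  have h := summable_ra.mul_of_nonneg summable_r (fun _ => by positivity) (fun _ => by positivity)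
  have h2 := h.comp_injective (i := fun x : ℕ × ℕ => (x.1, (x.2 : ℤ)))
    (fun x y h => by simpa [Prod.ext_iff] using h)
  refine h2.of_nonneg_of_le (fun x => by positivity) fun x => ?_
  simp only [Function.comp]
  push_cast
  rw [abs_of_pos (show (0 : ℝ) < 2 * x.2 + 1 by positivity),
    abs_of_pos (show (0 : ℝ) < 2 * (x.2 + x.1 + 1) + 1 by positivity)]
  exact tri_bound _ _ _ (by positivity) (by positivity) (by ring)

lemma summable_tri_p : Summable fun x : ℕ × ℕ =>
    1 / ((2 * (x.1 : ℝ) + 2) * |2 * (((x.2 : ℤ) - x.1 - 1 : ℤ) : ℝ) + 1| * |2 * ((x.2 : ℤ) : ℝ) + 1|) := by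
  have h := summable_ra.mul_of_nonneg summable_r (fun _ => by positivity) (fun _ => by positivity)
  have h2 := h.comp_injective (i := fun x : ℕ × ℕ => (x.1, (x.2 : ℤ) - x.1 - 1))
    (fun x y h => by
      simp only [Prod.mk.injEq] at h
      ext <;> omega)
  have h' := summable_r.mul_of_nonneg summable_r (fun _ => by positivity) (fun _ => by positivity)
  have h3 := h'.comp_injective (i := fun x : ℕ × ℕ => ((x.2 : ℤ), (x.2 : ℤ) - x.1 - 1))
    (fun x y h => by
      simp only [Prod.mk.injEq] at h
      ext <;> omega)
  refine (h2.add h3).of_nonneg_of_le (fun x => by positivity) fun x => ?_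
  simp only [Function.comp]
  have hpos : 0 < |2 * (((x.2 : ℤ) - x.1 - 1 : ℤ) : ℝ) + 1| := abs_pos.2 (odd_ne _)
  set c := |2 * (((x.2 : ℤ) - x.1 - 1 : ℤ) : ℝ) + 1| with hc
  push_cast at *
  rw [abs_of_pos (show (0 : ℝ) < 2 * x.2 + 1 by positivity)]
  rcases le_total 0 (2 * ((x.2 : ℝ) - x.1 - 1) + 1) with h0 | h0
  · rw [abs_of_nonneg h0] at hc
    refine le_trans ?_ (le_add_of_nonneg_right (by positivity))
    refine le_trans (le_of_eq ?_) (tri_bound (2 * (x.1 : ℝ) + 2) (2 * x.2 + 1) c (by positivity) hpos ?_)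
    · ring
    · rw [hc]; ring
  · rw [abs_of_nonpos h0] at hc
    refine le_trans ?_ (le_add_of_nonneg_left (by positivity))
    refine le_trans (le_of_eq ?_) (tri_bound (2 * (x.2 : ℝ) + 1) (2 * x.1 + 2) c (by positivity) hpos ?_)
    · ring
    · rw [hc]; ring

lemma abs_ph_le (z : ℤ) : |ph z| ≤ 1 := by
  unfold ph
  rw [abs_div, abs_one]
  apply div_le_one_of_le₀ _ (abs_nonneg _)
  have : (1 : ℤ) ≤ |2 * z + 1| := Int.one_le_abs (by omega)
  exact_mod_cast this

lemma g_bound (p q k : ℕ) (hq : 2 ≤ q) (z w : ℤ) (e : ℝ)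
    (hz : |e| = 1) (h : 2 * (w : ℝ) + 1 - (2 * z + 1) = e * (2 * (k : ℝ) + 2)) :
    |(e * av k) ^ q * (ph z ^ p - ph w ^ p)|
      ≤ p * (1 / ((2 * (k : ℝ) + 2) * |2 * (z : ℝ) + 1| * |2 * (w : ℝ) + 1|)) := by
  have ha : 0 < av k := by unfold av; positivity
  have ha1 : av k ≤ 1 := by
    unfold av
    apply div_le_one_of_le₀ _ (by positivity)
    have : (0 : ℝ) ≤ k := by positivity
    linarith
  have h1 : |ph z ^ p - ph w ^ p| ≤ |ph z - ph w| * p := by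
    refine (abs_pow_sub_pow_le _ _ _).trans ?_
    refine mul_le_of_le_one_right (by positivity) (pow_le_one₀ (by positivity) ?_)
    exact max_le (abs_ph_le _) (abs_ph_le _)
  have h2 : ph z - ph w = e * (2 * (k : ℝ) + 2) * (1 / (2 * (z : ℝ) + 1) * (1 / (2 * (w : ℝ) + 1))) := by
    rw [← h]
    unfold ph
    have := odd_ne z
    have := odd_ne w
    field_simp
  have h3 : |(e * av k) ^ q| ≤ av k ^ 2 := by
    rw [abs_pow, abs_mul, hz, one_mul, abs_of_pos ha]
    exact pow_le_pow_of_le_one ha.le ha1 hq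
  rw [abs_mul]
  refine (mul_le_mul h3 h1 (abs_nonneg _) (by positivity)).trans (le_of_eq ?_)
  rw [h2, abs_mul, abs_mul, hz, abs_of_pos (show (0 : ℝ) < 2 * k + 2 by positivity), abs_mul,
    abs_div, abs_div, abs_one]
  have := abs_pos.2 (odd_ne z)
  have := abs_pos.2 (odd_ne w)
  unfold av
  field_simp

/-- summand for positive `n` -/
noncomputable def gp (p q k l : ℕ) : ℝ := av k ^ q * (ph ((l : ℤ) - k - 1) ^ p - ph l ^ p)
/-- summand for negative `n` -/
noncomputable def gm (p q k l : ℕ) : ℝ := (-av k) ^ q * (ph ((l : ℤ) + k + 1) ^ p - ph l ^ p)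

lemma summable_gp (p q : ℕ) (hq : 2 ≤ q) : Summable fun x : ℕ × ℕ => gp p q x.1 x.2 := by
  refine Summable.of_norm_bounded (summable_tri_p.mul_left (p : ℝ)) fun x => ?_
  have := g_bound p q x.1 hq ((x.2 : ℤ) - x.1 - 1) x.2 1 (by simp) (by push_cast; ring)
  rw [one_mul] at this
  exact this

lemma summable_gm (p q : ℕ) (hq : 2 ≤ q) : Summable fun x : ℕ × ℕ => gm p q x.1 x.2 := by
  refine Summable.of_norm_bounded (summable_tri_m.mul_left (p : ℝ)) fun x => ?_
  have := g_bound p q x.1 hq ((x.2 : ℤ) + x.1 + 1) x.2 (-1) (by simp) (by push_cast; ring)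
  rw [neg_one_mul] at this
  exact this

lemma row_gp (p q k : ℕ) (hp : 1 ≤ p) (hq : 2 ≤ q) :
    HasSum (fun l => gp p q k l) (av k ^ q * ((-1) ^ p * Hs p k)) := by
  have hs : Summable fun l => gp p q k l := (summable_gp p q hq).prod_factor k
  rw [hs.hasSum_iff_tendsto_nat]
  refine ((row_p p k hp).const_mul (av k ^ q)).congr fun L => ?_
  rw [mul_sum]; rfl

lemma row_gm (p q k : ℕ) (hp : 1 ≤ p) (hq : 2 ≤ q) :
    HasSum (fun l => gm p q k l) ((-av k) ^ q * (-Hs p k)) := by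
  have hs : Summable fun l => gm p q k l := (summable_gm p q hq).prod_factor k
  rw [hs.hasSum_iff_tendsto_nat]
  refine ((row_m p k hp).const_mul ((-av k) ^ q)).congr fun L => ?_
  rw [mul_sum]; rfl

lemma summable_A (p q : ℕ) (hp : 1 ≤ p) (hq : 2 ≤ q) : Summable fun k => av k ^ q * Hs p k := by
  have h := (summable_gp p q hq).hasSum.prod_fiberwise (fun k => row_gp p q k hp hq)
  refine (h.summable.mul_left ((-1) ^ p)).congr fun k => ?_
  have : ((-1 : ℝ) ^ p) * (-1) ^ p = 1 := by rw [← mul_pow]; simp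
  linear_combination (av k ^ q * Hs p k) * this

lemma total_rows (p q : ℕ) (hp : 1 ≤ p) (hq : 2 ≤ q) (hodd : Odd (p + q)) :
    HasSum (fun x : ℕ × ℕ => gp p q x.1 x.2 + gm p q x.1 x.2)
      (-2 * (-1) ^ q * ∑' k, av k ^ q * Hs p k) := by
  have hs := (summable_gp p q hq).add (summable_gm p q hq)
  have h := hs.hasSum.prod_fiberwise (fun k => (row_gp p q k hp hq).add (row_gm p q k hp hq))
  have h2 := (summable_A p q hp hq).hasSum.mul_left (-2 * (-1) ^ q)
  have e : (-1 : ℝ) ^ p = - (-1) ^ q := by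
    rcases Nat.even_or_odd q with h | h
    · have : Odd p := by rcases Nat.even_or_odd p with h' | h'
                         · exact absurd (h'.add h) (by simpa using hodd)
                         · exact h'
      rw [h.neg_one_pow, this.neg_one_pow]
    · have : Even p := by rcases Nat.even_or_odd p with h' | h'
                          · exact h'
                          · exact absurd (h'.add_odd h) (by simpa using hodd)
      rw [h.neg_one_pow, this.neg_one_pow]; simp
  have h3 := h2.unique (h.congr_fun (fun k => by
    rw [e, neg_pow (av k)]; ring))
  rw [h3]
  exact hs.hasSum

/-- the closed form of the column sums -/
noncomputable def Vc (p q l : ℕ) : ℝ :=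
  ∑ μ ∈ Ico 1 q, (Nat.multichoose p μ : ℝ) * ph l ^ (p + μ) * ((1 + (-1) ^ (q - μ)) * Ee (q - μ))
  + ∑ μ ∈ range p, (Nat.multichoose q μ : ℝ) * ph l ^ (q + μ) *
      ((1 + (-1) ^ (p - μ)) * Oo (p - μ) - ph l ^ (p - μ))

lemma even_lim (j : ℕ) (hj : 1 ≤ j) :
    Tendsto (fun N => ∑ k ∈ range N, (av k ^ j + (-av k) ^ j)) atTop
      (𝓝 ((1 + (-1) ^ j) * Ee j)) := by
  have e : ∀ N, ∑ k ∈ range N, (av k ^ j + (-av k) ^ j)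
      = (1 + (-1) ^ j) * ∑ k ∈ range N, av k ^ j := by
    intro N
    rw [mul_sum]
    exact sum_congr rfl fun k _ => by rw [neg_pow]; ring
  simp_rw [e]
  rcases Nat.lt_or_ge j 2 with h | h
  · obtain rfl : j = 1 := by omega
    simp
  · exact ((summable_av j h).hasSum.tendsto_sum_nat).const_mul _

lemma g_pf (M X Y : ℝ) (h : X * Y = M * (X + Y)) (p q : ℕ) (hq : 2 ≤ q) :
    X ^ q * (Y ^ p - M ^ p)
      = ∑ μ ∈ Ico 1 q, (Nat.multichoose p μ : ℝ) * M ^ (p + μ) * X ^ (q - μ)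
        + ∑ μ ∈ range p, (Nat.multichoose q μ : ℝ) * M ^ (q + μ) * Y ^ (p - μ) := by
  rw [mul_sub, partial_frac M X Y h p q (by omega), PF, PF, range_eq_Ico,
    sum_eq_sum_Ico_succ_bot (by omega)]
  simp
  ring

lemma col (p q l : ℕ) (hq : 2 ≤ q) :
    HasSum (fun k => gp p q k l + gm p q k l) (Vc p q l) := by
  have hs : Summable fun k => gp p q k l + gm p q k l :=
    ((summable_gp p q hq).add (summable_gm p q hq)).prod_symm.prod_factor l
  rw [hs.hasSum_iff_tendsto_nat]
  have hterm : ∀ k : ℕ, gp p q k l + gm p q k l =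
      ∑ μ ∈ Ico 1 q, (Nat.multichoose p μ : ℝ) * ph l ^ (p + μ) * (av k ^ (q - μ) + (-av k) ^ (q - μ))
      + ∑ μ ∈ range p, (Nat.multichoose q μ : ℝ) * ph l ^ (q + μ) *
        (ph ((l : ℤ) - k - 1) ^ (p - μ) + ph ((l : ℤ) + k + 1) ^ (p - μ)) := by
    intro k
    have hk : (2 * (k : ℝ) + 2) ≠ 0 := by positivity
    have hl := odd_ne (l : ℤ)
    have h1 := g_pf (ph l) (av k) (ph ((l : ℤ) - k - 1)) (by
      have hz := odd_ne ((l : ℤ) - k - 1)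
      unfold av ph
      push_cast at *
      field_simp
      ring) p q hq
    have h2 := g_pf (ph l) (-av k) (ph ((l : ℤ) + k + 1)) (by
      have hz := odd_ne ((l : ℤ) + k + 1)
      unfold av ph
      push_cast at *
      field_simp
      ring) p q hq
    rw [gp, gm, h1, h2]
    simp only [mul_add, sum_add_distrib]
    ring
  simp_rw [hterm, sum_add_distrib]
  unfold Vc
  refine Tendsto.add ?_ ?_
  · simp_rw [sum_comm (s := range _) (t := Ico 1 q), ← mul_sum]
    refine tendsto_finsetSum _ fun μ hμ => (even_lim (q - μ) ?_).const_mul _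
    have := mem_Ico.1 hμ
    omega
  · have e : ∀ N, ∑ k ∈ range N, ∑ μ ∈ range p, (Nat.multichoose q μ : ℝ) * ph l ^ (q + μ) *
        (ph ((l : ℤ) - k - 1) ^ (p - μ) + ph ((l : ℤ) + k + 1) ^ (p - μ)) =
        ∑ μ ∈ range p, (Nat.multichoose q μ : ℝ) * ph l ^ (q + μ) * ∑ k ∈ range N,
        (ph ((l : ℤ) - k - 1) ^ (p - μ) + ph ((l : ℤ) + k + 1) ^ (p - μ)) := by
      intro N
      rw [sum_comm]
      simp_rw [mul_sum]
    simp_rw [e]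
    refine tendsto_finsetSum _ fun μ hμ => (sym_lim (p - μ) ?_ l).const_mul _
    have := mem_range.1 hμ
    omega

lemma total_cols (p q : ℕ) (hp : 1 ≤ p) (hq : 2 ≤ q) :
    HasSum (fun l => Vc p q l)
      (∑ μ ∈ Ico 1 q, (Nat.multichoose p μ : ℝ) * Oo (p + μ) * ((1 + (-1) ^ (q - μ)) * Ee (q - μ))
      + ∑ μ ∈ range p, (Nat.multichoose q μ : ℝ) *
        (Oo (q + μ) * ((1 + (-1) ^ (p - μ)) * Oo (p - μ)) - Oo (p + q))) := by
  unfold Vc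
  refine HasSum.add ?_ ?_
  · refine hasSum_sum fun μ hμ => ?_
    have := mem_Ico.1 hμ
    exact (((summable_ph (p + μ) (by omega)).hasSum).mul_left _).mul_right _
  · refine hasSum_sum fun μ hμ => ?_
    have := mem_range.1 hμ
    have h1 := ((summable_ph (q + μ) (by omega)).hasSum).mul_right
      ((1 + (-1) ^ (p - μ)) * Oo (p - μ))
    have h2 := (summable_ph (p + q) (by omega)).hasSum
    refine ((h1.sub h2).mul_left (Nat.multichoose q μ : ℝ)).congr_fun fun l => ?_
    rw [mul_assoc, mul_sub, ← pow_add, show q + μ + (p - μ) = p + q by omega]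

lemma key (p q : ℕ) (hp : 1 ≤ p) (hq : 2 ≤ q) (hodd : Odd (p + q)) :
    -2 * (-1) ^ q * ∑' k, av k ^ q * Hs p k =
      ∑ μ ∈ Ico 1 q, (Nat.multichoose p μ : ℝ) * Oo (p + μ) * ((1 + (-1) ^ (q - μ)) * Ee (q - μ))
      + ∑ μ ∈ range p, (Nat.multichoose q μ : ℝ) *
        (Oo (q + μ) * ((1 + (-1) ^ (p - μ)) * Oo (p - μ)) - Oo (p + q)) := by
  have h := (Equiv.prodComm ℕ ℕ).hasSum_iff.2 (total_rows p q hp hq hodd)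
  exact (h.prod_fiberwise (fun l => col p q l hq)).unique (total_cols p q hp hq)
/-- **Theorem (depth-2 parity formula).** For `p ≥ 1`, `q ≥ 2` with `p + q` odd,
`(−1)^q T(p,q) = C(p+q−1,q) T(p+q)
  − ∑_{μ=1, μ≡q (2)}^{q−2} C(p+μ−1,μ) (2^{q−μ}−1)⁻¹ T(p+μ) T(q−μ)
  − ∑_{μ=0, μ≡p (2)}^{p−2} C(q+μ−1,μ) T(p−μ) T(q+μ)`. -/
theorem MTV_parity_depth2 (p q : ℕ) (hp : 1 ≤ p) (hq : 2 ≤ q) (hodd : Odd (p + q)) :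
    (-1 : ℝ) ^ q * MTV [p, q]
      = ((p + q - 1).choose q : ℝ) * MTV [p + q]
        - ∑ μ ∈ (Finset.Icc 1 (q - 2)).filter (fun μ => μ % 2 = q % 2),
            ((p + μ - 1).choose μ : ℝ) * (1 / ((2 : ℝ) ^ (q - μ) - 1))
              * MTV [p + μ] * MTV [q - μ]
        - ∑ μ ∈ (Finset.Icc 0 (p - 2)).filter (fun μ => μ % 2 = p % 2),
            ((q + μ - 1).choose μ : ℝ) * MTV [p - μ] * MTV [q + μ] := by
  rw [MTV_two_s5 p q (summable_A p q hp hq), MTV_one_s5]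
  simp only [MTV_one_s5]
  have hk := key p q hp hq hodd
  have h1 : ∑ μ ∈ (Finset.Icc 1 (q - 2)).filter (fun μ => μ % 2 = q % 2),
            ((p + μ - 1).choose μ : ℝ) * (1 / ((2 : ℝ) ^ (q - μ) - 1))
              * (2 * Oo (p + μ)) * (2 * Oo (q - μ))
      = 2 * ∑ μ ∈ Ico 1 q, (Nat.multichoose p μ : ℝ) * Oo (p + μ) *
          ((1 + (-1) ^ (q - μ)) * Ee (q - μ)) := by
    rw [mul_sum]
    refine sum_subset_zero_on_sdiff ?_ ?_ ?_
    · intro μ hμ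
      simp only [mem_filter, mem_Icc, mem_Ico] at *
      omega
    · intro μ hμ
      simp only [Finset.mem_sdiff, mem_filter, mem_Icc, mem_Ico] at hμ
      have : Odd (q - μ) := by rw [Nat.odd_iff]; omega
      rw [this.neg_one_pow]; ring
    · intro μ hμ
      simp only [mem_filter, mem_Icc] at hμ
      have : Even (q - μ) := by rw [Nat.even_iff]; omega
      rw [this.neg_one_pow, Ee_eq (q - μ) (by omega), Nat.multichoose_eq]
      ring
  have h2 : ∑ μ ∈ (Finset.Icc 0 (p - 2)).filter (fun μ => μ % 2 = p % 2),
            ((q + μ - 1).choose μ : ℝ) * (2 * Oo (p - μ)) * (2 * Oo (q + μ))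
      = 2 * ∑ μ ∈ range p, (Nat.multichoose q μ : ℝ) *
        (Oo (q + μ) * ((1 + (-1) ^ (p - μ)) * Oo (p - μ))) := by
    rw [mul_sum]
    refine sum_subset_zero_on_sdiff ?_ ?_ ?_
    · intro μ hμ
      simp only [mem_filter, mem_Icc, mem_range] at *
      omega
    · intro μ hμ
      simp only [Finset.mem_sdiff, mem_filter, mem_Icc, mem_range] at hμ
      have : Odd (p - μ) := by rw [Nat.odd_iff]; omega
      rw [this.neg_one_pow]; ring
    · intro μ hμ
      simp only [mem_filter, mem_Icc] at hμ
      have : Even (p - μ) := by rw [Nat.even_iff]; omega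
      rw [this.neg_one_pow, Nat.multichoose_eq]
      ring
  have h3 : ∑ μ ∈ range p, (Nat.multichoose q μ : ℝ) = ((p + q - 1).choose q : ℝ) := by
    obtain ⟨r, rfl⟩ : ∃ r, p = r + 1 := ⟨p - 1, by omega⟩
    rw [← Nat.cast_sum, sum_multichoose, Nat.multichoose_eq]
    congr 1
    rw [show q + 1 + r - 1 = r + q by omega, show r + 1 + q - 1 = r + q by omega]
    exact Nat.choose_symm_add
  rw [h1, h2, ← h3]
  simp only [mul_sub, sum_sub_distrib, ← sum_mul] at hk
  linarith
end
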